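/- Let α ∈ (2,3), λ > 0, n ≥ 2, and let γ ∈ C^{0,1}(ℝ/ℤ,ℝⁿ) be an injective curve parametrized by arc-length with E^α(γ) < ∞. If γ is a stationary point of E^α + λL, i.e. δE^α(γ;h) + λ∫_{ℝ/ℤ} ⟨γ'(u),h'(u)⟩ du = 0 for all h ∈ H^{(1+α)/2,2}(ℝ/ℤ,ℝⁿ), then γ ∈ C^∞(ℝ/ℤ,ℝⁿ). -/

import Mathlib

open MeasureTheory Filter Set
open scoped RealInnerProductSpace ENNReal Topology

noncomputable section

/-- `ℝⁿ` -/
abbrev Rn (n : ℕ) := EuclideanSpace ℝ (Fin n)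

variable {n : ℕ}

/-- A 1-periodic curve is injective as a map on `ℝ/ℤ`. -/
def PerInjective (γ : ℝ → Rn n) : Prop :=
  ∀ u v : ℝ, γ u = γ v → ∃ k : ℤ, v = u + k

/-- `γ` is a regular curve: `γ'(u) ≠ 0` for all `u`. -/
def RegularCurve (γ : ℝ → Rn n) : Prop := ∀ u : ℝ, deriv γ u ≠ 0

/-- `γ` is parametrized by arc-length: `|γ'(u)| = 1` for all `u`. -/
def ArcLengthParam (γ : ℝ → Rn n) : Prop := ∀ u : ℝ, ‖deriv γ u‖ = 1

/-- The length `L(γ) = ∫₀¹ |γ'(θ)| dθ` of the closed curve `γ`. -/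
def curveLen (γ : ℝ → Rn n) : ℝ := ∫ θ in (0:ℝ)..1, ‖deriv γ θ‖

/-- The arc length `L(γ|_{[u,u+w]}) = |∫_u^{u+w} |γ'(θ)| dθ|`. -/
def arcLen (γ : ℝ → Rn n) (u w : ℝ) : ℝ := |∫ θ in u..(u + w), ‖deriv γ θ‖|

/-- The intrinsic distance `d_γ(u+w,u)`. -/
def idist (γ : ℝ → Rn n) (u w : ℝ) : ℝ :=
  min (arcLen γ u w) (curveLen γ - arcLen γ u w)

/-- The integrand of the O'Hara energy `E^α`. -/
def ohIntegrand (α : ℝ) (γ : ℝ → Rn n) (u w : ℝ) : ℝ :=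
  (1 / ‖γ (u + w) - γ u‖ ^ α - 1 / idist γ u w ^ α) * ‖deriv γ (u + w)‖ * ‖deriv γ u‖

/-- The O'Hara energy `E^α`, with values in `[0,∞]`. -/
def oharaE (α : ℝ) (γ : ℝ → Rn n) : ℝ≥0∞ :=
  ∫⁻ u in Ioc (0:ℝ) 1, ∫⁻ w in Ioo (-(1:ℝ)/2) (1/2), ENNReal.ofReal (ohIntegrand α γ u w)

/-- The O'Hara energy `E^α` as a real number. -/
def oharaER (α : ℝ) (γ : ℝ → Rn n) : ℝ := (oharaE α γ).toReal

/-- `[−1/2,−ε] ∪ [ε,1/2]`, the `w`-section of `U_ε`. -/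
def Wset (ε : ℝ) : Set ℝ := Icc (-(1:ℝ)/2) (-ε) ∪ Icc ε (1/2)

/-- The truncated O'Hara energy `E^α_ε`, an integral over `U_ε`. -/
def oharaEeps (α ε : ℝ) (γ : ℝ → Rn n) : ℝ :=
  ∫ u in Ioc (0:ℝ) 1, ∫ w in Wset ε, ohIntegrand α γ u w

/-- `F` has directional (Gâteaux) derivative `d` at `γ` in direction `h`. -/
def HasDirDeriv (F : (ℝ → Rn n) → ℝ) (γ h : ℝ → Rn n) (d : ℝ) : Prop :=
  Tendsto (fun τ : ℝ => (F (γ + τ • h) - F γ) / τ) (𝓝[≠] (0:ℝ)) (𝓝 d)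

/-- Squared Gagliardo seminorm `[f]²_{H^{s,2}}` of a 1-periodic map. -/
def gagliardoSq (s : ℝ) {E : Type*} [NormedAddCommGroup E] (f : ℝ → E) : ℝ≥0∞ :=
  ∫⁻ u in Ioc (0:ℝ) 1, ∫⁻ w in Ioo (-(1:ℝ)/2) (1/2),
    ENNReal.ofReal (‖f (u + w) - f u‖ ^ 2 / |w| ^ (1 + 2 * s))

/-- Membership in the fractional Sobolev space `H^{1+σ,2}(ℝ/ℤ,ℝⁿ)`, `σ ∈ (0,1)`:
a 1-periodic `C¹` function whose derivative has finite Gagliardo seminorm of order `σ`. -/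
def MemH1 (σ : ℝ) (γ : ℝ → Rn n) : Prop :=
  Function.Periodic γ 1 ∧ ContDiff ℝ 1 γ ∧ gagliardoSq σ (deriv γ) < ⊤

/-- The norm of `H^{1+σ,2}(ℝ/ℤ,ℝⁿ)`. -/
def H1Norm (σ : ℝ) (γ : ℝ → Rn n) : ℝ :=
  Real.sqrt (∫ u in Ioc (0:ℝ) 1, (‖γ u‖ ^ 2 + ‖deriv γ u‖ ^ 2)) +
    Real.sqrt ((gagliardoSq σ (deriv γ)).toReal)

/-- Membership of a 1-periodic map in `L²(ℝ/ℤ)`. -/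
def MemL2per {E : Type*} [NormedAddCommGroup E] (f : ℝ → E) : Prop :=
  Function.Periodic f 1 ∧ AEStronglyMeasurable f (volume : Measure ℝ) ∧
    IntegrableOn (fun u => ‖f u‖ ^ 2) (Ioc (0:ℝ) 1) volume

/-- Membership in the fractional Sobolev space `H^{s,2}(ℝ/ℤ)`, `s ∈ (0,1)`. -/
def MemHs0 (s : ℝ) {E : Type*} [NormedAddCommGroup E] (f : ℝ → E) : Prop :=
  MemL2per f ∧ gagliardoSq s f < ⊤

/-- The norm of `H^{s,2}(ℝ/ℤ)` for `s ∈ (0,1)`: `‖f‖_{L²} + [f]_{H^{s,2}}`. -/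
def Hs0Norm (s : ℝ) {E : Type*} [NormedAddCommGroup E] (f : ℝ → E) : ℝ :=
  Real.sqrt (∫ u in Ioc (0:ℝ) 1, ‖f u‖ ^ 2) + Real.sqrt ((gagliardoSq s f).toReal)

/-- The `k`-th Fourier coefficient (`j`-th component) of a 1-periodic curve. -/
def fCoef (γ : ℝ → Rn n) (k : ℤ) (j : Fin n) : ℂ :=
  ∫ u in (0:ℝ)..1, (γ u j : ℂ) * Complex.exp ((-2) * (Real.pi : ℂ) * Complex.I * (k : ℂ) * (u : ℂ))

/-- Membership in `H^{s,2}(ℝ/ℤ,ℝⁿ)` via the Fourier characterization: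
`((1+|k|²)^{s/2} γ̂(k))_k ∈ ℓ²`. -/
def MemHF (s : ℝ) (γ : ℝ → Rn n) : Prop :=
  Function.Periodic γ 1 ∧ Continuous γ ∧
    Summable (fun k : ℤ => (1 + (k : ℝ) ^ 2) ^ s * ∑ j, ‖fCoef γ k j‖ ^ 2)

/-- The squared Fourier norm of `H^{s,2}(ℝ/ℤ,ℝⁿ)`. -/
def fNormSq (s : ℝ) (γ : ℝ → Rn n) : ℝ :=
  ∑' k : ℤ, (1 + (k : ℝ) ^ 2) ^ s * ∑ j, ‖fCoef γ k j‖ ^ 2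

/-- C¹-norm of a 1-periodic map. -/
def c1Norm (f : ℝ → Rn n) : ℝ := ⨆ u : Icc (0:ℝ) 1, (‖f u.1‖ + ‖deriv f u.1‖)

/-- The integrand of `Q(γ,h)`. -/
def Qintegrand (α : ℝ) (γ h : ℝ → Rn n) (u w : ℝ) : ℝ :=
  ⟪deriv γ u, deriv h u⟫ / |w| ^ α
    - ⟪γ (u + w) - γ u, h (u + w) - h u⟫ / |w| ^ (α + 2)

/-- The integrand of `R(γ,h)`. -/
def Rintegrand (α : ℝ) (γ h : ℝ → Rn n) (u w : ℝ) : ℝ :=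
  2 * ⟪deriv γ u, deriv h u⟫ * (1 / ‖γ (u + w) - γ u‖ ^ α - 1 / |w| ^ α)
    - α * ⟪γ (u + w) - γ u, h (u + w) - h u⟫ *
        (1 / ‖γ (u + w) - γ u‖ ^ (α + 2) - 1 / |w| ^ (α + 2))

/-- `R(γ,h)`, an absolutely convergent double integral over `(ℝ/ℤ) × [−1/2,1/2]`. -/
def Rval (α : ℝ) (γ h : ℝ → Rn n) : ℝ :=
  ∫ p in (Ioc (0:ℝ) 1) ×ˢ (Icc (-(1:ℝ)/2) (1/2)), Rintegrand α γ h p.1 p.2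

/-!
Expanding the energy of an arc-length parametrized curve in Fourier series shows that finite energy
bounds `∑ |k| ^ (α - 1) |γ̂'(k)|²`; hence `γ` is `C¹`, and, being injective, bi-Lipschitz. The
intrinsic distance is not a smooth function of the curve, so near `γ` the energy is compared with a
smooth majorant which agrees with it at `γ`: a directional derivative of the energy must then be
that of the majorant. Tested with the characters `exp (-2πiku)`, the resulting Euler–Lagrange
equation has a linear part whose symbol is at least of order `|k| ^ (α - 1)`, whereas its nonlinear
part carries the excess `1 - ‖segAvg γ' u w‖²`, which is quadratic in the oscillation of `γ'`.
Finite energy gives a first decay of order `α - 1` for the Fourier coefficients of `γ'`, and since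
`α < 3` the quadratic structure improves any such decay by a fixed amount, so they decay rapidly.
-/

/-! ### Fourier coefficients of 1-periodic functions -/

/-- The character `u ↦ exp (2πiku)` of `ℝ/ℤ`, as a function on `ℝ`. -/
def fourierExp (k : ℤ) (u : ℝ) : ℂ := fourier k (u : UnitAddCircle)

/-- The `k`-th Fourier coefficient of a 1-periodic function, represented as a function on `ℝ`. -/
def fcoeff (F : ℝ → ℂ) (k : ℤ) : ℂ := ∫ u in (0 : ℝ)..1, F u * fourierExp (-k) u

lemma fourierExp_eq_exp (k : ℤ) (u : ℝ) :
    fourierExp k u = Complex.exp (2 * Real.pi * Complex.I * k * u) := by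
  rw [fourierExp, fourier_coe_apply, Complex.ofReal_one, div_one]

lemma fourierExp_add (j k : ℤ) (u : ℝ) :
    fourierExp (j + k) u = fourierExp j u * fourierExp k u :=
  fourier_add

lemma fourierExp_add_right (k : ℤ) (u v : ℝ) :
    fourierExp k (u + v) = fourierExp k u * fourierExp k v := by
  simp only [fourierExp_eq_exp, ← Complex.exp_add, Complex.ofReal_add, mul_add]

@[simp] lemma fourierExp_zero (u : ℝ) : fourierExp 0 u = 1 := fourier_zero

@[simp] lemma fourierExp_zero_right (k : ℤ) : fourierExp k 0 = 1 := by
  simp [fourierExp_eq_exp]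

@[simp] lemma norm_fourierExp (k : ℤ) (u : ℝ) : ‖fourierExp k u‖ = 1 :=
  Circle.norm_coe _

lemma periodic_fourierExp (k : ℤ) : Function.Periodic (fourierExp k) 1 := fun u => by
  simp only [fourierExp, AddCircle.coe_add_period]

@[fun_prop] lemma continuous_fourierExp (k : ℤ) : Continuous (fourierExp k) :=
  (fourier k).continuous.comp (AddCircle.continuous_mk' 1)

lemma hasDerivAt_fourierExp (k : ℤ) (u : ℝ) :
    HasDerivAt (fourierExp k) (2 * Real.pi * Complex.I * k * fourierExp k u) u := by
  simpa only [fourierExp, Complex.ofReal_one, div_one] using! hasDerivAt_fourier 1 k u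

lemma fcoeff_eq_fourierCoeffOn (F : ℝ → ℂ) (k : ℤ) :
    fcoeff F k = fourierCoeffOn (zero_lt_one (α := ℝ)) F k := by
  rw [fourierCoeffOn_eq_integral, fcoeff, sub_zero, div_one, one_smul]
  refine intervalIntegral.integral_congr fun u _ => ?_
  rw [fourierExp_eq_exp, fourier_coe_apply, smul_eq_mul, mul_comm]
  norm_num

lemma fcoeff_lift {F : ℝ → ℂ} (hF : Function.Periodic F 1) (k : ℤ) :
    fcoeff F k = fourierCoeff (T := 1) hF.lift k := by
  rw [fourierCoeff_eq_intervalIntegral _ k 0, fcoeff, div_one, one_smul, zero_add]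
  refine intervalIntegral.integral_congr fun u _ => ?_
  simp [fourierExp, mul_comm (F u)]

lemma integral_fourierExp (k : ℤ) :
    ∫ u in (0 : ℝ)..1, fourierExp k u = if k = 0 then 1 else 0 := by
  split_ifs with h
  · simp [h]
  · have hint := intervalIntegral.integral_eq_sub_of_hasDerivAt (a := 0) (b := 1)
      (fun u _ => hasDerivAt_fourierExp k u)
      (Continuous.intervalIntegrable (by fun_prop) _ _)
    rw [intervalIntegral.integral_const_mul, ← zero_add (1 : ℝ), periodic_fourierExp k 0,
      sub_self, zero_add] at hint
    simpa [h, Real.pi_ne_zero] using hint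

lemma norm_fcoeff_le_integral (F : ℝ → ℂ) (k : ℤ) : ‖fcoeff F k‖ ≤ ∫ u in (0 : ℝ)..1, ‖F u‖ := by
  simpa [fcoeff] using intervalIntegral.norm_integral_le_integral_norm (a := (0 : ℝ)) (b := 1)
    zero_le_one (f := fun u => F u * fourierExp (-k) u) (μ := volume)

lemma norm_fcoeff_le {F : ℝ → ℂ} {C : ℝ} (hF : ∀ u, ‖F u‖ ≤ C) (k : ℤ) : ‖fcoeff F k‖ ≤ C := by
  simpa [fcoeff] using intervalIntegral.norm_integral_le_of_norm_le_const (a := 0) (b := 1)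
    (f := fun u => F u * fourierExp (-k) u) (C := C) (fun u _ => by simpa using hF u)

lemma fcoeff_sum {ι : Type*} (S : Finset ι) {F : ι → ℝ → ℂ} (hF : ∀ i ∈ S, Continuous (F i))
    (k : ℤ) : fcoeff (fun u => ∑ i ∈ S, F i u) k = ∑ i ∈ S, fcoeff (F i) k := by
  simp only [fcoeff, Finset.sum_mul]
  exact intervalIntegral.integral_finsetSum fun i hi =>
    ((hF i hi).mul (continuous_fourierExp _)).intervalIntegrable _ _

lemma fcoeff_sub {F G : ℝ → ℂ} (hF : Continuous F) (hG : Continuous G) (k : ℤ) :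
    fcoeff (fun u => F u - G u) k = fcoeff F k - fcoeff G k := by
  simp only [fcoeff, sub_mul]
  exact intervalIntegral.integral_sub ((hF.mul (continuous_fourierExp _)).intervalIntegrable _ _)
    ((hG.mul (continuous_fourierExp _)).intervalIntegrable _ _)

lemma fcoeff_const_mul (c : ℂ) (F : ℝ → ℂ) (k : ℤ) :
    fcoeff (fun u => c * F u) k = c * fcoeff F k := by
  simp only [fcoeff, mul_assoc, intervalIntegral.integral_const_mul]

lemma fcoeff_fourierExp (j k : ℤ) : fcoeff (fourierExp j) k = if j = k then 1 else 0 := by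
  simp only [fcoeff, ← fourierExp_add, integral_fourierExp, add_neg_eq_zero]

lemma fcoeff_one (k : ℤ) : fcoeff (fun _ => 1) k = if k = 0 then 1 else 0 := by
  simpa [← funext fourierExp_zero, eq_comm] using fcoeff_fourierExp 0 k

lemma fcoeff_fourierExp_mul (F : ℝ → ℂ) (j k : ℤ) :
    fcoeff (fun u => fourierExp j u * F u) k = fcoeff F (k - j) := by
  simp only [fcoeff, neg_sub, sub_eq_add_neg j, fourierExp_add]
  exact intervalIntegral.integral_congr fun u _ => by ring

lemma fcoeff_comp_add_right {F : ℝ → ℂ} (hF : Function.Periodic F 1) (a : ℝ) (k : ℤ) :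
    fcoeff (fun u => F (u + a)) k = fourierExp k a * fcoeff F k := by
  have htranslate (u : ℝ) : F (u + a) * fourierExp (-k) u =
      fourierExp k a * (F (u + a) * fourierExp (-k) (u + a)) := by
    have hinv : fourierExp k a * fourierExp (-k) a = 1 := by
      rw [← fourierExp_add, add_neg_cancel, fourierExp_zero]
    rw [fourierExp_add_right]
    linear_combination (-(F (u + a) * fourierExp (-k) u)) * hinv
  have hper : Function.Periodic (fun u => F u * fourierExp (-k) u) 1 :=
    hF.mul (periodic_fourierExp _)
  simp only [fcoeff, htranslate, intervalIntegral.integral_const_mul]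
  rw [intervalIntegral.integral_comp_add_right (fun u => F u * fourierExp (-k) u), zero_add,
    add_comm 1 a, hper.intervalIntegral_add_eq a 0, zero_add]

lemma fcoeff_of_hasDerivAt {F F' : ℝ → ℂ} (hF : ∀ u, HasDerivAt F (F' u) u)
    (hF' : IntervalIntegrable F' volume 0 1) (hp : Function.Periodic F 1) (k : ℤ) :
    fcoeff F' k = 2 * Real.pi * Complex.I * k * fcoeff F k := by
  have hparts := intervalIntegral.integral_mul_deriv_eq_deriv_mul (a := 0) (b := 1)
    (fun u _ => hasDerivAt_fourierExp (-k) u) (fun u _ => hF u)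
    (Continuous.intervalIntegrable (by fun_prop) _ _) hF'
  have hboundary : fourierExp (-k) 1 * F 1 = fourierExp (-k) 0 * F 0 := by
    simpa using ((periodic_fourierExp (-k)).mul hp) 0
  simp only [fcoeff, mul_comm (F' _), hparts, hboundary, sub_self, zero_sub]
  rw [← intervalIntegral.integral_neg, ← intervalIntegral.integral_const_mul]
  refine intervalIntegral.integral_congr fun u _ => ?_
  push_cast
  ring

/-! ### Fourier series -/

lemma hasSum_fcoeff_mul_fourierExp {F : ℝ → ℂ} (hF : Continuous F) (hp : Function.Periodic F 1)
    (hs : Summable fun k => ‖fcoeff F k‖) (u : ℝ) :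
    HasSum (fun k => fcoeff F k * fourierExp k u) (F u) := by
  have : Fact ((0 : ℝ) < 1) := ⟨zero_lt_one⟩
  let f : C(AddCircle (1 : ℝ), ℂ) := ⟨hp.lift, continuous_coinduced_dom.mpr hF⟩
  have hcoeff : fourierCoeff f = fcoeff F := funext fun k => (fcoeff_lift hp k).symm
  simpa only [hcoeff, smul_eq_mul] using! has_pointwise_sum_fourier_series_of_summable
    (f := f) (hcoeff ▸ hs.of_norm) (u : AddCircle (1 : ℝ))

lemma hasSum_sq_fcoeff {F : ℝ → ℂ} (hF : MemLp F 2 (volume.restrict (Ioc (0 : ℝ) 1))) :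
    HasSum (fun k => ‖fcoeff F k‖ ^ 2) (∫ u in (0 : ℝ)..1, ‖F u‖ ^ 2) := by
  simpa [fcoeff_eq_fourierCoeffOn] using hasSum_sq_fourierCoeffOn zero_lt_one hF

lemma hasSum_fcoeff_mul_of_dominated {ι : Type*} [Countable ι] {f : ι → ℝ → ℂ} {F G : ℝ → ℂ}
    {B : ι → ℝ} (hf : ∀ i, Continuous (f i)) (hG : Continuous G) (hB : Summable B)
    (hfB : ∀ i u, ‖f i u‖ ≤ B i) (hF : ∀ u, HasSum (fun i => f i u) (F u)) (k : ℤ) :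
    HasSum (fun i => fcoeff (fun u => f i u * G u) k) (fcoeff (fun u => F u * G u) k) := by
  obtain ⟨C, hC⟩ := (isCompact_Icc (a := (0 : ℝ)) (b := 1)).exists_bound_of_continuousOn
    hG.continuousOn
  refine intervalIntegral.hasSum_integral_of_dominated_convergence (fun i _ => B i * C)
    (fun i => Continuous.aestronglyMeasurable (by fun_prop))
    (fun i => Eventually.of_forall fun u hu => ?_)
    (Eventually.of_forall fun u _ => hB.mul_right C) (by simp)
    (Eventually.of_forall fun u _ => ((hF u).mul_right _).mul_right _)
  rw [uIoc_of_le zero_le_one] at hu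
  rw [norm_mul, norm_mul, norm_fourierExp, mul_one]
  gcongr
  · exact (norm_nonneg _).trans (hfB i u)
  · exact hfB i u
  · exact hC u ⟨hu.1.le, hu.2⟩

lemma hasSum_fcoeff_mul {F G : ℝ → ℂ} (hF : Continuous F) (hp : Function.Periodic F 1)
    (hs : Summable fun k => ‖fcoeff F k‖) (hG : Continuous G) (k : ℤ) :
    HasSum (fun j => fcoeff F j * fcoeff G (k - j)) (fcoeff (fun u => F u * G u) k) := by
  have hsum := hasSum_fcoeff_mul_of_dominated (f := fun j u => fcoeff F j * fourierExp j u)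
    (fun j => by fun_prop) hG hs (fun j u => by simp)
    (hasSum_fcoeff_mul_fourierExp hF hp hs) k
  simpa only [mul_assoc, fcoeff_const_mul, fcoeff_fourierExp_mul] using hsum

lemma iteratedDeriv_fourierExp (k : ℤ) (m : ℕ) :
    iteratedDeriv m (fourierExp k) =
      fun u => (2 * Real.pi * Complex.I * k) ^ m * fourierExp k u := by
  induction m with
  | zero => simp
  | succ m ih =>
    funext u
    rw [iteratedDeriv_succ, ih, ((hasDerivAt_fourierExp k u).const_mul _).deriv]
    ring

lemma contDiff_fourierExp (k : ℤ) {N : WithTop ℕ∞} : ContDiff ℝ N (fourierExp k) := by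
  have hofReal : ContDiff ℝ N (fun u : ℝ => (u : ℂ)) := Complex.ofRealCLM.contDiff
  rw [funext (fourierExp_eq_exp k)]
  fun_prop

lemma contDiff_of_summable_fcoeff {F : ℝ → ℂ} (hF : Continuous F) (hp : Function.Periodic F 1)
    (N : ℕ) (hs : Summable fun k : ℤ => (1 + |(k : ℝ)|) ^ N * ‖fcoeff F k‖) : ContDiff ℝ N F := by
  have hs₀ : Summable fun k : ℤ => ‖fcoeff F k‖ :=
    hs.of_nonneg_of_le (fun _ => norm_nonneg _) fun k => le_mul_of_one_le_left (norm_nonneg _)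
      (one_le_pow₀ (le_add_of_nonneg_right (abs_nonneg _)))
  have hseries : F = fun u => ∑' k, fcoeff F k * fourierExp k u :=
    funext fun u => (hasSum_fcoeff_mul_fourierExp hF hp hs₀ u).tsum_eq.symm
  rw [hseries]
  refine contDiff_tsum (v := fun m (k : ℤ) =>
      (2 * Real.pi) ^ m * ((1 + |(k : ℝ)|) ^ N * ‖fcoeff F k‖))
    (fun k => contDiff_const.mul (contDiff_fourierExp k)) (fun m _ => hs.mul_left _)
    fun m k u hm => ?_
  have hpow : |(k : ℝ)| ^ m ≤ (1 + |(k : ℝ)|) ^ N :=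
    (pow_le_pow_left₀ (abs_nonneg _) (by linarith) m).trans
      (pow_le_pow_right₀ (le_add_of_nonneg_right (abs_nonneg _)) (by exact_mod_cast hm))
  rw [norm_iteratedFDeriv_eq_norm_iteratedDeriv, iteratedDeriv_const_mul_field,
    iteratedDeriv_fourierExp]
  simp only [norm_mul, norm_pow, Complex.norm_ofNat, Complex.norm_real, Real.norm_eq_abs,
    Complex.norm_I, Complex.norm_intCast, abs_of_pos Real.pi_pos, mul_one, norm_fourierExp]
  calc ‖fcoeff F k‖ * (2 * Real.pi * |(k : ℝ)|) ^ m
      = ‖fcoeff F k‖ * ((2 * Real.pi) ^ m * |(k : ℝ)| ^ m) := by rw [mul_pow]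
    _ ≤ ‖fcoeff F k‖ * ((2 * Real.pi) ^ m * (1 + |(k : ℝ)|) ^ N) := by gcongr
    _ = (2 * Real.pi) ^ m * ((1 + |(k : ℝ)|) ^ N * ‖fcoeff F k‖) := by ring

/-! ### Polynomial decay of Fourier coefficients -/

/-- The weight `(1 + |k|)⁻ˢ`, against which the decay of Fourier coefficients is measured. -/
def decay (s : ℝ) (k : ℤ) : ℝ := (1 + |(k : ℝ)|) ^ (-s)

/-- `|F̂(k)| ≤ C (1 + |k|)⁻ˢ` for all frequencies `k`. -/
def FourierDecay (s C : ℝ) (F : ℝ → ℂ) : Prop := ∀ k, ‖fcoeff F k‖ ≤ C * decay s k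

/-- A constant `K` for which the convolution of the weights satisfies
`∑ⱼ decay r (k - j) * decay s j ≤ K * decay r k` whenever `0 ≤ r ≤ s` and `1 < s`. -/
def convConst (s : ℝ) : ℝ := 2 ^ s * (2 * ∑' k, decay s k)

lemma decay_pos (s : ℝ) (k : ℤ) : 0 < decay s k := by unfold decay; positivity

lemma decay_nonneg (s : ℝ) (k : ℤ) : 0 ≤ decay s k := (decay_pos s k).le

@[simp] lemma decay_zero_right (s : ℝ) : decay s 0 = 1 := by simp [decay]

lemma decay_mul_decay (s t : ℝ) (k : ℤ) : decay s k * decay t k = decay (s + t) k := by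
  rw [decay, decay, decay, ← Real.rpow_add (by positivity), neg_add]

lemma decay_anti {s t : ℝ} (h : s ≤ t) (k : ℤ) : decay t k ≤ decay s k :=
  Real.rpow_le_rpow_of_exponent_le (le_add_of_nonneg_right (abs_nonneg _)) (neg_le_neg h)

lemma decay_le_decay {s : ℝ} (hs : 0 ≤ s) {j k : ℤ} (h : |(j : ℝ)| ≤ |(k : ℝ)|) :
    decay s k ≤ decay s j :=
  Real.rpow_le_rpow_of_nonpos (by positivity) (by gcongr) (neg_nonpos.2 hs)

lemma one_add_rpow_mul_decay (s : ℝ) (k : ℤ) : (1 + |(k : ℝ)|) ^ s * decay s k = 1 := by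
  rw [decay, ← Real.rpow_add (by positivity), add_neg_cancel, Real.rpow_zero]

lemma decay_le_two_rpow_mul {s : ℝ} (hs : 0 ≤ s) {j k : ℤ} (h : |(j : ℝ)| ≤ |(k : ℝ)|) :
    decay s k ≤ 2 ^ s * decay s (j + k) := by
  have hsum : 1 + |((j + k : ℤ) : ℝ)| ≤ 2 * (1 + |(k : ℝ)|) := by
    push_cast
    linarith [abs_add_le (j : ℝ) k]
  calc decay s k = 2 ^ s * (2 * (1 + |(k : ℝ)|)) ^ (-s) := by
        rw [Real.mul_rpow two_pos.le (by positivity), ← mul_assoc, ← Real.rpow_add two_pos,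
          add_neg_cancel, Real.rpow_zero, one_mul, decay]
    _ ≤ 2 ^ s * decay s (j + k) := mul_le_mul_of_nonneg_left
        (Real.rpow_le_rpow_of_nonpos (by positivity) hsum (neg_nonpos.2 hs)) (by positivity)

lemma summable_decay {s : ℝ} (hs : 1 < s) : Summable (decay s) := by
  have hint : Summable fun k : ℤ => 1 / |(k : ℝ)| ^ s := by
    simpa using (Real.summable_one_div_int_add_rpow 0 s).2 hs
  rw [← Set.Finite.summable_compl_iff (Set.finite_singleton (0 : ℤ))] at hint ⊢
  refine hint.of_nonneg_of_le (fun k => decay_nonneg _ _) fun ⟨k, hk⟩ => ?_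
  have hk : 0 < |(k : ℝ)| := abs_pos.2 (Int.cast_ne_zero.2 hk)
  simp only [Function.comp_apply, one_div, ← Real.rpow_neg hk.le]
  exact Real.rpow_le_rpow_of_nonpos hk (by linarith) (by linarith)

lemma convConst_nonneg (s : ℝ) : 0 ≤ convConst s :=
  mul_nonneg (by positivity) (mul_nonneg two_pos.le (tsum_nonneg (decay_nonneg s)))

lemma tendsto_decay_natCast {s : ℝ} (hs : 0 < s) :
    Tendsto (fun N : ℕ => decay s N) atTop (𝓝 0) := by
  have htendsto := (tendsto_rpow_neg_atTop hs).comp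
    (tendsto_atTop_add_const_left atTop (1 : ℝ) tendsto_natCast_atTop_atTop)
  exact htendsto.congr fun N => by simp [decay]

-- The larger of `|j|` and `|l|` is comparable to `1 + |j + l|`, and its weight can be traded.
lemma decay_mul_decay_le {r p q : ℝ} (hr : 0 ≤ r) (hp : r ≤ p) (hq : r ≤ q) (j l : ℤ) :
    decay p j * decay q l ≤
      2 ^ r * decay r (j + l) * (decay (p + q - r) j + decay (p + q - r) l) := by
  have htrade {a b : ℝ} (hb : r ≤ b) {i k : ℤ} (h : |(i : ℝ)| ≤ |(k : ℝ)|) :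
      decay a i * decay b k ≤ 2 ^ r * decay r (i + k) * decay (a + b - r) i := by
    calc decay a i * decay b k = decay a i * (decay r k * decay (b - r) k) := by
          rw [decay_mul_decay, add_sub_cancel]
      _ ≤ decay a i * (2 ^ r * decay r (i + k) * decay (b - r) i) := by
          have := decay_nonneg a i
          have := decay_nonneg (b - r) k
          have := decay_nonneg r (i + k)
          have := decay_le_two_rpow_mul hr h
          have := decay_le_decay (sub_nonneg.2 hb) h
          gcongr
      _ = 2 ^ r * decay r (i + k) * decay (a + b - r) i := by
          rw [add_sub_assoc, ← decay_mul_decay]; ring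
  have hpos : 0 ≤ 2 ^ r * decay r (j + l) := mul_nonneg (by positivity) (decay_nonneg _ _)
  rcases le_total |(j : ℝ)| |(l : ℝ)| with h | h
  · exact (htrade hq h).trans (mul_le_mul_of_nonneg_left
      (le_add_of_nonneg_right (decay_nonneg _ _)) hpos)
  · rw [mul_comm (decay p j), add_comm j, add_comm p]
    rw [add_comm j] at hpos
    exact (htrade hp h).trans (mul_le_mul_of_nonneg_left
      (le_add_of_nonneg_left (decay_nonneg _ _)) hpos)

lemma norm_fcoeff_mul_le {F G : ℝ → ℂ} (hF : Continuous F) (hp : Function.Periodic F 1)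
    (hs : Summable fun k => ‖fcoeff F k‖) (hG : Continuous G) {t A : ℝ} (ht : 1 < t) (k : ℤ)
    (h : ∀ j, ‖fcoeff F j‖ * ‖fcoeff G (k - j)‖ ≤ A * (decay t j + decay t (k - j))) :
    ‖fcoeff (fun u => F u * G u) k‖ ≤ A * (2 * ∑' j, decay t j) := by
  rw [← (hasSum_fcoeff_mul hF hp hs hG k).tsum_eq, two_mul]
  have hdecay := (summable_decay ht).hasSum
  have hreflect : HasSum (fun j => decay t (k - j)) (∑' j, decay t j) :=
    (Equiv.subLeft k).hasSum_iff.mpr hdecay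
  exact tsum_of_norm_bounded ((hdecay.add hreflect).mul_left A) fun j => by
    rw [norm_mul]; exact h j

namespace FourierDecay

variable {F G : ℝ → ℂ} {r s C D : ℝ}

lemma nonneg (h : FourierDecay s C F) : 0 ≤ C :=
  nonneg_of_mul_nonneg_left ((norm_nonneg _).trans (h 0)) (decay_pos _ _)

lemma mono_const (h : FourierDecay s C F) (hCD : C ≤ D) : FourierDecay s D F := fun k =>
  (h k).trans (mul_le_mul_of_nonneg_right hCD (decay_nonneg s k))

lemma mono_exponent (h : FourierDecay s C F) (hrs : r ≤ s) : FourierDecay r C F := fun k =>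
  (h k).trans (mul_le_mul_of_nonneg_left (decay_anti hrs k) h.nonneg)

lemma summable (h : FourierDecay s C F) (hs : 1 < s) : Summable fun k => ‖fcoeff F k‖ :=
  ((summable_decay hs).mul_left C).of_nonneg_of_le (fun _ => norm_nonneg _) h

lemma norm_le (h : FourierDecay s C F) (hs : 1 < s) (hF : Continuous F)
    (hp : Function.Periodic F 1) (u : ℝ) : ‖F u‖ ≤ C * ∑' k, decay s k := by
  rw [← (hasSum_fcoeff_mul_fourierExp hF hp (h.summable hs) u).tsum_eq]
  exact tsum_of_norm_bounded ((summable_decay hs).hasSum.mul_left C) fun k => by simpa using h k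

lemma one (s : ℝ) : FourierDecay s 1 fun _ => 1 := fun k => by
  rw [fcoeff_one, one_mul]
  split_ifs with h
  · simp [h]
  · simpa using decay_nonneg s k

lemma const_mul (h : FourierDecay s C F) (c : ℂ) : FourierDecay s (‖c‖ * C) fun u => c * F u :=
  fun k => by
    rw [fcoeff_const_mul, norm_mul, mul_assoc]
    exact mul_le_mul_of_nonneg_left (h k) (norm_nonneg c)

lemma sum {ι : Type*} {S : Finset ι} {F : ι → ℝ → ℂ} {C : ι → ℝ} (hF : ∀ i ∈ S, Continuous (F i))
    (h : ∀ i ∈ S, FourierDecay s (C i) (F i)) :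
    FourierDecay s (∑ i ∈ S, C i) fun u => ∑ i ∈ S, F i u := fun k => by
  rw [fcoeff_sum S hF, Finset.sum_mul]
  exact norm_sum_le_of_le S fun i hi => h i hi k

lemma mul_of_summable {p q : ℝ} (hF : FourierDecay p C F) (hG : FourierDecay q D G)
    (hsum : Summable fun k => ‖fcoeff G k‖) (hr : 0 ≤ r) (hp : r ≤ p) (hq : r ≤ q)
    (hpq : 1 < p + q - r) (hFc : Continuous F) (hGc : Continuous G) (hGp : Function.Periodic G 1) :
    FourierDecay r (2 ^ r * (2 * ∑' k, decay (p + q - r) k) * C * D) fun u => F u * G u :=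
  fun k => by
  have hC := hF.nonneg
  have hD := hG.nonneg
  have hconv := norm_fcoeff_mul_le hGc hGp hsum hFc (A := 2 ^ r * C * D * decay r k)
    hpq k fun j => by
      have hweights := sub_add_cancel k j ▸ decay_mul_decay_le hr hp hq (k - j) j
      calc ‖fcoeff G j‖ * ‖fcoeff F (k - j)‖ ≤ (D * decay q j) * (C * decay p (k - j)) := by
            gcongr
            · exact mul_nonneg hD (decay_nonneg _ _)
            · exact hG j
            · exact hF _
        _ = C * D * (decay p (k - j) * decay q j) := by ring
        _ ≤ C * D * (2 ^ r * decay r k *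
              (decay (p + q - r) (k - j) + decay (p + q - r) j)) := by gcongr
        _ = 2 ^ r * C * D * decay r k *
              (decay (p + q - r) j + decay (p + q - r) (k - j)) := by ring
  simp only [mul_comm (F _)]
  exact hconv.trans_eq (by ring)

lemma mul (hF : FourierDecay r C F) (hG : FourierDecay s D G) (hs : 1 < s) (hr : 0 ≤ r)
    (hrs : r ≤ s) (hFc : Continuous F) (hGc : Continuous G) (hGp : Function.Periodic G 1) :
    FourierDecay r (convConst s * C * D) fun u => F u * G u := by
  have hC := hF.nonneg
  have hD := hG.nonneg
  have htsum : 0 ≤ 2 * ∑' j, decay s j := mul_nonneg two_pos.le (tsum_nonneg (decay_nonneg s))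
  have hmul := hF.mul_of_summable hG (hG.summable hs) hr le_rfl hrs (by linarith) hFc hGc hGp
  rw [add_sub_cancel_left] at hmul
  refine hmul.mono_const ?_
  rw [convConst]
  gcongr
  exact one_le_two

lemma pow (h : FourierDecay s C F) (hs : 1 < s) (hF : Continuous F)
    (hp : Function.Periodic F 1) (l : ℕ) :
    FourierDecay s ((convConst s * C) ^ l) fun u => F u ^ l := by
  induction l with
  | zero => simpa using one s
  | succ l ih =>
    simp only [pow_succ (F _)]
    exact (ih.mul h hs (by linarith) le_rfl (hF.pow l) hF hp).mono_const (by ring_nf; rfl)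

end FourierDecay

/-! ### Powers and power series of functions with decaying Fourier coefficients -/

/-- The trigonometric polynomial of degree `N` with coefficients `a`. -/
def trigPoly (N : ℕ) (a : ℤ → ℂ) (u : ℝ) : ℂ := ∑ m ∈ Finset.Icc (-N : ℤ) N, a m * fourierExp m u

@[fun_prop] lemma continuous_trigPoly (N : ℕ) (a : ℤ → ℂ) : Continuous (trigPoly N a) := by
  unfold trigPoly
  fun_prop

lemma periodic_trigPoly (N : ℕ) (a : ℤ → ℂ) : Function.Periodic (trigPoly N a) 1 := fun u => by
  simp only [trigPoly, periodic_fourierExp _ u]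

lemma fcoeff_trigPoly_mul (N : ℕ) (a : ℤ → ℂ) {G : ℝ → ℂ} (hG : Continuous G) (k : ℤ) :
    fcoeff (fun u => trigPoly N a u * G u) k =
      ∑ m ∈ Finset.Icc (-N : ℤ) N, a m * fcoeff G (k - m) := by
  simp only [trigPoly, Finset.sum_mul]
  rw [fcoeff_sum _ fun m _ => by fun_prop]
  simp only [mul_assoc, fcoeff_const_mul, fcoeff_fourierExp_mul]

lemma fcoeff_trigPoly (N : ℕ) (a : ℤ → ℂ) (k : ℤ) :
    fcoeff (trigPoly N a) k = if k ∈ Finset.Icc (-N : ℤ) N then a k else 0 := by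
  unfold trigPoly
  rw [fcoeff_sum _ fun m _ => by fun_prop]
  simp [fcoeff_const_mul, fcoeff_fourierExp]

lemma fcoeff_trigPoly_pow_eq_zero (N : ℕ) (a : ℤ → ℂ) (l : ℕ) (k : ℤ) (hk : (N * l : ℤ) < |k|) :
    fcoeff (fun u => trigPoly N a u ^ l) k = 0 := by
  induction l generalizing k with
  | zero =>
    have : k ≠ 0 := abs_pos.1 (by simpa using hk)
    simp [fcoeff_one, this]
  | succ l ih =>
    simp only [pow_succ']
    rw [fcoeff_trigPoly_mul _ _ (by fun_prop)]
    refine Finset.sum_eq_zero fun m hm => ?_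
    rw [Finset.mem_Icc, ← abs_le] at hm
    have htri : |k| ≤ |k - m| + |m| := by simpa using abs_add_le (k - m) m
    push_cast at hk
    rw [ih _ (by linarith), mul_zero]

lemma fourierDecay_trigPoly_pow (N : ℕ) (a : ℤ → ℂ) {r s : ℝ} (hs : 0 ≤ s)
    (hr : ∀ u, ‖trigPoly N a u‖ ≤ r) (l : ℕ) :
    FourierDecay s ((1 + N * l) ^ s * r ^ l) fun u => trigPoly N a u ^ l := fun k => by
  have hr₀ : 0 ≤ r := (norm_nonneg _).trans (hr 0)
  have := decay_nonneg s k
  rcases lt_or_ge (N * l : ℤ) |k| with h | h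
  · rw [fcoeff_trigPoly_pow_eq_zero N a l k h, norm_zero]
    positivity
  · have hsup : ‖fcoeff (fun u => trigPoly N a u ^ l) k‖ ≤ r ^ l :=
      norm_fcoeff_le (fun u => norm_pow (trigPoly N a u) l ▸ by gcongr; exact hr u) k
    have hk : |(k : ℝ)| ≤ N * l := by exact_mod_cast h
    calc ‖fcoeff (fun u => trigPoly N a u ^ l) k‖
        ≤ (1 + |(k : ℝ)|) ^ s * decay s k * r ^ l := by rwa [one_add_rpow_mul_decay, one_mul]
      _ ≤ (1 + N * l) ^ s * decay s k * r ^ l := by gcongr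
      _ = (1 + N * l) ^ s * r ^ l * decay s k := by ring

lemma exists_one_add_mul_rpow_mul_pow_le {r₀ r : ℝ} (s : ℝ) (h₀ : 0 < r₀) (h : r₀ < r) (N : ℕ) :
    ∃ C, 0 ≤ C ∧ ∀ i : ℕ, (1 + (N : ℝ) * i) ^ s * r₀ ^ i ≤ C * r ^ i := by
  have hr : 0 < r := h₀.trans h
  obtain ⟨m, hm⟩ := exists_nat_ge s
  have hratio : |r₀ / r| < 1 := by rwa [abs_of_pos (by positivity), div_lt_one hr]
  obtain ⟨B, hB⟩ := (tendsto_pow_const_mul_const_pow_of_abs_lt_one m hratio).bddAbove_range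
  have hB (i : ℕ) : (i : ℝ) ^ m * (r₀ / r) ^ i ≤ B := hB ⟨i, rfl⟩
  have hB₀ : 0 ≤ B := le_trans (by positivity) (hB 0)
  refine ⟨(1 + (N : ℝ)) ^ m * (B / (r₀ / r)), by positivity, fun i => ?_⟩
  have hshift : ((i + 1 : ℕ) : ℝ) ^ m * (r₀ / r) ^ i ≤ B / (r₀ / r) := by
    rw [le_div_iff₀ (by positivity), mul_assoc, ← pow_succ]
    exact hB (i + 1)
  have hpoly : (1 + (N : ℝ) * i) ^ s ≤ (1 + (N : ℝ)) ^ m * ((i + 1 : ℕ) : ℝ) ^ m := by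
    have hNi : (0 : ℝ) ≤ N * i := by positivity
    calc (1 + (N : ℝ) * i) ^ s ≤ (1 + (N : ℝ) * i) ^ (m : ℝ) :=
          Real.rpow_le_rpow_of_exponent_le (by linarith) hm
      _ ≤ ((1 + (N : ℝ)) * ((i + 1 : ℕ) : ℝ)) ^ m := by
          rw [Real.rpow_natCast]
          gcongr
          push_cast
          linarith [Nat.cast_nonneg (α := ℝ) N, Nat.cast_nonneg (α := ℝ) i]
      _ = (1 + (N : ℝ)) ^ m * ((i + 1 : ℕ) : ℝ) ^ m := mul_pow _ _ _
  calc (1 + (N : ℝ) * i) ^ s * r₀ ^ i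
      ≤ (1 + (N : ℝ)) ^ m * ((i + 1 : ℕ) : ℝ) ^ m * r₀ ^ i := by gcongr
    _ = (1 + (N : ℝ)) ^ m * (((i + 1 : ℕ) : ℝ) ^ m * (r₀ / r) ^ i) * r ^ i := by
        rw [div_pow]; field_simp
    _ ≤ (1 + (N : ℝ)) ^ m * (B / (r₀ / r)) * r ^ i := by gcongr

namespace FourierDecay

variable {F G : ℝ → ℂ} {r s t C D : ℝ}

lemma sub_trigPoly (h : FourierDecay t C F) (hF : Continuous F) (hst : s ≤ t) (N : ℕ) :
    FourierDecay s (C * decay (t - s) N) fun u => F u - trigPoly N (fcoeff F) u := fun k => by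
  have hC := h.nonneg
  rw [fcoeff_sub hF (continuous_trigPoly _ _), fcoeff_trigPoly]
  split_ifs with hk
  · rw [sub_self, norm_zero]
    exact mul_nonneg (mul_nonneg hC (decay_nonneg _ _)) (decay_nonneg _ _)
  · have hNk : |((N : ℤ) : ℝ)| ≤ |(k : ℝ)| := by
      rw [Finset.mem_Icc, ← abs_le, not_le] at hk
      exact_mod_cast (Nat.abs_cast N).trans_le hk.le
    rw [sub_zero, mul_assoc]
    refine (h k).trans (mul_le_mul_of_nonneg_left ?_ hC)
    calc decay t k = decay (t - s) k * decay s k := by rw [decay_mul_decay, sub_add_cancel]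
      _ ≤ decay (t - s) N * decay s k :=
        mul_le_mul_of_nonneg_right (decay_le_decay (sub_nonneg.2 hst) hNk) (decay_nonneg s k)

lemma add_pow (hs : 1 < s) (hF : Continuous F) (hG : Continuous G) (hGp : Function.Periodic G 1)
    {i : ℕ} (hFd : ∀ j ≤ i, FourierDecay s (C * r ^ j) fun u => F u ^ j)
    (hGd : FourierDecay s D G) :
    FourierDecay s (convConst s * C * (r + convConst s * D) ^ i) fun u => (F u + G u) ^ i := by
  have hterm (j : ℕ) (hj : j ∈ Finset.range (i + 1)) : FourierDecay s
      (i.choose j * (convConst s * (C * r ^ j) * (convConst s * D) ^ (i - j)))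
      fun u => i.choose j * (F u ^ j * G u ^ (i - j)) := by
    have hprod := (hFd j (Nat.lt_succ_iff.1 (Finset.mem_range.1 hj))).mul
      (hGd.pow hs hG hGp (i - j)) hs (by linarith) le_rfl (by fun_prop) (by fun_prop)
      (fun u => by simp only [hGp u])
    simpa only [Complex.norm_natCast] using hprod.const_mul (i.choose j : ℂ)
  have hsum := FourierDecay.sum (fun j _ => by fun_prop) hterm
  simp only [_root_.add_pow]
  convert hsum using 1
  · rw [Finset.mul_sum]
    exact Finset.sum_congr rfl fun j _ => by ring
  · funext u
    exact Finset.sum_congr rfl fun j _ => by ring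

end FourierDecay

-- Split `g` into a trigonometric polynomial, whose powers have controlled degree, and a tail which
-- is small both uniformly and in the weighted norm of exponent `s`.
lemma exists_fourierDecay_pow {s t ρ C₀ : ℝ} (hs : 1 < s) (hst : s < t) (hρ₀ : 0 ≤ ρ) (hρ : ρ < 1)
    (hC₀ : 0 ≤ C₀) :
    ∃ C r : ℝ, 0 ≤ C ∧ 0 < r ∧ r < 1 ∧ ∀ g : ℝ → ℂ, Continuous g → Function.Periodic g 1 →
      (∀ u, ‖g u‖ ≤ ρ) → FourierDecay t C₀ g →
      ∀ i : ℕ, FourierDecay s (C * r ^ i) fun u => g u ^ i := by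
  set K := convConst s
  set S := ∑' k, decay s k
  have hK : 0 ≤ K := convConst_nonneg s
  have hS : 0 ≤ S := tsum_nonneg (decay_nonneg s)
  obtain ⟨N, hN⟩ : ∃ N : ℕ, C₀ * decay (t - s) N * (S + K) < (1 - ρ) / 2 := by
    have hlim := ((tendsto_decay_natCast (sub_pos.2 hst)).const_mul C₀).mul_const (S + K)
    rw [mul_zero, zero_mul] at hlim
    exact (hlim.eventually_lt_const (by linarith)).exists
  set ε := C₀ * decay (t - s) N
  have hε : 0 ≤ ε := mul_nonneg hC₀ (decay_nonneg _ _)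
  set r₀ := (1 + ρ) / 2 with hr₀
  have hradius : ρ + ε * S + K * ε ≤ r₀ := by rw [hr₀]; nlinarith
  obtain ⟨C, hC, hbound⟩ := exists_one_add_mul_rpow_mul_pow_le s (show 0 < r₀ by positivity)
    (show r₀ < (r₀ + 1) / 2 by linarith) N
  refine ⟨K * C, (r₀ + 1) / 2, by positivity, by positivity, by linarith,
    fun g hg hgp hgρ hgd i => ?_⟩
  set P := trigPoly N (fcoeff g)
  have hPc : Continuous P := continuous_trigPoly _ _
  have htail := hgd.sub_trigPoly hg hst.le N
  have htailc : Continuous fun u => g u - P u := hg.sub hPc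
  have htailp : Function.Periodic (fun u => g u - P u) 1 := hgp.sub (periodic_trigPoly _ _)
  have hP (u : ℝ) : ‖P u‖ ≤ ρ + ε * S := by
    simpa using (norm_sub_le (g u) (g u - P u)).trans
      (add_le_add (hgρ u) (htail.norm_le hs htailc htailp u))
  have hPd (j : ℕ) (hj : j ≤ i) :
      FourierDecay s ((1 + (N : ℝ) * i) ^ s * (ρ + ε * S) ^ j) fun u => P u ^ j :=
    (fourierDecay_trigPoly_pow N _ (by linarith) hP j).mono_const (by gcongr)
  have hpow := FourierDecay.add_pow hs hPc htailc htailp hPd htail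
  simp only [add_sub_cancel] at hpow
  refine hpow.mono_const ?_
  calc K * (1 + (N : ℝ) * i) ^ s * (ρ + ε * S + K * ε) ^ i
      ≤ K * (1 + (N : ℝ) * i) ^ s * r₀ ^ i := by gcongr
    _ ≤ K * C * ((r₀ + 1) / 2) ^ i := by
        rw [mul_assoc, mul_assoc]
        exact mul_le_mul_of_nonneg_left (hbound i) hK

lemma exists_hasSum_one_sub_rpow (q : ℝ) : ∃ b : ℕ → ℝ, ∀ x : ℝ, |x| < 1 →
    (Summable fun i => |b i| * |x| ^ i) ∧
      HasSum (fun i => b (i + 1) * x ^ (i + 1)) ((1 - x) ^ (-q) - 1) := by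
  have hseries := Real.one_div_one_sub_rpow_hasFPowerSeriesOnBall_zero q
  set b : ℕ → ℝ := fun n => Ring.choose (q + n - 1) n with hb
  refine ⟨b, fun x hx => ?_⟩
  have hmem : x ∈ Metric.eball (0 : ℝ) 1 := by
    simpa [enorm_eq_nnnorm, ← NNReal.coe_lt_coe] using hx
  have hsum : HasSum (fun i => b i * x ^ i) ((1 - x) ^ (-q)) := by
    have h := hseries.hasSum hmem
    rw [zero_add, one_div, ← Real.rpow_neg (by linarith [(abs_lt.mp hx).2])] at h
    refine h.congr_fun fun i => ?_
    simp [mul_comm]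
  have hb₀ : b 0 = 1 := by simp [hb]
  refine ⟨by simpa [abs_mul] using hsum.summable.abs, ?_⟩
  rw [hasSum_nat_add_iff (f := fun i => b i * x ^ i) 1]
  simpa [hb₀] using hsum

lemma FourierDecay.hasSum_mul {ι : Type*} [Countable ι] {f : ι → ℝ → ℂ} {F G : ℝ → ℂ}
    {A B : ι → ℝ} {s : ℝ} (hf : ∀ i, Continuous (f i)) (hG : Continuous G) (hB : Summable B)
    (hfB : ∀ i u, ‖f i u‖ ≤ B i) (hF : ∀ u, HasSum (fun i => f i u) (F u)) (hA : Summable A)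
    (h : ∀ i, FourierDecay s (A i) fun u => f i u * G u) :
    FourierDecay s (∑' i, A i) fun u => F u * G u := fun k => by
  rw [← (hasSum_fcoeff_mul_of_dominated hf hG hB hfB hF k).tsum_eq]
  exact tsum_of_norm_bounded (hA.hasSum.mul_right _) fun i => h i k

lemma exists_fourierDecay_one_sub_rpow_sub_one_mul (q : ℝ) {r s t ρ C₀ : ℝ} (hs : 1 < s)
    (hst : s < t) (hr : 0 ≤ r) (hrs : r ≤ s) (hρ₀ : 0 ≤ ρ) (hρ : ρ < 1) (hC₀ : 0 ≤ C₀) :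
    ∃ C : ℝ, 0 ≤ C ∧ ∀ (X : ℝ → ℝ) (G : ℝ → ℂ) (D : ℝ), Continuous X → Function.Periodic X 1 →
      Continuous G → Function.Periodic G 1 → (∀ u, |X u| ≤ ρ) →
      FourierDecay t C₀ (fun u => X u) → FourierDecay t C₀ G → FourierDecay r D (fun u => X u) →
      FourierDecay r (C * D) fun u => (((1 - X u) ^ (-q) - 1 : ℝ) : ℂ) * G u := by
  obtain ⟨C, θ, hC, hθ₀, hθ, hpow⟩ := exists_fourierDecay_pow hs hst hρ₀ hρ hC₀
  obtain ⟨b, hb⟩ := exists_hasSum_one_sub_rpow q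
  have hbθ : Summable fun i => |b (i + 1)| * θ ^ i := by
    have h := (hb θ (by rwa [abs_of_pos hθ₀])).1
    rw [abs_of_pos hθ₀] at h
    refine (((summable_nat_add_iff 1).2 h).mul_right θ⁻¹).congr fun i => ?_
    rw [pow_succ]
    field_simp
  have hbρ : Summable fun i => |b (i + 1)| * ρ ^ (i + 1) := by
    have h := (hb ρ (by rwa [abs_of_nonneg hρ₀])).1
    rw [abs_of_nonneg hρ₀] at h
    exact (summable_nat_add_iff 1).2 h
  set K := convConst s
  have : 0 ≤ K := convConst_nonneg s
  refine ⟨K ^ 2 * C * C₀ * ∑' i, |b (i + 1)| * θ ^ i, by positivity,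
    fun X G D hX hXp hG hGp hXρ hXt hGt hXr => ?_⟩
  have hterm (i : ℕ) : FourierDecay r (K ^ 2 * C * C₀ * D * (|b (i + 1)| * θ ^ i))
      fun u => ((b (i + 1) * X u ^ (i + 1) : ℝ) : ℂ) * G u := by
    have hpowG := (hpow _ (by fun_prop) (fun u => by simp only [hXp u]) (by simpa using hXρ) hXt
      i).mul (hGt.mono_exponent hst.le) hs (by linarith) le_rfl (by fun_prop) hG hGp
    have hmul := (hXr.mul hpowG hs hr hrs (by fun_prop) (by fun_prop)
      (fun u => by simp only [hXp u, hGp u])).const_mul (b (i + 1))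
    rw [Complex.norm_real, Real.norm_eq_abs] at hmul
    convert hmul using 1
    · ring
    · push_cast
      ring_nf
  have hsum := FourierDecay.hasSum_mul (fun i => by fun_prop) hG hbρ (fun i u => ?_)
    (fun u => Complex.hasSum_ofReal.2 (hb (X u) ((hXρ u).trans_lt hρ)).2)
    (hbθ.mul_left _) hterm
  · rw [tsum_mul_left] at hsum
    convert hsum using 1
    ring
  · rw [Complex.norm_real, Real.norm_eq_abs, abs_mul, abs_pow]
    gcongr
    exact hXρ u

/-- The average of `g` over the segment from `u` to `u + w`. -/
def segAvg {E : Type*} [NormedAddCommGroup E] [NormedSpace ℝ E] (g : ℝ → E) (u w : ℝ) : E :=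
  ∫ s in (0 : ℝ)..1, g (u + s * w)

section SegAvg

variable {E : Type*} [NormedAddCommGroup E] [NormedSpace ℝ E]

@[fun_prop] lemma continuous_segAvg {X : Type*} [TopologicalSpace X] {g : ℝ → E} {a b : X → ℝ}
    (hg : Continuous g) (ha : Continuous a) (hb : Continuous b) :
    Continuous fun x => segAvg g (a x) (b x) :=
  intervalIntegral.continuous_parametric_intervalIntegral_of_continuous' (by fun_prop) 0 1

lemma periodic_segAvg {g : ℝ → E} (hg : Function.Periodic g 1) (w : ℝ) :
    Function.Periodic (fun u => segAvg g u w) 1 := fun u => by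
  simp only [segAvg, add_right_comm u 1, hg _]

@[simp] lemma segAvg_zero [CompleteSpace E] (g : ℝ → E) (u : ℝ) : segAvg g u 0 = g u := by
  simp [segAvg]

lemma norm_segAvg_le {g : ℝ → E} {C : ℝ} (hg : ∀ u, ‖g u‖ ≤ C) (u w : ℝ) : ‖segAvg g u w‖ ≤ C := by
  simpa [segAvg] using intervalIntegral.norm_integral_le_of_norm_le_const (a := 0) (b := 1)
    (f := fun s => g (u + s * w)) (C := C) (fun s _ => hg _)

lemma smul_segAvg [CompleteSpace E] {γ g : ℝ → E} (hγ : ∀ u, HasDerivAt γ (g u) u)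
    (hg : Continuous g) (u w : ℝ) : w • segAvg g u w = γ (u + w) - γ u := by
  have hderiv (s : ℝ) : HasDerivAt (fun s => γ (u + s * w)) (w • g (u + s * w)) s :=
    (hγ (u + s * w)).scomp s (by simpa using ((hasDerivAt_id s).mul_const w).const_add u)
  have hftc := intervalIntegral.integral_eq_sub_of_hasDerivAt (a := 0) (b := 1)
    (fun s _ => hderiv s) (Continuous.intervalIntegrable (by fun_prop) _ _)
  simpa [segAvg, intervalIntegral.integral_smul] using hftc

end SegAvg

/-- The Fourier multiplier of the averaging operator `g ↦ segAvg g · w`. -/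
def avgSymbol (k : ℤ) (w : ℝ) : ℂ := segAvg (fourierExp k) 0 w

lemma two_pi_mul_avgSymbol (k : ℤ) (w : ℝ) :
    2 * Real.pi * Complex.I * k * w * avgSymbol k w = fourierExp k w - 1 := by
  have h := smul_segAvg (hasDerivAt_fourierExp k) (by fun_prop) 0 w
  simp only [segAvg, intervalIntegral.integral_const_mul, Complex.real_smul, zero_add,
    fourierExp_zero_right] at h
  rw [← h, avgSymbol, segAvg]
  simp only [zero_add]
  ring

lemma norm_avgSymbol_le_one (k : ℤ) (w : ℝ) : ‖avgSymbol k w‖ ≤ 1 :=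
  norm_segAvg_le (fun u => (norm_fourierExp k u).le) 0 w

lemma one_sub_sq_norm_avgSymbol_nonneg (k : ℤ) (w : ℝ) : 0 ≤ 1 - ‖avgSymbol k w‖ ^ 2 :=
  sub_nonneg.2 (pow_le_one₀ (norm_nonneg _) (norm_avgSymbol_le_one k w))

@[fun_prop] lemma continuous_avgSymbol (k : ℤ) : Continuous (avgSymbol k) :=
  continuous_segAvg (continuous_fourierExp k) continuous_const continuous_id

lemma norm_avgSymbol_le {k : ℤ} {w : ℝ} (h : 2 / 5 ≤ |(k : ℝ)| * |w|) :
    ‖avgSymbol k w‖ ≤ 4 / 5 := by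
  have hle : ‖fourierExp k w - 1‖ ≤ 2 := (norm_sub_le _ _).trans (by simp; norm_num)
  rw [← two_pi_mul_avgSymbol] at hle
  simp only [norm_mul, Complex.norm_ofNat, Complex.norm_real, Real.norm_eq_abs,
    Complex.norm_I, Complex.norm_intCast, abs_of_pos Real.pi_pos, mul_one] at hle
  have hpi := Real.pi_gt_d2
  have hmul : 2 * 3.14 * (2 / 5) * ‖avgSymbol k w‖ ≤
      2 * Real.pi * |(k : ℝ)| * |w| * ‖avgSymbol k w‖ := by
    rw [mul_assoc (2 * Real.pi)]
    gcongr
  norm_num at hmul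
  linarith [norm_nonneg (avgSymbol k w)]

lemma le_rpow_mul_one_sub_sq_norm_avgSymbol {α : ℝ} (hα : 0 ≤ α) {k : ℤ} {w : ℝ} (hw : 0 < w)
    (hlow : 2 / 5 ≤ |(k : ℝ)| * w) (hup : |(k : ℝ)| * w ≤ 1) :
    |(k : ℝ)| ^ α * (9 / 25) ≤ |w| ^ (-α) * (1 - ‖avgSymbol k w‖ ^ 2) := by
  have hsymbol : ‖avgSymbol k w‖ ^ 2 ≤ (4 / 5) ^ 2 := by
    gcongr
    exact norm_avgSymbol_le (by rwa [abs_of_pos hw])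
  have hk : |(k : ℝ)| ≤ w⁻¹ := (le_mul_inv_iff₀ hw).2 hup |>.trans_eq (one_mul _)
  rw [abs_of_pos hw, Real.rpow_neg hw.le, ← Real.inv_rpow hw.le]
  gcongr
  linarith

lemma le_lintegral_symbol {α : ℝ} (hα : 0 ≤ α) {k : ℤ} (hk : k ≠ 0) :
    ENNReal.ofReal (9 / 250 * |(k : ℝ)| ^ (α - 1)) ≤
      ∫⁻ w in Ioo (-(1 : ℝ) / 2) (1 / 2),
        ENNReal.ofReal (|w| ^ (-α) * (1 - ‖avgSymbol k w‖ ^ 2)) := by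
  have hK₁ : (1 : ℝ) ≤ |(k : ℝ)| := by exact_mod_cast Int.one_le_abs hk
  set K : ℝ := |(k : ℝ)|
  have hK : 0 < K := one_pos.trans_le hK₁
  have hsub : Ioo (2 / (5 * K)) (1 / (2 * K)) ⊆ Ioo (-(1 : ℝ) / 2) (1 / 2) := fun w hw =>
    ⟨by linarith [hw.1, show 0 < 2 / (5 * K) by positivity],
      hw.2.trans_le (one_div_le_one_div_of_le two_pos (by linarith))⟩
  calc ENNReal.ofReal (9 / 250 * K ^ (α - 1))
      = ∫⁻ _ in Ioo (2 / (5 * K)) (1 / (2 * K)), ENNReal.ofReal (K ^ α * (9 / 25)) := by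
        rw [setLIntegral_const, Real.volume_Ioo, ← ENNReal.ofReal_mul (by positivity),
          Real.rpow_sub_one hK.ne']
        congr 1
        field_simp
        norm_num
    _ ≤ ∫⁻ w in Ioo (2 / (5 * K)) (1 / (2 * K)),
          ENNReal.ofReal (|w| ^ (-α) * (1 - ‖avgSymbol k w‖ ^ 2)) := by
        refine setLIntegral_mono' measurableSet_Ioo fun w hw => ENNReal.ofReal_le_ofReal ?_
        have hlow := (div_lt_iff₀ (by positivity)).1 hw.1
        have hup := (lt_div_iff₀ (by positivity)).1 hw.2
        exact le_rpow_mul_one_sub_sq_norm_avgSymbol hα (lt_trans (by positivity) hw.1)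
          (by linarith) (by linarith)
    _ ≤ _ := lintegral_mono_set hsub

lemma segAvg_fourierExp (k : ℤ) (u w : ℝ) :
    segAvg (fourierExp k) u w = avgSymbol k w * fourierExp k u := by
  simp only [avgSymbol, segAvg, fourierExp_add_right, fourierExp_zero_right, one_mul,
    mul_comm (fourierExp k u), intervalIntegral.integral_mul_const]

/-- The `j`-th component of `g`, as a complex valued function. -/
def coord (g : ℝ → Rn n) (j : Fin n) (u : ℝ) : ℂ := (g u j : ℝ)

lemma sum_sq_norm_coord (g : ℝ → Rn n) (u : ℝ) : ∑ j, ‖coord g j u‖ ^ 2 = ‖g u‖ ^ 2 := by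
  simp [EuclideanSpace.norm_sq_eq, coord]

lemma norm_coord_le (g : ℝ → Rn n) (j : Fin n) (u : ℝ) : ‖coord g j u‖ ≤ ‖g u‖ := by
  simpa [coord] using PiLp.norm_apply_le (g u) j

lemma periodic_coord {g : ℝ → Rn n} (hg : Function.Periodic g 1) (j : Fin n) :
    Function.Periodic (coord g j) 1 := fun u => by simp only [coord, hg u]

@[fun_prop] lemma continuous_coord {g : ℝ → Rn n} (hg : Continuous g) (j : Fin n) :
    Continuous (coord g j) := by
  unfold coord
  fun_prop

lemma measurable_coord {g : ℝ → Rn n} (hg : Measurable g) (j : Fin n) :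
    Measurable (coord g j) := by
  unfold coord
  fun_prop

lemma hasDerivAt_coord {g : ℝ → Rn n} {g' : Rn n} {u : ℝ} (hg : HasDerivAt g g' u) (j : Fin n) :
    HasDerivAt (coord g j) (g' j : ℝ) u :=
  HasDerivAt.ofReal_comp (f := fun u => g u j)
    ((EuclideanSpace.proj (𝕜 := ℝ) j).hasFDerivAt.comp_hasDerivAt u hg)

lemma contDiff_of_coord {g : ℝ → Rn n} {N : WithTop ℕ∞} (h : ∀ j, ContDiff ℝ N (coord g j)) :
    ContDiff ℝ N g :=
  contDiff_euclidean.2 fun j => Complex.reCLM.contDiff.comp (h j)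

lemma periodic_deriv {g : ℝ → Rn n} (hg : Function.Periodic g 1) :
    Function.Periodic (deriv g) 1 := fun u => by
  rw [← deriv_comp_add_const, funext hg]

-- Parseval's identity for `F'` and for the difference quotient of `F`.
lemma hasSum_one_sub_sq_avgSymbol_mul {F F' : ℝ → ℂ} (hF : ∀ u, HasDerivAt F (F' u) u)
    (hp : Function.Periodic F 1) (hF' : MemLp F' 2 (volume.restrict (Ioc (0 : ℝ) 1))) {w : ℝ}
    (hw : w ≠ 0) :
    HasSum (fun k => (1 - ‖avgSymbol k w‖ ^ 2) * ‖fcoeff F' k‖ ^ 2)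
      (∫ u in (0 : ℝ)..1, (‖F' u‖ ^ 2 - ‖F (u + w) - F u‖ ^ 2 / w ^ 2)) := by
  have hc : Continuous F := continuous_iff_continuousAt.2 fun u => (hF u).continuousAt
  have hF'i : IntervalIntegrable F' volume 0 1 :=
    (intervalIntegrable_iff_integrableOn_Ioc_of_le zero_le_one).2 (hF'.integrable one_le_two)
  have hF'sq : IntervalIntegrable (fun u => ‖F' u‖ ^ 2) volume 0 1 :=
    (intervalIntegrable_iff_integrableOn_Ioc_of_le zero_le_one).2
      (hF'.integrable_norm_pow two_ne_zero)
  have hdiff (k : ℤ) : fcoeff (fun u => F (u + w) - F u) k = w * avgSymbol k w * fcoeff F' k := by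
    rw [fcoeff_sub (F := fun u => F (u + w)) (by fun_prop) hc, fcoeff_comp_add_right hp,
      fcoeff_of_hasDerivAt hF hF'i hp, ← sub_one_mul, ← two_pi_mul_avgSymbol]
    ring
  have hdiffLp : MemLp (fun u => F (u + w) - F u) 2 (volume.restrict (Ioc (0 : ℝ) 1)) :=
    (memLp_two_iff_integrable_sq_norm (Continuous.aestronglyMeasurable (by fun_prop))).2
      (Continuous.integrableOn_Ioc (by fun_prop))
  have hsum := (hasSum_sq_fcoeff hF').sub ((hasSum_sq_fcoeff hdiffLp).div_const (w ^ 2))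
  rw [← intervalIntegral.integral_div, ← intervalIntegral.integral_sub hF'sq
    (Continuous.intervalIntegrable (by fun_prop) _ _)] at hsum
  refine hsum.congr_fun fun k => ?_
  rw [hdiff, norm_mul, norm_mul, Complex.norm_real, Real.norm_eq_abs, mul_pow, mul_pow, sq_abs]
  field_simp

/-- The squared Euclidean norm of the `k`-th Fourier coefficient of the vector field `g`. -/
def fcoeffSq (g : ℝ → Rn n) (k : ℤ) : ℝ := ∑ j, ‖fcoeff (coord g j) k‖ ^ 2

lemma fcoeffSq_nonneg (g : ℝ → Rn n) (k : ℤ) : 0 ≤ fcoeffSq g k :=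
  Finset.sum_nonneg fun _ _ => sq_nonneg _

lemma sq_norm_fcoeff_coord_le (g : ℝ → Rn n) (j : Fin n) (k : ℤ) :
    ‖fcoeff (coord g j) k‖ ^ 2 ≤ fcoeffSq g k :=
  Finset.single_le_sum (f := fun j => ‖fcoeff (coord g j) k‖ ^ 2) (fun _ _ => sq_nonneg _)
    (Finset.mem_univ j)

lemma PerInjective.sub_ne_zero {γ : ℝ → Rn n} (hinj : PerInjective γ) {u w : ℝ} (hw : w ≠ 0)
    (hw₁ : |w| < 1) : γ (u + w) - γ u ≠ 0 := fun h => by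
  obtain ⟨k, hk⟩ := hinj u (u + w) (sub_eq_zero.1 h).symm
  obtain rfl : w = k := by linarith
  have hk₁ : |k| < 1 := by exact_mod_cast hw₁
  exact hw (by simpa using Int.abs_lt_one_iff.1 hk₁)

lemma two_sub_sq_le_rpow_neg {t α : ℝ} (ht : 0 < t) (ht₁ : t ≤ 1) (hα : 2 ≤ α) :
    2 - t ^ 2 ≤ t ^ (-α) := by
  calc 2 - t ^ 2 ≤ (t ^ 2)⁻¹ := by
        rw [← one_div, le_div_iff₀ (by positivity)]
        nlinarith [sq_nonneg (t ^ 2 - 1)]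
    _ = t ^ (-(2 : ℝ)) := by rw [Real.rpow_neg ht.le, Real.rpow_two]
    _ ≤ t ^ (-α) := Real.rpow_le_rpow_of_exponent_ge ht ht₁ (by linarith)

namespace ArcLengthParam

variable {γ : ℝ → Rn n}

lemma differentiable (h : ArcLengthParam γ) : Differentiable ℝ γ := fun u => by
  by_contra hu
  simpa [deriv_zero_of_not_differentiableAt hu] using h u

lemma norm_sub_le (h : ArcLengthParam γ) (u w : ℝ) : ‖γ (u + w) - γ u‖ ≤ |w| := by
  simpa using Convex.norm_image_sub_le_of_norm_deriv_le (𝕜 := ℝ) (x := u) (y := u + w)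
    (fun x _ => h.differentiable x) (fun x _ => (h x).le) convex_univ (mem_univ _) (mem_univ _)

lemma sq_div_sq_le_one (h : ArcLengthParam γ) (u w : ℝ) : ‖γ (u + w) - γ u‖ ^ 2 / w ^ 2 ≤ 1 :=
  div_le_one_of_le₀ (by simpa using pow_le_pow_left₀ (norm_nonneg _) (h.norm_sub_le u w) 2)
    (sq_nonneg w)

lemma idist_eq (h : ArcLengthParam γ) {u w : ℝ} (hw : |w| ≤ 1 / 2) : idist γ u w = |w| := by
  simp [idist, arcLen, curveLen, h _]
  linarith

lemma le_ohIntegrand (h : ArcLengthParam γ) (hinj : PerInjective γ) {α : ℝ} (hα : 2 ≤ α) {u w : ℝ}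
    (hw : |w| ≤ 1 / 2) :
    |w| ^ (-α) * (1 - ‖γ (u + w) - γ u‖ ^ 2 / w ^ 2) ≤ ohIntegrand α γ u w := by
  simp only [ohIntegrand, h.idist_eq hw, h _, mul_one]
  rcases eq_or_ne w 0 with rfl | hw₀
  · simp [Real.zero_rpow (show -α ≠ 0 by linarith)]
  have hwpos : 0 < |w| := abs_pos.2 hw₀
  have hd : 0 < ‖γ (u + w) - γ u‖ := norm_pos_iff.2 (hinj.sub_ne_zero hw₀ (by linarith))
  set t : ℝ := ‖γ (u + w) - γ u‖ / |w|
  have ht₀ : 0 < t := by positivity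
  have hdt : ‖γ (u + w) - γ u‖ = |w| * t := (mul_div_cancel₀ _ hwpos.ne').symm
  have ht₁ : t ≤ 1 := (div_le_one hwpos).2 (h.norm_sub_le u w)
  rw [hdt, Real.mul_rpow hwpos.le ht₀.le, mul_pow, sq_abs, mul_div_cancel_left₀ _ (by positivity),
    one_div, one_div, mul_inv, ← Real.rpow_neg hwpos.le, ← Real.rpow_neg ht₀.le, ← mul_sub_one]
  refine mul_le_mul_of_nonneg_left ?_ (by positivity)
  linarith [two_sub_sq_le_rpow_neg ht₀ ht₁ hα]

lemma hasDerivAt_coord (h : ArcLengthParam γ) (j : Fin n) (u : ℝ) :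
    HasDerivAt (coord γ j) (coord (deriv γ) j u) u :=
  _root_.hasDerivAt_coord (h.differentiable u).hasDerivAt j

lemma memLp_coord_deriv (h : ArcLengthParam γ) (j : Fin n) :
    MemLp (coord (deriv γ) j) 2 (volume.restrict (Ioc (0 : ℝ) 1)) :=
  MemLp.of_bound (measurable_coord (measurable_deriv γ) j).aestronglyMeasurable 1
    (Eventually.of_forall fun u => (norm_coord_le _ _ _).trans (h u).le)

lemma fcoeff_coord_deriv (h : ArcLengthParam γ) (hper : Function.Periodic γ 1) (j : Fin n)
    (k : ℤ) : fcoeff (coord (deriv γ) j) k = 2 * Real.pi * Complex.I * k * fcoeff (coord γ j) k :=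
  fcoeff_of_hasDerivAt (h.hasDerivAt_coord j)
    ((intervalIntegrable_iff_integrableOn_Ioc_of_le zero_le_one).2
      ((h.memLp_coord_deriv j).integrable one_le_two)) (periodic_coord hper j) k

lemma hasSum_symbol (h : ArcLengthParam γ) (hper : Function.Periodic γ 1) {w : ℝ} (hw : w ≠ 0) :
    HasSum (fun k => (1 - ‖avgSymbol k w‖ ^ 2) * fcoeffSq (deriv γ) k)
      (∫ u in (0 : ℝ)..1, (1 - ‖γ (u + w) - γ u‖ ^ 2 / w ^ 2)) := by
  have hc : Continuous γ := h.differentiable.continuous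
  have hsum := hasSum_sum (s := Finset.univ) fun j _ => hasSum_one_sub_sq_avgSymbol_mul
    (h.hasDerivAt_coord j) (periodic_coord hper j) (h.memLp_coord_deriv j) hw
  simp only [← Finset.mul_sum] at hsum
  rw [← intervalIntegral.integral_finsetSum fun j _ => ?_] at hsum
  · simp only [fcoeffSq]
    convert hsum using 3 with u
    have hdiff := sum_sq_norm_coord (fun u => γ (u + w) - γ u) u
    have hcoord (j : Fin n) : coord (fun u => γ (u + w) - γ u) j u =
      coord γ j (u + w) - coord γ j u := by simp [coord]
    simp only [hcoord] at hdiff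
    rw [Finset.sum_sub_distrib, sum_sq_norm_coord, ← Finset.sum_div, hdiff, h u, one_pow]
  · exact ((intervalIntegrable_iff_integrableOn_Ioc_of_le zero_le_one).2
      ((h.memLp_coord_deriv j).integrable_norm_pow two_ne_zero)).sub
      (Continuous.intervalIntegrable (by fun_prop) _ _)

lemma lintegral_lintegral_le_oharaE (h : ArcLengthParam γ) (hinj : PerInjective γ) {α : ℝ}
    (hα : 2 ≤ α) :
    ∫⁻ w in Ioo (-(1 : ℝ) / 2) (1 / 2), ∫⁻ u in Ioc (0 : ℝ) 1,
        ENNReal.ofReal (|w| ^ (-α) * (1 - ‖γ (u + w) - γ u‖ ^ 2 / w ^ 2)) ≤ oharaE α γ := by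
  have hc : Continuous γ := h.differentiable.continuous
  rw [lintegral_lintegral_swap (Measurable.aemeasurable (by unfold Function.uncurry; fun_prop))]
  refine lintegral_mono fun u => setLIntegral_mono' measurableSet_Ioo fun w hw => ?_
  exact ENNReal.ofReal_le_ofReal
    (h.le_ohIntegrand hinj hα (abs_le.2 ⟨by linarith [hw.1], hw.2.le⟩))

lemma tsum_symbol_eq_lintegral (h : ArcLengthParam γ) (hper : Function.Periodic γ 1) {α w : ℝ}
    (hw : w ≠ 0) :
    ∑' k, ENNReal.ofReal (fcoeffSq (deriv γ) k) *
        ENNReal.ofReal (|w| ^ (-α) * (1 - ‖avgSymbol k w‖ ^ 2)) =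
      ∫⁻ u in Ioc (0 : ℝ) 1,
        ENNReal.ofReal (|w| ^ (-α) * (1 - ‖γ (u + w) - γ u‖ ^ 2 / w ^ 2)) := by
  have hc : Continuous γ := h.differentiable.continuous
  have hsum := (h.hasSum_symbol hper hw).mul_left (|w| ^ (-α))
  have hterm (k : ℤ) : 0 ≤ |w| ^ (-α) * ((1 - ‖avgSymbol k w‖ ^ 2) * fcoeffSq (deriv γ) k) :=
    mul_nonneg (by positivity)
      (mul_nonneg (one_sub_sq_norm_avgSymbol_nonneg k w) (fcoeffSq_nonneg _ k))
  simp only [← ENNReal.ofReal_mul (fcoeffSq_nonneg _ _), mul_comm (fcoeffSq _ _), mul_assoc]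
  rw [← ENNReal.ofReal_tsum_of_nonneg hterm hsum.summable, hsum.tsum_eq,
    ← intervalIntegral.integral_const_mul, intervalIntegral.integral_of_le zero_le_one,
    ofReal_integral_eq_lintegral_ofReal (Continuous.integrableOn_Ioc (by fun_prop))]
  exact Eventually.of_forall fun u =>
    mul_nonneg (by positivity) (sub_nonneg.2 (h.sq_div_sq_le_one u w))

lemma tsum_ofReal_le_oharaE (h : ArcLengthParam γ) (hper : Function.Periodic γ 1)
    (hinj : PerInjective γ) {α : ℝ} (hα : 2 ≤ α) :
    ∑' k : ℤ, ENNReal.ofReal (fcoeffSq (deriv γ) k * (9 / 250 * |(k : ℝ)| ^ (α - 1))) ≤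
      oharaE α γ := by
  calc ∑' k : ℤ, ENNReal.ofReal (fcoeffSq (deriv γ) k * (9 / 250 * |(k : ℝ)| ^ (α - 1)))
      ≤ ∑' k, ∫⁻ w in Ioo (-(1 : ℝ) / 2) (1 / 2), ENNReal.ofReal (fcoeffSq (deriv γ) k) *
          ENNReal.ofReal (|w| ^ (-α) * (1 - ‖avgSymbol k w‖ ^ 2)) := by
        refine ENNReal.tsum_le_tsum fun k => ?_
        rw [lintegral_const_mul' _ _ ENNReal.ofReal_ne_top,
          ENNReal.ofReal_mul (fcoeffSq_nonneg _ k)]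
        rcases eq_or_ne k 0 with rfl | hk
        · simp [Real.zero_rpow (show α - 1 ≠ 0 by linarith)]
        · gcongr
          exact le_lintegral_symbol (by linarith) hk
    _ = ∫⁻ w in Ioo (-(1 : ℝ) / 2) (1 / 2), ∑' k, ENNReal.ofReal (fcoeffSq (deriv γ) k) *
          ENNReal.ofReal (|w| ^ (-α) * (1 - ‖avgSymbol k w‖ ^ 2)) :=
        (lintegral_tsum fun k => Measurable.aemeasurable (by fun_prop)).symm
    _ ≤ ∫⁻ w in Ioo (-(1 : ℝ) / 2) (1 / 2), ∫⁻ u in Ioc (0 : ℝ) 1,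
          ENNReal.ofReal (|w| ^ (-α) * (1 - ‖γ (u + w) - γ u‖ ^ 2 / w ^ 2)) := by
        refine lintegral_mono fun w => ?_
        rcases eq_or_ne w 0 with rfl | hw
        · simp [Real.zero_rpow (show -α ≠ 0 by linarith)]
        · exact (h.tsum_symbol_eq_lintegral hper hw).le
    _ ≤ oharaE α γ := h.lintegral_lintegral_le_oharaE hinj hα

lemma summable_rpow_mul_fcoeffSq (h : ArcLengthParam γ) (hper : Function.Periodic γ 1)
    (hinj : PerInjective γ) {α : ℝ} (hα : 2 ≤ α) (hfin : oharaE α γ < ⊤) :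
    Summable fun k : ℤ => |(k : ℝ)| ^ (α - 1) * fcoeffSq (deriv γ) k := by
  have hsum := ENNReal.summable_toReal
    ((h.tsum_ofReal_le_oharaE hper hinj hα).trans_lt hfin).ne
  refine (hsum.mul_left (250 / 9)).congr fun k => ?_
  rw [ENNReal.toReal_ofReal (mul_nonneg (fcoeffSq_nonneg _ k) (by positivity))]
  ring

-- Young's inequality `x ≤ P x² + 1 / P` with `P = |k| ^ (α - 1)`.
lemma norm_fcoeff_coord_deriv_le (γ : ℝ → Rn n) (α : ℝ) (j : Fin n) {k : ℤ} (hk : k ≠ 0) :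
    ‖fcoeff (coord (deriv γ) j) k‖ ≤
      |(k : ℝ)| ^ (α - 1) * fcoeffSq (deriv γ) k + 1 / |(k : ℝ)| ^ (α - 1) := by
  have hP : 0 < |(k : ℝ)| ^ (α - 1) :=
    Real.rpow_pos_of_pos (abs_pos.2 (Int.cast_ne_zero.2 hk)) _
  set x := ‖fcoeff (coord (deriv γ) j) k‖
  set P := |(k : ℝ)| ^ (α - 1)
  have hyoung : x ≤ P * x ^ 2 + 1 / P := by
    have hsq := mul_nonneg (one_div_pos.2 hP).le (sq_nonneg (P * x - 1))
    have hx : 0 ≤ x := norm_nonneg _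
    have hexpand : 1 / P * (P * x - 1) ^ 2 = P * x ^ 2 - 2 * x + 1 / P := by
      field_simp
      ring
    linarith
  exact hyoung.trans (by gcongr; exact sq_norm_fcoeff_coord_le _ j k)

lemma contDiff_one (h : ArcLengthParam γ) (hper : Function.Periodic γ 1)
    (hinj : PerInjective γ) {α : ℝ} (hα : 2 < α) (hfin : oharaE α γ < ⊤) : ContDiff ℝ 1 γ := by
  refine contDiff_of_coord fun j => ?_
  refine contDiff_of_summable_fcoeff (N := 1) (continuous_coord h.differentiable.continuous j)
    (periodic_coord hper j) ?_
  have henergy := h.summable_rpow_mul_fcoeffSq hper hinj hα.le hfin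
  have hzeta : Summable fun k : ℤ => 1 / |(k : ℝ)| ^ (α - 1) := by
    simpa using (Real.summable_one_div_int_add_rpow 0 (α - 1)).2 (by linarith)
  rw [← Set.Finite.summable_compl_iff (Set.finite_singleton (0 : ℤ))] at henergy hzeta ⊢
  refine (henergy.add hzeta).of_nonneg_of_le
    (fun k => by simp only [Function.comp]; positivity) fun ⟨k, hk⟩ => ?_
  refine le_trans ?_ (norm_fcoeff_coord_deriv_le γ α j hk)
  have hk₁ : (1 : ℝ) ≤ |(k : ℝ)| := by exact_mod_cast Int.one_le_abs hk
  simp only [Function.comp, pow_one, h.fcoeff_coord_deriv hper, norm_mul, Complex.norm_ofNat,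
    Complex.norm_real, Real.norm_eq_abs, Complex.norm_I, Complex.norm_intCast,
    abs_of_pos Real.pi_pos, mul_one]
  gcongr
  nlinarith [Real.pi_gt_three]

end ArcLengthParam

/-- A continuous closed field of unit vectors whose averages over arcs of length at most `1 / 2`
are bounded away from zero; `m` is a lower bound for their squared norms. -/
structure IsTangent (g : ℝ → Rn n) (m : ℝ) : Prop where
  cont : Continuous g
  per : Function.Periodic g 1
  norm_eq : ∀ u, ‖g u‖ = 1
  pos : 0 < m
  le : ∀ u w : ℝ, |w| ≤ 1 / 2 → m ≤ ‖segAvg g u w‖ ^ 2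

lemma ArcLengthParam.exists_isTangent {γ : ℝ → Rn n} (h : ArcLengthParam γ)
    (hper : Function.Periodic γ 1) (hinj : PerInjective γ) (hγ : ContDiff ℝ 1 γ) :
    ∃ m, IsTangent (deriv γ) m := by
  have hc : Continuous (deriv γ) := hγ.continuous_deriv le_rfl
  have hpos (u w : ℝ) (hw : |w| ≤ 1 / 2) : 0 < ‖segAvg (deriv γ) u w‖ ^ 2 := by
    rcases eq_or_ne w 0 with rfl | hw₀
    · simp [h u]
    · have hne := hinj.sub_ne_zero (u := u) hw₀ (by linarith)
      rw [← smul_segAvg (fun u => (h.differentiable u).hasDerivAt) hc u w] at hne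
      have := right_ne_zero_of_smul hne
      positivity
  obtain ⟨x, hx, hmin⟩ := (isCompact_Icc.prod isCompact_Icc).exists_isMinOn
    (s := Icc (0 : ℝ) 1 ×ˢ Icc (-(1 / 2) : ℝ) (1 / 2)) ⟨(0, 0), by norm_num⟩
    (f := fun x : ℝ × ℝ => ‖segAvg (deriv γ) x.1 x.2‖ ^ 2) (Continuous.continuousOn (by fun_prop))
  refine ⟨‖segAvg (deriv γ) x.1 x.2‖ ^ 2, hc, periodic_deriv hper, h,
    hpos _ _ (abs_le.2 hx.2), fun u w hw => ?_⟩
  have hfract : segAvg (deriv γ) u w = segAvg (deriv γ) (Int.fract u) w := by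
    simpa using ((periodic_segAvg (periodic_deriv hper) w).sub_int_mul_eq ⌊u⌋ (x := u)).symm
  rw [hfract]
  exact hmin (a := (Int.fract u, w)) ⟨⟨Int.fract_nonneg _, (Int.fract_lt_one _).le⟩, abs_le.1 hw⟩

section SegVar

variable {E : Type*} [NormedAddCommGroup E] [InnerProductSpace ℝ E] {g v : ℝ → E}

/-- The variance of `g` over the segment from `u` to `u + w`. -/
def segVar (g : ℝ → E) (u w : ℝ) : ℝ := segAvg (fun x => ‖g x‖ ^ 2) u w - ‖segAvg g u w‖ ^ 2

/-- The covariance of `g` and `v` over the segment from `u` to `u + w`. -/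
def segCov (g v : ℝ → E) (u w : ℝ) : ℝ :=
  segAvg (fun x => ⟪g x, v x⟫) u w - ⟪segAvg g u w, segAvg v u w⟫

lemma segAvg_add_smul (hg : Continuous g) (hv : Continuous v) (τ u w : ℝ) :
    segAvg (fun x => g x + τ • v x) u w = segAvg g u w + τ • segAvg v u w := by
  unfold segAvg
  rw [intervalIntegral.integral_add (Continuous.intervalIntegrable (by fun_prop) _ _)
    (Continuous.intervalIntegrable (by fun_prop) _ _), intervalIntegral.integral_smul]

lemma segAvg_nonneg {φ : ℝ → ℝ} (h : ∀ x, 0 ≤ φ x) (u w : ℝ) : 0 ≤ segAvg φ u w :=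
  intervalIntegral.integral_nonneg zero_le_one fun _ _ => h _

lemma norm_add_smul_sq (a b : E) (τ : ℝ) :
    ‖a + τ • b‖ ^ 2 = ‖a‖ ^ 2 + 2 * τ * ⟪a, b⟫ + τ ^ 2 * ‖b‖ ^ 2 := by
  rw [norm_add_sq_real, inner_smul_right, norm_smul, mul_pow, Real.norm_eq_abs, sq_abs]
  ring

lemma segAvg_norm_add_smul_sq (hg : Continuous g) (hv : Continuous v) (τ u w : ℝ) :
    segAvg (fun x => ‖g x + τ • v x‖ ^ 2) u w = segAvg (fun x => ‖g x‖ ^ 2) u w +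
      2 * τ * segAvg (fun x => ⟪g x, v x⟫) u w + τ ^ 2 * segAvg (fun x => ‖v x‖ ^ 2) u w := by
  simp only [norm_add_smul_sq]
  unfold segAvg
  rw [intervalIntegral.integral_add, intervalIntegral.integral_add,
    intervalIntegral.integral_const_mul, intervalIntegral.integral_const_mul]
  all_goals exact Continuous.intervalIntegrable (by fun_prop) _ _

lemma segVar_add_smul (hg : Continuous g) (hv : Continuous v) (τ u w : ℝ) :
    segVar (fun x => g x + τ • v x) u w =
      segVar g u w + 2 * τ * segCov g v u w + τ ^ 2 * segVar v u w := by
  rw [segVar, segAvg_norm_add_smul_sq hg hv, segAvg_add_smul hg hv, norm_add_smul_sq, segVar,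
    segVar, segCov]
  ring

lemma inner_segAvg [CompleteSpace E] (hg : Continuous g) (a : E) (u w : ℝ) :
    ⟪segAvg g u w, a⟫ = segAvg (fun x => ⟪g x, a⟫) u w := by
  have h := (innerSL ℝ a).intervalIntegral_comp_comm (μ := volume) (a := 0) (b := 1)
    (f := fun s => g (u + s * w)) (Continuous.intervalIntegrable (by fun_prop) _ _)
  simp only [innerSL_apply_apply] at h
  simp only [segAvg, real_inner_comm a]
  exact h.symm

lemma segAvg_norm_sub_sq [CompleteSpace E] (hg : Continuous g) (a : E) (u w : ℝ) :
    segAvg (fun x => ‖g x - a‖ ^ 2) u w = segVar g u w + ‖segAvg g u w - a‖ ^ 2 := by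
  have h := segAvg_norm_add_smul_sq hg (continuous_const (y := a)) (-1) u w
  simp only [← sub_eq_add_neg, neg_smul, one_smul, ← inner_segAvg hg] at h
  rw [h, segVar, norm_sub_sq_real]
  simp [segAvg]
  ring

lemma segVar_nonneg [CompleteSpace E] (hg : Continuous g) (u w : ℝ) : 0 ≤ segVar g u w := by
  have h := segAvg_norm_sub_sq hg (segAvg g u w) u w
  rw [sub_self, norm_zero, zero_pow two_ne_zero, add_zero] at h
  exact h ▸ segAvg_nonneg (fun x => sq_nonneg _) u w

lemma norm_segAvg_sq_le [CompleteSpace E] (hg : Continuous g) (u w : ℝ) :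
    ‖segAvg g u w‖ ^ 2 ≤ segAvg (fun x => ‖g x‖ ^ 2) u w :=
  sub_nonneg.1 (segVar_nonneg hg u w)

lemma segVar_le_of_lipschitz [CompleteSpace E] (hv : Continuous v) {L : ℝ}
    (hL : ∀ x y, ‖v x - v y‖ ≤ L * |x - y|) (u w : ℝ) : segVar v u w ≤ L ^ 2 * w ^ 2 := by
  have hpoint (s : ℝ) (hs : s ∈ uIoc 0 1) : ‖‖v (u + s * w) - v u‖ ^ 2‖ ≤ L ^ 2 * w ^ 2 := by
    rw [uIoc_of_le zero_le_one] at hs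
    have hle := hL (u + s * w) u
    rw [add_sub_cancel_left] at hle
    calc ‖‖v (u + s * w) - v u‖ ^ 2‖ = ‖v (u + s * w) - v u‖ ^ 2 := by simp
      _ ≤ (L * |s * w|) ^ 2 := by gcongr
      _ = L ^ 2 * (s ^ 2 * w ^ 2) := by rw [mul_pow, sq_abs, mul_pow]
      _ ≤ L ^ 2 * w ^ 2 := by
        gcongr
        exact mul_le_of_le_one_left (sq_nonneg w) (pow_le_one₀ hs.1.le hs.2)
  calc segVar v u w ≤ segAvg (fun x => ‖v x - v u‖ ^ 2) u w := by
        rw [segAvg_norm_sub_sq hv]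
        exact le_add_of_nonneg_right (sq_nonneg _)
    _ ≤ L ^ 2 * w ^ 2 := (le_abs_self _).trans <| by
        simpa [segAvg] using intervalIntegral.norm_integral_le_of_norm_le_const hpoint

lemma two_mul_abs_segCov_le [CompleteSpace E] (hg : Continuous g) (hv : Continuous v) (u w : ℝ) :
    2 * |segCov g v u w| ≤ segVar g u w + segVar v u w := by
  have hpos := segVar_nonneg (g := fun x => g x + (1 : ℝ) • v x) (by fun_prop) u w
  have hneg := segVar_nonneg (g := fun x => g x + (-1 : ℝ) • v x) (by fun_prop) u w
  rw [segVar_add_smul hg hv] at hpos hneg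
  rcases abs_cases (segCov g v u w) with ⟨h, -⟩ | ⟨h, -⟩ <;> rw [h] <;> linarith

lemma segVar_add_smul_le [CompleteSpace E] (hg : Continuous g) (hv : Continuous v) {τ : ℝ}
    (hτ : |τ| ≤ 1) (u w : ℝ) :
    segVar (fun x => g x + τ • v x) u w ≤ 2 * (segVar g u w + segVar v u w) := by
  have hcov : τ * segCov g v u w ≤ |segCov g v u w| := (le_abs_self _).trans <| by
    rw [abs_mul]
    exact mul_le_of_le_one_left (abs_nonneg _) hτ
  have hvar : τ ^ 2 * segVar v u w ≤ segVar v u w :=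
    mul_le_of_le_one_left (segVar_nonneg hv u w) ((sq_le_one_iff_abs_le_one τ).2 hτ)
  rw [segVar_add_smul hg hv]
  linarith [two_mul_abs_segCov_le hg hv u w]

end SegVar

lemma segAvg_pow_sq_le {φ : ℝ → ℝ} (hφ : Continuous φ) (u w : ℝ) :
    segAvg φ u w ^ 2 ≤ segAvg (fun x => φ x ^ 2) u w := by
  simpa [Real.norm_eq_abs, sq_abs] using norm_segAvg_sq_le hφ u w

lemma abs_segAvg_sub_one_le {φ : ℝ → ℝ} (hφ : Continuous φ) {κ : ℝ} (h : ∀ x, |φ x - 1| ≤ κ)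
    (u w : ℝ) : |segAvg φ u w - 1| ≤ κ := by
  have hsub : segAvg (fun x => φ x - 1) u w = segAvg φ u w - 1 := by
    unfold segAvg
    rw [intervalIntegral.integral_sub (Continuous.intervalIntegrable (by fun_prop) _ _)
      (Continuous.intervalIntegrable (by fun_prop) _ _)]
    simp
  exact hsub ▸ norm_segAvg_le (g := fun x => φ x - 1) h u w

lemma mul_segAvg_eq_integral {φ : ℝ → ℝ} (hφ : Continuous φ) (u w : ℝ) :
    w * segAvg φ u w = ∫ θ in u..(u + w), φ θ := by
  have h := smul_segAvg (γ := fun x => ∫ θ in (0 : ℝ)..x, φ θ) (g := φ)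
    (fun x => (hφ.integral_hasStrictDerivAt 0 x).hasDerivAt) hφ u w
  rw [smul_eq_mul] at h
  rw [h, intervalIntegral.integral_interval_sub_left] <;> exact hφ.intervalIntegrable _ _

lemma integrableOn_abs_rpow {r : ℝ} (hr : -1 < r) :
    IntegrableOn (fun w : ℝ => |w| ^ r) (Ioo (-(1 : ℝ) / 2) (1 / 2)) := by
  have hright : IntervalIntegrable (fun w : ℝ => |w| ^ r) volume 0 (1 / 2) :=
    (intervalIntegral.intervalIntegrable_rpow' hr).congr fun x hx => by
      rw [uIoc_of_le (by norm_num)] at hx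
      simp only [abs_of_pos hx.1]
  have hleft : IntervalIntegrable (fun w : ℝ => |w| ^ r) volume (-(1 / 2)) 0 := by
    simpa using (hright.comp_sub_left 0).symm
  rw [neg_div]
  exact ((intervalIntegrable_iff_integrableOn_Ioc_of_le (by norm_num)).1
    (hleft.trans hright)).mono_set Ioo_subset_Ioc_self

lemma one_div_mul_rpow_eq {a t α : ℝ} (ha : 0 ≤ a) (ht : 0 ≤ t) :
    1 / (a * t) ^ α = a ^ (-α) * (t ^ 2) ^ (-(α / 2)) := by
  rw [Real.mul_rpow ha ht, one_div, mul_inv, ← Real.rpow_neg ha, ← Real.rpow_neg ht,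
    ← Real.rpow_natCast t 2, ← Real.rpow_mul ht]
  congr 2
  push_cast
  ring

/-- A majorant of the integrand of the O'Hara energy of a nearly unit speed curve with velocity `G`,
exact for unit speed. Unlike `ohIntegrand` it depends smoothly on `G`. -/
def energyDensity (α : ℝ) (G : ℝ → Rn n) (x : ℝ × ℝ) : ℝ :=
  |x.2| ^ (-α) * ((‖segAvg G x.1 x.2‖ ^ 2) ^ (-(α / 2)) -
    (segAvg (fun y => ‖G y‖ ^ 2) x.1 x.2) ^ (-(α / 2))) *
      ((‖G x.1‖ ^ 2 + ‖G (x.1 + x.2)‖ ^ 2) / 2)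

/-- The derivative of `energyDensity` at `G` in the direction `v`. -/
def energyVariation (α : ℝ) (G v : ℝ → Rn n) (x : ℝ × ℝ) : ℝ :=
  |x.2| ^ (-α) *
    (-α * ((‖segAvg G x.1 x.2‖ ^ 2) ^ (-(α / 2) - 1) * ⟪segAvg G x.1 x.2, segAvg v x.1 x.2⟫ -
        (segAvg (fun y => ‖G y‖ ^ 2) x.1 x.2) ^ (-(α / 2) - 1) *
          segAvg (fun y => ⟪G y, v y⟫) x.1 x.2) * ((‖G x.1‖ ^ 2 + ‖G (x.1 + x.2)‖ ^ 2) / 2) +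
      ((‖segAvg G x.1 x.2‖ ^ 2) ^ (-(α / 2)) -
        (segAvg (fun y => ‖G y‖ ^ 2) x.1 x.2) ^ (-(α / 2))) *
          (⟪G x.1, v x.1⟫ + ⟪G (x.1 + x.2), v (x.1 + x.2)⟫))

lemma measurable_segAvg {E : Type*} [NormedAddCommGroup E] [NormedSpace ℝ E] [MeasurableSpace E]
    [BorelSpace E] {g : ℝ → E} (hg : Continuous g) :
    Measurable fun x : ℝ × ℝ => segAvg g x.1 x.2 :=
  (continuous_segAvg hg continuous_fst continuous_snd).measurable

lemma measurable_energyDensity {G : ℝ → Rn n} (hG : Continuous G) (α : ℝ) :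
    Measurable (energyDensity α G) := by
  have := measurable_segAvg hG
  have := measurable_segAvg (g := fun y => ‖G y‖ ^ 2) (by fun_prop)
  have := hG.measurable
  unfold energyDensity
  fun_prop

lemma measurable_energyVariation {G v : ℝ → Rn n} (hG : Continuous G) (hv : Continuous v) (α : ℝ) :
    Measurable (energyVariation α G v) := by
  have := measurable_segAvg hG
  have := measurable_segAvg hv
  have := measurable_segAvg (g := fun y => ‖G y‖ ^ 2) (by fun_prop)
  have := measurable_segAvg (g := fun y => ⟪G y, v y⟫) (by fun_prop)
  have := hG.measurable
  have := hv.measurable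
  unfold energyVariation
  fun_prop

lemma energyDensity_nonneg {G : ℝ → Rn n} (hG : Continuous G) {α : ℝ} (hα : 0 ≤ α) {u w : ℝ}
    (hpos : 0 < ‖segAvg G u w‖ ^ 2) : 0 ≤ energyDensity α G (u, w) :=
  mul_nonneg (mul_nonneg (by positivity) (sub_nonneg.2 (Real.rpow_le_rpow_of_nonpos hpos
    (norm_segAvg_sq_le hG u w) (by linarith)))) (by positivity)

lemma hasDerivAt_norm_add_smul_sq {E : Type*} [NormedAddCommGroup E] [InnerProductSpace ℝ E]
    (a b : E) (τ : ℝ) :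
    HasDerivAt (fun τ : ℝ => ‖a + τ • b‖ ^ 2) (2 * ⟪a + τ • b, b⟫) τ := by
  simpa using (((hasDerivAt_id τ).smul_const b).const_add a).norm_sq

lemma hasDerivAt_segAvg_norm_add_smul_sq {E : Type*} [NormedAddCommGroup E] [InnerProductSpace ℝ E]
    {g v : ℝ → E} (hg : Continuous g) (hv : Continuous v) (u w τ : ℝ) :
    HasDerivAt (fun τ : ℝ => segAvg (fun y => ‖g y + τ • v y‖ ^ 2) u w)
      (2 * segAvg (fun y => ⟪g y + τ • v y, v y⟫) u w) τ := by
  have hinner : segAvg (fun y => ⟪g y + τ • v y, v y⟫) u w =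
      segAvg (fun y => ⟪g y, v y⟫) u w + τ * segAvg (fun y => ‖v y‖ ^ 2) u w := by
    simpa only [inner_add_left, real_inner_smul_left, real_inner_self_eq_norm_sq,
      smul_eq_mul] using
      segAvg_add_smul (g := fun y => ⟪g y, v y⟫) (v := fun y => ‖v y‖ ^ 2) (by fun_prop)
        (by fun_prop) τ u w
  simp only [segAvg_norm_add_smul_sq hg hv]
  have hlin := ((hasDerivAt_id τ).const_mul 2).mul_const (segAvg (fun y => ⟪g y, v y⟫) u w)
  have hquad := (hasDerivAt_pow 2 τ).mul_const (segAvg (fun y => ‖v y‖ ^ 2) u w)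
  refine ((hlin.const_add _).add hquad).congr_deriv ?_
  rw [hinner]
  simp
  ring

lemma hasDerivAt_energyDensity {G v : ℝ → Rn n} (hG : Continuous G) (hv : Continuous v) (α : ℝ)
    {u w τ : ℝ} (hpos : 0 < ‖segAvg (fun y => G y + τ • v y) u w‖ ^ 2) :
    HasDerivAt (fun τ => energyDensity α (fun y => G y + τ • v y) (u, w))
      (energyVariation α (fun y => G y + τ • v y) v (u, w)) τ := by
  have hpos' := hpos.trans_le (norm_segAvg_sq_le (g := fun y => G y + τ • v y) (by fun_prop) u w)
  have hchord := hasDerivAt_norm_add_smul_sq (segAvg G u w) (segAvg v u w) τ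
  simp only [← segAvg_add_smul hG hv] at hchord
  have harc := hasDerivAt_segAvg_norm_add_smul_sq hG hv u w τ
  have hspeed := ((hasDerivAt_norm_add_smul_sq (G u) (v u) τ).add
    (hasDerivAt_norm_add_smul_sq (G (u + w)) (v (u + w)) τ)).div_const 2
  refine ((((hchord.rpow_const (p := -(α / 2)) (.inl hpos.ne')).sub
    (harc.rpow_const (p := -(α / 2)) (.inl hpos'.ne'))).const_mul (|w| ^ (-α))).mul
      hspeed).congr_deriv ?_
  simp only [energyVariation, Pi.sub_apply, Pi.add_apply]
  ring

lemma abs_rpow_neg_sub_le {q μ : ℝ} (hq : 0 ≤ q) (hμ : 0 < μ) {x y : ℝ} (hx : μ ≤ x) (hy : μ ≤ y) :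
    |x ^ (-q) - y ^ (-q)| ≤ q * μ ^ (-q - 1) * |x - y| := by
  refine Convex.norm_image_sub_le_of_norm_hasDerivWithin_le (f := fun x : ℝ => x ^ (-q))
    (f' := fun x => -q * x ^ (-q - 1)) (s := Ici μ) (fun z hz => ?_) (fun z hz => ?_)
    (convex_Ici μ) hy hx
  · exact (Real.hasDerivAt_rpow_const (.inl (hμ.trans_le hz).ne')).hasDerivWithinAt
  · have : 0 < z := hμ.trans_le hz
    rw [norm_mul, norm_neg, Real.norm_of_nonneg hq, Real.norm_of_nonneg (by positivity)]
    exact mul_le_mul_of_nonneg_left (Real.rpow_le_rpow_of_nonpos hμ hz (by linarith)) hq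

lemma abs_rpow_neg_mul_sub_le {q μ : ℝ} (hq : 0 ≤ q) (hμ : 0 < μ) {x y a b M Z : ℝ} (hx : μ ≤ x)
    (hy : μ ≤ y) (ha : |a| ≤ M) (hxy : |x - y| ≤ Z) (hab : |a - b| ≤ Z) :
    |x ^ (-q) * a - y ^ (-q) * b| ≤ (q * μ ^ (-q - 1) * M + μ ^ (-q)) * Z := by
  have hy₀ : 0 ≤ y ^ (-q) := Real.rpow_nonneg (hμ.le.trans hy) _
  have hyμ : y ^ (-q) ≤ μ ^ (-q) := Real.rpow_le_rpow_of_nonpos hμ hy (by linarith)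
  have : 0 ≤ M := (abs_nonneg a).trans ha
  have hZ : 0 ≤ Z := (abs_nonneg _).trans hxy
  calc |x ^ (-q) * a - y ^ (-q) * b| = |(x ^ (-q) - y ^ (-q)) * a + y ^ (-q) * (a - b)| := by
        congr 1; ring
    _ ≤ |x ^ (-q) - y ^ (-q)| * |a| + y ^ (-q) * |a - b| := by
        rw [← abs_mul, ← abs_of_nonneg hy₀, ← abs_mul, abs_of_nonneg hy₀]
        exact abs_add_le _ _
    _ ≤ q * μ ^ (-q - 1) * Z * M + μ ^ (-q) * Z := by
        gcongr
        exact (abs_rpow_neg_sub_le hq hμ hx hy).trans (by gcongr)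
    _ = _ := by ring

lemma abs_inner_le_of_norm_le {E : Type*} [NormedAddCommGroup E] [InnerProductSpace ℝ E] {a b : E}
    {A B : ℝ} (ha : ‖a‖ ≤ A) (hb : ‖b‖ ≤ B) : |⟪a, b⟫| ≤ A * B :=
  (abs_real_inner_le_norm a b).trans
    (mul_le_mul ha hb (norm_nonneg b) ((norm_nonneg a).trans ha))

/-- Both differences of powers in `energyVariation` are controlled by variances, since the two bases
differ by `segVar G` and their derivatives by twice `segCov G v`. -/
lemma exists_abs_energyVariation_le {α μ : ℝ} (hα : 0 ≤ α) (hμ : 0 < μ) (V : ℝ) :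
    ∃ C, 0 ≤ C ∧ ∀ {G v : ℝ → Rn n} {u w : ℝ}, Continuous G → Continuous v → (∀ y, ‖G y‖ ≤ 2) →
      (∀ y, ‖v y‖ ≤ V) → μ ≤ ‖segAvg G u w‖ ^ 2 →
        |energyVariation α G v (u, w)| ≤ C * (|w| ^ (-α) * (segVar G u w + segVar v u w)) := by
  set K₀ : ℝ := α / 2 * μ ^ (-(α / 2) - 1)
  set K₁ : ℝ := (α / 2 + 1) * μ ^ (-(α / 2 + 1) - 1) * (2 * |V|) + μ ^ (-(α / 2 + 1))
  refine ⟨α * K₁ * 4 + K₀ * (4 * |V|), by positivity, fun {G v u w} hG hv hG₂ hV hle => ?_⟩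
  replace hV (y : ℝ) : ‖v y‖ ≤ |V| := (hV y).trans (le_abs_self V)
  set Z := segVar G u w + segVar v u w
  have hGvar := segVar_nonneg hG u w
  have hvvar := segVar_nonneg hv u w
  have hle' := hle.trans (norm_segAvg_sq_le hG u w)
  have hbase : |‖segAvg G u w‖ ^ 2 - segAvg (fun y => ‖G y‖ ^ 2) u w| ≤ Z := by
    rw [abs_sub_comm, ← segVar, abs_of_nonneg hGvar]
    linarith
  have hcov : |⟪segAvg G u w, segAvg v u w⟫ - segAvg (fun y => ⟪G y, v y⟫) u w| ≤ Z := by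
    rw [abs_sub_comm, ← segCov]
    linarith [two_mul_abs_segCov_le hG hv u w, abs_nonneg (segCov G v u w)]
  have hfirst := abs_rpow_neg_mul_sub_le (q := α / 2 + 1) (by linarith) hμ hle hle'
    (abs_inner_le_of_norm_le (norm_segAvg_le hG₂ u w) (norm_segAvg_le hV u w)) hbase hcov
  have hsecond : |(‖segAvg G u w‖ ^ 2) ^ (-(α / 2)) -
      (segAvg (fun y => ‖G y‖ ^ 2) u w) ^ (-(α / 2))| ≤ K₀ * Z :=
    (abs_rpow_neg_sub_le (by linarith) hμ hle hle').trans (by gcongr)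
  have hspeed : (‖G u‖ ^ 2 + ‖G (u + w)‖ ^ 2) / 2 ≤ 4 := by
    have (y : ℝ) : ‖G y‖ ^ 2 ≤ 2 ^ 2 := by gcongr; exact hG₂ y
    linarith [this u, this (u + w)]
  have hinner : |⟪G u, v u⟫ + ⟪G (u + w), v (u + w)⟫| ≤ 4 * |V| := by
    have (y : ℝ) : |⟪G y, v y⟫| ≤ 2 * |V| := abs_inner_le_of_norm_le (hG₂ y) (hV y)
    linarith [abs_add_le ⟪G u, v u⟫ ⟪G (u + w), v (u + w)⟫, this u, this (u + w)]
  have hw : 0 ≤ |w| ^ (-α) := by positivity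
  have hspeed₀ : 0 ≤ (‖G u‖ ^ 2 + ‖G (u + w)‖ ^ 2) / 2 := by positivity
  rw [energyVariation, abs_mul, abs_of_nonneg hw, mul_left_comm,
    show -(α / 2) - 1 = -(α / 2 + 1) by ring]
  refine mul_le_mul_of_nonneg_left ((abs_add_le _ _).trans ?_) hw
  rw [abs_mul, abs_mul, abs_mul, abs_neg, abs_of_nonneg hα, abs_of_nonneg hspeed₀]
  calc _ ≤ α * (K₁ * Z) * 4 + K₀ * Z * (4 * |V|) := by gcongr
    _ = _ := by ring

lemma norm_smul_le_of_abs_lt {v : ℝ → Rn n} {m V τ : ℝ} (hV : ∀ u, ‖v u‖ ≤ V)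
    (hτ : |τ| < m / (10 * (V + 1))) (u : ℝ) : ‖τ • v u‖ ≤ m / 10 := by
  have hV₀ : 0 ≤ V := (norm_nonneg _).trans (hV 0)
  rw [lt_div_iff₀ (by positivity)] at hτ
  rw [norm_smul, Real.norm_eq_abs]
  linarith [mul_le_mul_of_nonneg_left (hV u) (abs_nonneg τ), abs_nonneg τ]

namespace IsTangent

variable {g v : ℝ → Rn n} {m : ℝ}

lemma norm_segAvg_le_one (hT : IsTangent g m) (u w : ℝ) : ‖segAvg g u w‖ ≤ 1 :=
  norm_segAvg_le (fun u => (hT.norm_eq u).le) u w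

lemma norm_segAvg_sq_le_one (hT : IsTangent g m) (u w : ℝ) : ‖segAvg g u w‖ ^ 2 ≤ 1 :=
  pow_le_one₀ (norm_nonneg _) (hT.norm_segAvg_le_one u w)

lemma le_one (hT : IsTangent g m) : m ≤ 1 :=
  (hT.le 0 0 (by norm_num)).trans (hT.norm_segAvg_sq_le_one 0 0)

lemma segAvg_norm_sq (hT : IsTangent g m) (u w : ℝ) : segAvg (fun y => ‖g y‖ ^ 2) u w = 1 := by
  simp [segAvg, hT.norm_eq]

lemma segVar_eq (hT : IsTangent g m) (u w : ℝ) : segVar g u w = 1 - ‖segAvg g u w‖ ^ 2 := by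
  rw [segVar, hT.segAvg_norm_sq]

lemma abs_norm_add_sub_one_le (hT : IsTangent g m) {u : ℝ} {a : Rn n} (ha : ‖a‖ ≤ m / 10) :
    |‖g u + a‖ - 1| ≤ 1 / 10 := by
  have h := abs_norm_sub_norm_le (g u + a) (g u)
  rw [hT.norm_eq, add_sub_cancel_left] at h
  linarith [hT.le_one]

lemma le_norm_segAvg_add_smul_sq (hT : IsTangent g m) (hv : Continuous v) {τ : ℝ}
    (hτv : ∀ u, ‖τ • v u‖ ≤ m / 10) {w : ℝ} (hw : |w| ≤ 1 / 2) (u : ℝ) :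
    (m / 2) ^ 2 ≤ ‖segAvg (fun y => g y + τ • v y) u w‖ ^ 2 := by
  have hm := hT.pos
  have hle : m ≤ ‖segAvg g u w‖ := (hT.le u w hw).trans
    (pow_le_of_le_one (norm_nonneg _) (hT.norm_segAvg_le_one u w) two_ne_zero)
  have hpert : ‖τ • segAvg v u w‖ ≤ m / 10 := by
    simpa only [segAvg, intervalIntegral.integral_smul] using norm_segAvg_le hτv u w
  have htri := norm_sub_norm_le (segAvg g u w) (-(τ • segAvg v u w))
  rw [norm_neg, sub_neg_eq_add] at htri
  rw [segAvg_add_smul hT.cont hv]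
  gcongr
  linarith

lemma exists_abs_energyVariation_add_smul_le (hT : IsTangent g m) (hv : Continuous v) {α : ℝ}
    (hα : 0 ≤ α) {V L : ℝ} (hV : ∀ u, ‖v u‖ ≤ V) (hL : ∀ x y, ‖v x - v y‖ ≤ L * |x - y|) :
    ∃ C, ∀ u w τ : ℝ, |w| ≤ 1 / 2 → |τ| < m / (10 * (V + 1)) →
      |energyVariation α (fun y => g y + τ • v y) v (u, w)| ≤
        C * (|w| ^ (-α) * (1 - ‖segAvg g u w‖ ^ 2) + L ^ 2 * (|w| ^ (-α) * w ^ 2)) := by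
  have hg := hT.cont
  have hm := hT.pos
  obtain ⟨C, hC, hbound⟩ := exists_abs_energyVariation_le (n := n) (μ := (m / 2) ^ 2) hα
    (by positivity) V
  refine ⟨C * 3, fun u w τ hw hτ => ?_⟩
  have hV₀ : 0 ≤ V := (norm_nonneg _).trans (hV 0)
  have hτv := norm_smul_le_of_abs_lt hV hτ
  have hτ₁ : |τ| ≤ 1 := hτ.le.trans ((div_le_one₀ (by positivity)).2 (by linarith [hT.le_one]))
  have hnorm (y : ℝ) : ‖g y + τ • v y‖ ≤ 2 := by
    linarith [(abs_le.1 (hT.abs_norm_add_sub_one_le (u := y) (hτv y))).2]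
  have hvar := segVar_add_smul_le hg hv hτ₁ u w
  have hvvar := segVar_le_of_lipschitz hv hL u w
  have hgvar := segVar_nonneg hg u w
  calc |energyVariation α (fun y => g y + τ • v y) v (u, w)|
      ≤ C * (|w| ^ (-α) * (segVar (fun y => g y + τ • v y) u w + segVar v u w)) :=
        hbound (by fun_prop) hv hnorm hV (hT.le_norm_segAvg_add_smul_sq hv hτv hw u)
    _ ≤ C * (|w| ^ (-α) * (3 * (segVar g u w + L ^ 2 * w ^ 2))) := by
        gcongr
        linarith
    _ = _ := by rw [hT.segVar_eq]; ring

end IsTangent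

section OHara

variable {γ G : ℝ → Rn n}

lemma arcLen_eq_abs_mul_segAvg (hγ : ∀ u, HasDerivAt γ (G u) u) (hG : Continuous G) (u w : ℝ) :
    arcLen γ u w = |w| * segAvg (fun x => ‖G x‖) u w := by
  simp only [arcLen, (hγ _).deriv]
  rw [← mul_segAvg_eq_integral hG.norm, abs_mul,
    abs_of_nonneg (segAvg_nonneg (fun x => norm_nonneg _) _ _)]

lemma curveLen_eq_segAvg (hγ : ∀ u, HasDerivAt γ (G u) u) (hG : Continuous G) :
    curveLen γ = segAvg (fun x => ‖G x‖) 0 1 := by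
  simp only [curveLen, (hγ _).deriv]
  rw [← one_mul (segAvg _ _ _), mul_segAvg_eq_integral hG.norm, zero_add]

lemma mul_abs_le_idist (hγ : ∀ u, HasDerivAt γ (G u) u) (hG : Continuous G)
    (hG₁ : ∀ u, |‖G u‖ - 1| ≤ 1 / 10) {u w : ℝ} (hw : |w| ≤ 1 / 2) :
    7 / 10 * |w| ≤ idist γ u w := by
  have hspeed := abs_le.1 (abs_segAvg_sub_one_le hG.norm hG₁ u w)
  have hlen := abs_le.1 (abs_segAvg_sub_one_le hG.norm hG₁ 0 1)
  rw [idist, arcLen_eq_abs_mul_segAvg hγ hG, curveLen_eq_segAvg hγ hG]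
  refine le_min ?_ ?_ <;> nlinarith [abs_nonneg w]

lemma ohIntegrand_le_energyDensity (hγ : ∀ u, HasDerivAt γ (G u) u) (hG : Continuous G)
    (hG₁ : ∀ u, |‖G u‖ - 1| ≤ 1 / 10) {α : ℝ} (hα : 0 < α) {u w : ℝ} (hw : |w| ≤ 1 / 2)
    (hpos : 0 < ‖segAvg G u w‖ ^ 2) : ohIntegrand α γ u w ≤ energyDensity α G (u, w) := by
  have hidist := mul_abs_le_idist hγ hG hG₁ (u := u) hw
  have hmean : 0 < segAvg (fun x => ‖G x‖) u w := by
    linarith [(abs_le.1 (abs_segAvg_sub_one_le hG.norm hG₁ u w)).1]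
  have hchord : 1 / ‖γ (u + w) - γ u‖ ^ α = |w| ^ (-α) * (‖segAvg G u w‖ ^ 2) ^ (-(α / 2)) := by
    rw [← smul_segAvg hγ hG, norm_smul, Real.norm_eq_abs,
      one_div_mul_rpow_eq (abs_nonneg w) (norm_nonneg _)]
  have harc : |w| ^ (-α) * (segAvg (fun x => ‖G x‖ ^ 2) u w) ^ (-(α / 2)) ≤
      1 / idist γ u w ^ α := by
    rcases eq_or_ne w 0 with rfl | hw₀
    · rw [abs_zero, Real.zero_rpow (by linarith), zero_mul]
      exact one_div_nonneg.2 (Real.rpow_nonneg (by simpa using hidist) _)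
    · have hw' : 0 < |w| := abs_pos.2 hw₀
      have hidist₀ : 0 < idist γ u w := by linarith
      calc _ ≤ |w| ^ (-α) * (segAvg (fun x => ‖G x‖) u w ^ 2) ^ (-(α / 2)) :=
            mul_le_mul_of_nonneg_left (Real.rpow_le_rpow_of_nonpos (by positivity)
              (segAvg_pow_sq_le hG.norm u w) (by linarith)) (by positivity)
        _ = 1 / (|w| * segAvg (fun x => ‖G x‖) u w) ^ α :=
            (one_div_mul_rpow_eq hw'.le hmean.le).symm
        _ ≤ 1 / idist γ u w ^ α := by
            gcongr
            exact (min_le_left _ _).trans (arcLen_eq_abs_mul_segAvg hγ hG u w).le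
  have hdiff : 0 ≤ |w| ^ (-α) * ((‖segAvg G u w‖ ^ 2) ^ (-(α / 2)) -
      (segAvg (fun x => ‖G x‖ ^ 2) u w) ^ (-(α / 2))) :=
    mul_nonneg (by positivity) (sub_nonneg.2
      (Real.rpow_le_rpow_of_nonpos hpos (norm_segAvg_sq_le hG u w) (by linarith)))
  simp only [ohIntegrand, energyDensity, (hγ _).deriv]
  rw [mul_assoc]
  refine mul_le_mul ?_ ?_ (by positivity) hdiff
  · rw [mul_sub, hchord]
    linarith
  · nlinarith [sq_nonneg (‖G u‖ - ‖G (u + w)‖)]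

end OHara

lemma ArcLengthParam.ohIntegrand_eq {γ : ℝ → Rn n} (h : ArcLengthParam γ)
    (hc : Continuous (deriv γ)) {α : ℝ} (hα : 0 < α) {u w : ℝ} (hw : |w| ≤ 1 / 2) :
    ohIntegrand α γ u w = energyDensity α (deriv γ) (u, w) := by
  have hunit (θ : ℝ) : ‖deriv γ θ‖ = 1 := h θ
  have hmean : segAvg (fun y => ‖deriv γ y‖ ^ 2) u w = 1 := by simp [segAvg, hunit]
  simp only [ohIntegrand, energyDensity, h.idist_eq hw, hmean]
  simp only [hunit]
  rcases eq_or_ne w 0 with rfl | _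
  · simp [Real.zero_rpow (show -α ≠ 0 by linarith), Real.zero_rpow hα.ne']
  · rw [← smul_segAvg (fun u => (h.differentiable u).hasDerivAt) hc, norm_smul, Real.norm_eq_abs,
      one_div_mul_rpow_eq (abs_nonneg w) (norm_nonneg _), one_div, ← Real.rpow_neg (abs_nonneg w),
      Real.one_rpow]
    ring

/-- Lebesgue measure on the domain of integration `(0,1] × (-1/2,1/2)` of the O'Hara energy. -/
def energyMeasure : Measure (ℝ × ℝ) :=
  (volume.restrict (Ioc (0 : ℝ) 1)).prod (volume.restrict (Ioo (-(1 : ℝ) / 2) (1 / 2)))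

lemma abs_lt_of_mem_Ioo {w : ℝ} (hw : w ∈ Ioo (-(1 : ℝ) / 2) (1 / 2)) : |w| < 1 / 2 :=
  abs_lt.2 ⟨by linarith [hw.1], hw.2⟩

lemma ae_energyMeasure : ∀ᵐ x ∂energyMeasure, |x.2| < 1 / 2 := by
  rw [energyMeasure, Measure.prod_restrict]
  exact (ae_restrict_mem (measurableSet_Ioc.prod measurableSet_Ioo)).mono fun x hx =>
    abs_lt_of_mem_Ioo hx.2

lemma oharaE_le_lintegral {α : ℝ} {γ : ℝ → Rn n} {φ : ℝ × ℝ → ℝ} (hφ : Measurable φ)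
    (h : ∀ u w : ℝ, |w| < 1 / 2 → ohIntegrand α γ u w ≤ φ (u, w)) :
    oharaE α γ ≤ ∫⁻ x, ENNReal.ofReal (φ x) ∂energyMeasure := by
  rw [energyMeasure, lintegral_prod _ (by fun_prop), oharaE]
  exact lintegral_mono fun u => setLIntegral_mono' measurableSet_Ioo fun w hw =>
    ENNReal.ofReal_le_ofReal (h u w (abs_lt_of_mem_Ioo hw))

lemma lintegral_le_oharaE {α : ℝ} {γ : ℝ → Rn n} {φ : ℝ × ℝ → ℝ} (hφ : Measurable φ)
    (h : ∀ u w : ℝ, |w| < 1 / 2 → φ (u, w) ≤ ohIntegrand α γ u w) :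
    ∫⁻ x, ENNReal.ofReal (φ x) ∂energyMeasure ≤ oharaE α γ := by
  rw [energyMeasure, lintegral_prod _ (by fun_prop), oharaE]
  exact lintegral_mono fun u => setLIntegral_mono' measurableSet_Ioo fun w hw =>
    ENNReal.ofReal_le_ofReal (h u w (abs_lt_of_mem_Ioo hw))

lemma integrable_abs_rpow_energyMeasure {r : ℝ} (hr : -1 < r) :
    Integrable (fun x : ℝ × ℝ => |x.2| ^ r) energyMeasure :=
  (integrableOn_abs_rpow hr).integrable.comp_snd _

lemma integrable_abs_rpow_neg_mul_sq {α : ℝ} (hα : α ∈ Ioo (2 : ℝ) 3) :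
    Integrable (fun x : ℝ × ℝ => |x.2| ^ (-α) * x.2 ^ 2) energyMeasure := by
  refine (integrable_abs_rpow_energyMeasure (r := -α + 2) (by linarith [hα.2])).congr
    (Eventually.of_forall fun x => ?_)
  dsimp only
  rw [Real.rpow_add' (abs_nonneg _) (by linarith [hα.1]), Real.rpow_two, sq_abs]

lemma integrable_of_integrable_of_abs_deriv_le {X : Type*} [MeasurableSpace X] {μ : Measure X}
    {F F' : ℝ → X → ℝ} {ε τ : ℝ} (hF : ∀ τ, AEStronglyMeasurable (F τ) μ) (hF₀ : Integrable (F 0) μ)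
    {bound : X → ℝ} (hbound : Integrable bound μ)
    (hF' : ∀ᵐ x ∂μ, ∀ τ, |τ| < ε → HasDerivAt (fun τ => F τ x) (F' τ x) τ)
    (hle : ∀ᵐ x ∂μ, ∀ τ, |τ| < ε → |F' τ x| ≤ bound x) (hτ : |τ| < ε) : Integrable (F τ) μ := by
  suffices h : Integrable (F τ - F 0) μ by simpa using h.add hF₀
  refine (hbound.mul_const |τ|).mono' ((hF τ).sub (hF 0)) ?_
  filter_upwards [hF', hle] with x hx hx'
  have := Convex.norm_image_sub_le_of_norm_hasDerivWithin_le (s := Metric.ball (0 : ℝ) ε)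
    (f := fun τ => F τ x) (x := 0) (y := τ)
    (fun σ hσ => (hx σ (by simpa using hσ)).hasDerivWithinAt)
    (fun σ hσ => hx' σ (by simpa using hσ)) (convex_ball 0 ε)
    (Metric.mem_ball_self ((abs_nonneg τ).trans_lt hτ)) (by simpa using hτ)
  simpa using this

lemma oharaER_eq_integral {γ : ℝ → Rn n} {α : ℝ} {φ : ℝ × ℝ → ℝ} (hφ : Measurable φ)
    (hφ₀ : 0 ≤ᵐ[energyMeasure] φ)
    (h : oharaE α γ = ∫⁻ x, ENNReal.ofReal (φ x) ∂energyMeasure) :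
    oharaER α γ = ∫ x, φ x ∂energyMeasure := by
  rw [integral_eq_lintegral_of_nonneg_ae hφ₀ hφ.aestronglyMeasurable, ← h, oharaER]

namespace IsTangent

variable {g v : ℝ → Rn n} {m V α τ : ℝ}

lemma norm_segAvg_add_smul_sq_pos (hT : IsTangent g m) (hv : Continuous v) (hV : ∀ u, ‖v u‖ ≤ V)
    (hτ : |τ| < m / (10 * (V + 1))) {w : ℝ} (hw : |w| ≤ 1 / 2) (u : ℝ) :
    0 < ‖segAvg (fun y => g y + τ • v y) u w‖ ^ 2 := by
  have := hT.pos
  exact (by positivity : 0 < (m / 2) ^ 2).trans_le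
    (hT.le_norm_segAvg_add_smul_sq hv (norm_smul_le_of_abs_lt hV hτ) hw u)

lemma ae_energyDensity_add_smul_nonneg (hT : IsTangent g m) (hv : Continuous v)
    (hV : ∀ u, ‖v u‖ ≤ V) (hα : 0 ≤ α) (hτ : |τ| < m / (10 * (V + 1))) :
    0 ≤ᵐ[energyMeasure] energyDensity α fun y => g y + τ • v y :=
  ae_energyMeasure.mono fun x hx =>
    energyDensity_nonneg (hT.cont.add (hv.const_smul τ)) hα
      (hT.norm_segAvg_add_smul_sq_pos hv hV hτ hx.le x.1)

lemma ae_energyDensity_nonneg (hT : IsTangent g m) (hα : 0 ≤ α) :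
    0 ≤ᵐ[energyMeasure] energyDensity α g := by
  have hpos := hT.pos
  simpa using hT.ae_energyDensity_add_smul_nonneg (v := fun _ => 0) (V := 0) (τ := 0)
    continuous_const (by simp) hα (by simpa using hpos)

lemma ae_hasDerivAt_energyDensity (hT : IsTangent g m) (hv : Continuous v)
    (hV : ∀ u, ‖v u‖ ≤ V) :
    ∀ᵐ x ∂energyMeasure, ∀ τ, |τ| < m / (10 * (V + 1)) →
      HasDerivAt (fun τ => energyDensity α (fun y => g y + τ • v y) x)
        (energyVariation α (fun y => g y + τ • v y) v x) τ :=
  ae_energyMeasure.mono fun x hx _ hτ =>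
    hasDerivAt_energyDensity hT.cont hv α (hT.norm_segAvg_add_smul_sq_pos hv hV hτ hx.le x.1)

end IsTangent

lemma ArcLengthParam.oharaE_eq_lintegral {γ : ℝ → Rn n} {α : ℝ} (h : ArcLengthParam γ)
    (hc : Continuous (deriv γ)) (hα : 0 < α) :
    oharaE α γ = ∫⁻ x, ENNReal.ofReal (energyDensity α (deriv γ) x) ∂energyMeasure :=
  le_antisymm
    (oharaE_le_lintegral (measurable_energyDensity hc α) fun _ _ hw =>
      (h.ohIntegrand_eq hc hα hw.le).le)
    (lintegral_le_oharaE (measurable_energyDensity hc α) fun _ _ hw =>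
      (h.ohIntegrand_eq hc hα hw.le).ge)

namespace IsTangent

variable {γ H v : ℝ → Rn n} {α m V L τ : ℝ}

lemma integrable_excess (hT : IsTangent (deriv γ) m) (hinj : PerInjective γ) (hα : 2 ≤ α)
    (hfin : oharaE α γ < ⊤) :
    Integrable (fun x : ℝ × ℝ => |x.2| ^ (-α) * (1 - ‖segAvg (deriv γ) x.1 x.2‖ ^ 2))
      energyMeasure := by
  have h : ArcLengthParam γ := hT.norm_eq
  have hmeas : Measurable fun x : ℝ × ℝ =>
      |x.2| ^ (-α) * (1 - ‖segAvg (deriv γ) x.1 x.2‖ ^ 2) := by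
    have := measurable_segAvg hT.cont
    fun_prop
  refine ⟨hmeas.aestronglyMeasurable, ?_⟩
  rw [hasFiniteIntegral_iff_ofReal (Eventually.of_forall fun x =>
    mul_nonneg (by positivity) (sub_nonneg.2 (hT.norm_segAvg_sq_le_one _ _)))]
  refine (lintegral_le_oharaE hmeas fun u w hw => ?_).trans_lt hfin
  refine le_trans (le_of_eq ?_) (h.le_ohIntegrand hinj hα hw.le)
  rcases eq_or_ne w 0 with rfl | hw₀
  · simp [Real.zero_rpow (show -α ≠ 0 by linarith)]
  · rw [← smul_segAvg (fun u => (h.differentiable u).hasDerivAt) hT.cont, norm_smul, mul_pow,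
      Real.norm_eq_abs, sq_abs, mul_div_cancel_left₀ _ (by positivity)]

lemma integrable_energyDensity (hT : IsTangent (deriv γ) m) (hα : 0 < α)
    (hfin : oharaE α γ < ⊤) : Integrable (energyDensity α (deriv γ)) energyMeasure := by
  have hmeas := measurable_energyDensity hT.cont α
  refine ⟨hmeas.aestronglyMeasurable, ?_⟩
  rwa [hasFiniteIntegral_iff_ofReal (hT.ae_energyDensity_nonneg hα.le),
    ← ArcLengthParam.oharaE_eq_lintegral hT.norm_eq hT.cont hα]

lemma oharaER_eq_integral_energyDensity (hT : IsTangent (deriv γ) m) (hα : 0 < α) :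
    oharaER α γ = ∫ x, energyDensity α (deriv γ) x ∂energyMeasure :=
  oharaER_eq_integral (measurable_energyDensity hT.cont α) (hT.ae_energyDensity_nonneg hα.le)
    (ArcLengthParam.oharaE_eq_lintegral hT.norm_eq hT.cont hα)

lemma oharaER_add_smul_le_integral (hT : IsTangent (deriv γ) m) (hα : 0 < α)
    (hH : ∀ u, HasDerivAt H (v u) u) (hv : Continuous v) (hV : ∀ u, ‖v u‖ ≤ V)
    (hτ : |τ| < m / (10 * (V + 1)))
    (hint : Integrable (energyDensity α fun y => deriv γ y + τ • v y) energyMeasure) :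
    oharaER α (γ + τ • H) ≤
      ∫ x, energyDensity α (fun y => deriv γ y + τ • v y) x ∂energyMeasure := by
  have h : ArcLengthParam γ := hT.norm_eq
  have hG : Continuous fun y => deriv γ y + τ • v y := hT.cont.add (hv.const_smul τ)
  have hmeas := measurable_energyDensity hG α
  have hnonneg := hT.ae_energyDensity_add_smul_nonneg hv hV hα.le hτ
  rw [integral_eq_lintegral_of_nonneg_ae hnonneg hmeas.aestronglyMeasurable]
  refine ENNReal.toReal_mono ((hasFiniteIntegral_iff_ofReal hnonneg).1 hint.2).ne
    (oharaE_le_lintegral hmeas fun u w hw => ?_)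
  exact ohIntegrand_le_energyDensity
    (fun u => (h.differentiable u).hasDerivAt.add ((hH u).const_smul τ)) hG
    (fun u => hT.abs_norm_add_sub_one_le (norm_smul_le_of_abs_lt hV hτ u)) hα hw.le
    (hT.norm_segAvg_add_smul_sq_pos hv hV hτ hw.le u)

/-- The derivatives are dominated by a multiple of the excess
`|w| ^ (-α) * (1 - ‖segAvg γ' u w‖ ^ 2)`, whose integral is at most the energy. -/
lemma hasDerivAt_integral_energyDensity (hT : IsTangent (deriv γ) m) (hinj : PerInjective γ)
    (hα : α ∈ Ioo (2 : ℝ) 3) (hfin : oharaE α γ < ⊤)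
    (hv : Continuous v) (hV : ∀ u, ‖v u‖ ≤ V) (hL : ∀ x y, ‖v x - v y‖ ≤ L * |x - y|) :
    (∀ τ, |τ| < m / (10 * (V + 1)) →
        Integrable (energyDensity α fun y => deriv γ y + τ • v y) energyMeasure) ∧
      Integrable (energyVariation α (deriv γ) v) energyMeasure ∧
      HasDerivAt
        (fun τ : ℝ => ∫ x, energyDensity α (fun y => deriv γ y + τ • v y) x ∂energyMeasure)
        (∫ x, energyVariation α (deriv γ) v x ∂energyMeasure) 0 := by
  have hα₀ : 0 < α := by linarith [hα.1]
  have hG (τ : ℝ) : Continuous fun y => deriv γ y + τ • v y := hT.cont.add (hv.const_smul τ)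
  let F (τ : ℝ) : ℝ × ℝ → ℝ := energyDensity α fun y => deriv γ y + τ • v y
  let F' (τ : ℝ) : ℝ × ℝ → ℝ := energyVariation α (fun y => deriv γ y + τ • v y) v
  have hmeas (τ : ℝ) : AEStronglyMeasurable (F τ) energyMeasure :=
    (measurable_energyDensity (hG τ) α).aestronglyMeasurable
  obtain ⟨C, hC⟩ := hT.exists_abs_energyVariation_add_smul_le hv hα₀.le hV hL
  have hbound := ((hT.integrable_excess hinj hα.1.le hfin).add
    ((integrable_abs_rpow_neg_mul_sq hα).const_mul (L ^ 2))).const_mul C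
  have hint : Integrable (F 0) energyMeasure := by
    simpa [F] using hT.integrable_energyDensity hα₀ hfin
  have hder : ∀ᵐ x ∂energyMeasure, ∀ τ, |τ| < m / (10 * (V + 1)) →
      HasDerivAt (fun τ => F τ x) (F' τ x) τ := hT.ae_hasDerivAt_energyDensity hv hV
  have hle : ∀ᵐ x ∂energyMeasure, ∀ τ, |τ| < m / (10 * (V + 1)) → |F' τ x| ≤ _ :=
    ae_energyMeasure.mono fun x hx τ hτ => hC x.1 x.2 τ hx.le hτ
  have hV₀ : 0 ≤ V := (norm_nonneg _).trans (hV 0)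
  have hε : 0 < m / (10 * (V + 1)) := div_pos hT.pos (by positivity)
  refine ⟨fun τ hτ =>
    integrable_of_integrable_of_abs_deriv_le (F := F) hmeas hint hbound hder hle hτ, ?_⟩
  simpa [F, F'] using hasDerivAt_integral_of_dominated_loc_of_deriv_le (F := F) (F' := F')
       (Metric.ball_mem_nhds 0 hε) (Eventually.of_forall hmeas) hint
    (measurable_energyVariation (hG 0) hv α).aestronglyMeasurable
    (hle.mono fun x hx τ hτ => hx τ (by simpa using hτ)) hbound
    (hder.mono fun x hx τ hτ => hx τ (by simpa using hτ))

/-- The energy is touched from above at `γ` by the integral of `energyDensity`, so the two have the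
same derivative there. -/
lemma eq_integral_of_hasDirDeriv (hT : IsTangent (deriv γ) m) (hinj : PerInjective γ)
    (hα : α ∈ Ioo (2 : ℝ) 3) (hfin : oharaE α γ < ⊤)
    (hH : ∀ u, HasDerivAt H (v u) u) (hv : Continuous v) (hV : ∀ u, ‖v u‖ ≤ V)
    (hL : ∀ x y, ‖v x - v y‖ ≤ L * |x - y|) {d : ℝ} (hd : HasDirDeriv (oharaER α) γ H d) :
    Integrable (energyVariation α (deriv γ) v) energyMeasure ∧
      d = ∫ x, energyVariation α (deriv γ) v x ∂energyMeasure := by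
  have hα₀ : 0 < α := by linarith [hα.1]
  obtain ⟨hint, hvar, hder⟩ := hT.hasDerivAt_integral_energyDensity hinj hα hfin hv hV hL
  refine ⟨hvar, ?_⟩
  have henergy : HasDerivAt (fun τ : ℝ => oharaER α (γ + τ • H)) d 0 := by
    rw [hasDerivAt_iff_tendsto_slope]
    refine hd.congr fun τ => ?_
    simp only [slope_def_field, zero_smul, add_zero, sub_zero]
  have hV₀ : 0 ≤ V := (norm_nonneg _).trans (hV 0)
  have hε : 0 < m / (10 * (V + 1)) := div_pos hT.pos (by positivity)
  have hmin : IsLocalMin (fun τ : ℝ =>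
      (∫ x, energyDensity α (fun y => deriv γ y + τ • v y) x ∂energyMeasure) -
        oharaER α (γ + τ • H)) 0 := by
    filter_upwards [Metric.ball_mem_nhds (0 : ℝ) hε] with τ hτ
    replace hτ : |τ| < m / (10 * (V + 1)) := by simpa using hτ
    have := hT.oharaER_add_smul_le_integral hα₀ hH hv hV hτ (hint τ hτ)
    simpa [hT.oharaER_eq_integral_energyDensity hα₀] using this
  linarith [hmin.hasDerivAt_eq_zero (hder.sub henergy)]

end IsTangent

/-! ### The Euler–Lagrange equation in Fourier space -/

lemma segAvg_clm {E F : Type*} [NormedAddCommGroup E] [NormedSpace ℝ E] [CompleteSpace E]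
    [NormedAddCommGroup F] [NormedSpace ℝ F] [CompleteSpace F] (L : E →L[ℝ] F) {g : ℝ → E}
    (hg : Continuous g) (u w : ℝ) : segAvg (fun x => L (g x)) u w = L (segAvg g u w) :=
  L.intervalIntegral_comp_comm (f := fun s => g (u + s * w))
    (Continuous.intervalIntegrable (by fun_prop) _ _)

lemma segAvg_coord {g : ℝ → Rn n} (hg : Continuous g) (j : Fin n) (u w : ℝ) :
    segAvg (coord g j) u w = coord (fun u => segAvg g u w) j u :=
  segAvg_clm (Complex.ofRealCLM.comp (EuclideanSpace.proj (𝕜 := ℝ) j)) hg u w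

lemma fcoeff_intervalIntegral {G : ℝ → ℝ → ℂ} (hG : Continuous (Function.uncurry G)) (k : ℤ) :
    fcoeff (fun u => ∫ s in (0 : ℝ)..1, G s u) k = ∫ s in (0 : ℝ)..1, fcoeff (G s) k := by
  simp only [fcoeff, ← intervalIntegral.integral_mul_const]
  refine intervalIntegral_intervalIntegral_swap ?_
  rw [uIoc_of_le zero_le_one]
  have hcont : Continuous (Function.uncurry fun u s => G s u * fourierExp (-k) u) :=
    (hG.comp continuous_swap).mul (by fun_prop)
  exact (hcont.continuousOn.integrableOn_compact (isCompact_Icc.prod isCompact_Icc)).mono_set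
    (prod_mono Ioc_subset_Icc_self Ioc_subset_Icc_self)

lemma fcoeff_segAvg {F : ℝ → ℂ} (hF : Continuous F) (hp : Function.Periodic F 1) (k : ℤ) (w : ℝ) :
    fcoeff (fun u => segAvg F u w) k = avgSymbol k w * fcoeff F k := by
  calc fcoeff (fun u => segAvg F u w) k
      = ∫ s in (0 : ℝ)..1, fcoeff (fun u => F (u + s * w)) k :=
        fcoeff_intervalIntegral (by simp only [Function.uncurry_def]; fun_prop) k
    _ = avgSymbol k w * fcoeff F k := by
        simp only [fcoeff_comp_add_right hp, intervalIntegral.integral_mul_const, avgSymbol, segAvg,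
          zero_add]

@[simp] lemma avgSymbol_zero_left (w : ℝ) : avgSymbol 0 w = 1 := by simp [avgSymbol, segAvg]

lemma avgSymbol_neg_mul_avgSymbol (k : ℤ) (w : ℝ) :
    avgSymbol (-k) w * avgSymbol k w = ((‖avgSymbol k w‖ ^ 2 : ℝ) : ℂ) := by
  have hconj : avgSymbol (-k) w = (starRingEnd ℂ) (avgSymbol k w) := by
    have hclm := segAvg_clm Complex.conjCLE.toContinuousLinearMap (continuous_fourierExp k) 0 w
    refine Eq.trans ?_ hclm
    simp only [avgSymbol, segAvg]
    congr 1
    funext s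
    exact fourier_neg
  rw [hconj, mul_comm, Complex.mul_conj, Complex.normSq_eq_norm_sq]

lemma integral_segAvg_mul_fourierExp_sub {F : ℝ → ℂ} (hF : Continuous F)
    (hp : Function.Periodic F 1) (k : ℤ) (w : ℝ) :
    ∫ u in (0 : ℝ)..1, (segAvg (fun y => F y * fourierExp (-k) y) u w -
        segAvg F u w * segAvg (fourierExp (-k)) u w) =
      ((1 - ‖avgSymbol k w‖ ^ 2 : ℝ) : ℂ) * fcoeff F k := by
  have hprod : ∫ u in (0 : ℝ)..1, segAvg (fun y => F y * fourierExp (-k) y) u w = fcoeff F k := by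
    have := fcoeff_segAvg (F := fun y => F y * fourierExp (-k) y) (by fun_prop)
      (hp.mul (periodic_fourierExp (-k))) 0 w
    simpa [fcoeff] using this
  have hsep : ∫ u in (0 : ℝ)..1, segAvg F u w * segAvg (fourierExp (-k)) u w =
      avgSymbol (-k) w * (avgSymbol k w * fcoeff F k) := by
    rw [← fcoeff_segAvg hF hp, fcoeff, ← intervalIntegral.integral_const_mul]
    refine intervalIntegral.integral_congr fun u _ => ?_
    simp only [segAvg_fourierExp]
    ring
  rw [intervalIntegral.integral_sub (Continuous.intervalIntegrable (by fun_prop) _ _)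
    (Continuous.intervalIntegrable (by fun_prop) _ _), hprod, hsep, ← mul_assoc,
    avgSymbol_neg_mul_avgSymbol]
  push_cast
  ring

lemma memH1_of_lipschitz {H v : ℝ → Rn n} (hper : Function.Periodic H 1)
    (hH : ∀ u, HasDerivAt H (v u) u) (hv : Continuous v) {L : ℝ}
    (hL : ∀ x y, ‖v x - v y‖ ≤ L * |x - y|) {α : ℝ} (hα : α < 3) : MemH1 ((α - 1) / 2) H := by
  have hd : deriv H = v := funext fun u => (hH u).deriv
  refine ⟨hper, contDiff_one_iff_deriv.2 ⟨fun u => (hH u).differentiableAt, by rwa [hd]⟩, ?_⟩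
  have hfinite :
      ∫⁻ w in Ioo (-(1 : ℝ) / 2) (1 / 2), ENNReal.ofReal (L ^ 2 * |w| ^ (2 - α)) < ⊤ := by
    have := ((integrableOn_abs_rpow (r := 2 - α) (by linarith)).const_mul (L ^ 2)).2
    rwa [hasFiniteIntegral_iff_ofReal (Eventually.of_forall fun w => by positivity)] at this
  refine lt_of_le_of_lt (b := ∫⁻ _ in Ioc (0 : ℝ) 1,
    ∫⁻ w in Ioo (-(1 : ℝ) / 2) (1 / 2), ENNReal.ofReal (L ^ 2 * |w| ^ (2 - α)))
    (lintegral_mono fun u => lintegral_mono fun w => ENNReal.ofReal_le_ofReal ?_)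
    (by simpa using hfinite)
  rw [hd, show 1 + 2 * ((α - 1) / 2) = α by ring]
  rcases eq_or_ne w 0 with rfl | hw
  · simp only [add_zero, sub_self, norm_zero, zero_pow two_ne_zero, zero_div]
    positivity
  · have hw₀ : 0 < |w| := abs_pos.mpr hw
    rw [div_le_iff₀ (by positivity), mul_assoc, ← Real.rpow_add hw₀, sub_add_cancel,
      Real.rpow_two, ← mul_pow]
    gcongr
    simpa using hL (u + w) u

/-- The factor `‖segAvg g u w‖ ^ (-2 * q) - 1`, written in terms of the excess
`1 - ‖segAvg g u w‖ ^ 2`, which is small. -/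
def chordFactor (g : ℝ → Rn n) (q w u : ℝ) : ℝ := (1 - (1 - ‖segAvg g u w‖ ^ 2)) ^ (-q) - 1

lemma IsTangent.continuous_chordFactor {g : ℝ → Rn n} {m : ℝ} (hT : IsTangent g m) (q : ℝ) {w : ℝ}
    (hw : |w| ≤ 1 / 2) : Continuous (chordFactor g q w) := by
  have hg := hT.cont
  refine (Continuous.rpow_const (by fun_prop) fun u => Or.inl ?_).sub continuous_const
  rw [sub_sub_cancel]
  exact (hT.pos.trans_le (hT.le u w hw)).ne'

/-- The first variation density `energyVariation` at a unit field `g`, tested with the complex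
scalar function `ψ` in the `j`-th component. The last line is its linear part. -/
def testedVariation (α : ℝ) (g : ℝ → Rn n) (j : Fin n) (ψ : ℝ → ℂ) (x : ℝ × ℝ) : ℂ :=
  ((|x.2| ^ (-α) : ℝ) : ℂ) *
    ((chordFactor g (α / 2) x.2 x.1 : ℂ) *
        (coord g j x.1 * ψ x.1 + coord g j (x.1 + x.2) * ψ (x.1 + x.2)) -
      α * ((chordFactor g (α / 2 + 1) x.2 x.1 : ℂ) *
        (segAvg (coord g j) x.1 x.2 * segAvg ψ x.1 x.2)) +
      α * (segAvg (fun y => coord g j y * ψ y) x.1 x.2 -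
        segAvg (coord g j) x.1 x.2 * segAvg ψ x.1 x.2))

lemma clm_ofReal_mul (L : ℂ →L[ℝ] ℝ) (r : ℝ) (z : ℂ) : L (r * z) = r * L z := by
  rw [← Complex.real_smul, map_smul, smul_eq_mul]

lemma inner_smul_single (x : Rn n) (j : Fin n) (a : ℝ) :
    ⟪x, a • EuclideanSpace.single j (1 : ℝ)⟫ = x j * a := by
  rw [inner_smul_right, EuclideanSpace.inner_single_right]
  simp [mul_comm]

lemma energyVariation_smul_single {g : ℝ → Rn n} (hg : Continuous g) (hnorm : ∀ u, ‖g u‖ = 1)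
    {ψ : ℝ → ℂ} (hψ : Continuous ψ) (L : ℂ →L[ℝ] ℝ) (j : Fin n) (α : ℝ) (x : ℝ × ℝ) :
    energyVariation α g (fun u => L (ψ u) • EuclideanSpace.single j (1 : ℝ)) x =
      L (testedVariation α g j ψ x) := by
  have hone (u w : ℝ) : segAvg (fun _ => (1 : ℝ)) u w = 1 := by simp [segAvg]
  have htest (u w : ℝ) : segAvg (fun u => L (ψ u) • EuclideanSpace.single j (1 : ℝ)) u w =
      L (segAvg ψ u w) • EuclideanSpace.single j (1 : ℝ) :=
    segAvg_clm (L.smulRight (EuclideanSpace.single j (1 : ℝ))) hψ u w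
  have hmul (y : ℝ) : g y j * L (ψ y) = L (coord g j y * ψ y) := (clm_ofReal_mul _ _ _).symm
  have hmul_avg (u w : ℝ) : segAvg g u w j * L (segAvg ψ u w) =
      L (segAvg (coord g j) u w * segAvg ψ u w) := by
    rw [segAvg_coord hg]
    exact (clm_ofReal_mul _ _ _).symm
  have havg_mul (u w : ℝ) : segAvg (fun y => L (coord g j y * ψ y)) u w =
      L (segAvg (fun y => coord g j y * ψ y) u w) := segAvg_clm L (by fun_prop) u w
  have hq : -(α / 2) - 1 = -(α / 2 + 1) := by ring
  simp only [energyVariation, testedVariation, chordFactor, hnorm, one_pow, hone, htest,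
    inner_smul_single, hmul, hmul_avg, havg_mul, clm_ofReal_mul, map_add, map_sub,
    sub_sub_cancel, hq, Real.one_rpow]
  ring

/-- The weak Euler–Lagrange equation: `γ` is a stationary point of the O'Hara energy plus `lam`
times the length. -/
def IsCriticalCurve (α lam : ℝ) (γ : ℝ → Rn n) : Prop :=
  ∀ h : ℝ → Rn n, MemH1 ((α - 1) / 2) h →
    ∃ d : ℝ, HasDirDeriv (oharaER α) γ h d ∧
      d + lam * ∫ u in Ioc (0 : ℝ) 1, ⟪deriv γ u, deriv h u⟫ = 0

lemma norm_fourierExp_sub_le (k : ℤ) (x y : ℝ) :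
    ‖fourierExp k x - fourierExp k y‖ ≤ ‖(2 * Real.pi * Complex.I * k : ℂ)‖ * |x - y| := by
  have := convex_univ.norm_image_sub_le_of_norm_hasDerivWithin_le (x := y) (y := x)
    (fun u _ => (hasDerivAt_fourierExp k u).hasDerivWithinAt)
    (fun u _ => by rw [norm_mul, norm_fourierExp, mul_one]) (mem_univ _) (mem_univ _)
  simpa [Real.norm_eq_abs] using this

lemma hasDerivAt_fourierExp_div {k : ℤ} (hk : k ≠ 0) (u : ℝ) :
    HasDerivAt (fun u => fourierExp k u / (2 * Real.pi * Complex.I * k)) (fourierExp k u) u := by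
  have hne : (2 * Real.pi * Complex.I * k : ℂ) ≠ 0 := by simp [hk, Real.pi_ne_zero]
  exact ((hasDerivAt_fourierExp k u).div_const _).congr_deriv (mul_div_cancel_left₀ _ hne)

lemma norm_clm_smul_single_le (L : ℂ →L[ℝ] ℝ) (z : ℂ) (j : Fin n) :
    ‖L z • EuclideanSpace.single j (1 : ℝ)‖ ≤ ‖L‖ * ‖z‖ := by
  rw [norm_smul, PiLp.norm_single, norm_one, mul_one]
  exact L.le_opNorm z

namespace IsCriticalCurve

variable {γ : ℝ → Rn n} {m α lam : ℝ}

lemma integral_energyVariation (hcrit : IsCriticalCurve α lam γ)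
    (hinj : PerInjective γ) (hT : IsTangent (deriv γ) m) (hα : α ∈ Ioo (2 : ℝ) 3)
    (hfin : oharaE α γ < ⊤) {H v : ℝ → Rn n} {V L : ℝ} (hper : Function.Periodic H 1)
    (hH : ∀ u, HasDerivAt H (v u) u) (hv : Continuous v) (hV : ∀ u, ‖v u‖ ≤ V)
    (hL : ∀ x y, ‖v x - v y‖ ≤ L * |x - y|) :
    Integrable (energyVariation α (deriv γ) v) energyMeasure ∧
      ∫ x, energyVariation α (deriv γ) v x ∂energyMeasure =
        -lam * ∫ u in (0 : ℝ)..1, ⟪deriv γ u, v u⟫ := by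
  obtain ⟨d, hd, hd₀⟩ := hcrit H (memH1_of_lipschitz hper hH hv hL hα.2)
  obtain ⟨hint, rfl⟩ := hT.eq_integral_of_hasDirDeriv hinj hα hfin hH hv hV hL hd
  have hderiv : deriv H = v := funext fun u => (hH u).deriv
  rw [hderiv, ← intervalIntegral.integral_of_le zero_le_one] at hd₀
  exact ⟨hint, by linarith⟩

lemma integral_clm_testedVariation (hcrit : IsCriticalCurve α lam γ)
    (hinj : PerInjective γ) (hT : IsTangent (deriv γ) m) (hα : α ∈ Ioo (2 : ℝ) 3)
    (hfin : oharaE α γ < ⊤) (L : ℂ →L[ℝ] ℝ) {k : ℤ} (hk : k ≠ 0) (j : Fin n) :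
    Integrable (fun x => L (testedVariation α (deriv γ) j (fourierExp (-k)) x)) energyMeasure ∧
      ∫ x, L (testedVariation α (deriv γ) j (fourierExp (-k)) x) ∂energyMeasure =
        L (-lam * fcoeff (coord (deriv γ) j) k) := by
  have hg := hT.cont
  let v : ℝ → Rn n := fun u => L (fourierExp (-k) u) • EuclideanSpace.single j (1 : ℝ)
  let H : ℝ → Rn n := fun u =>
    L (fourierExp (-k) u / (2 * Real.pi * Complex.I * (-k : ℤ))) • EuclideanSpace.single j (1 : ℝ)
  have hH (u : ℝ) : HasDerivAt H (v u) u :=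
    (L.hasFDerivAt.comp_hasDerivAt u
      (hasDerivAt_fourierExp_div (neg_ne_zero.2 hk) u)).smul_const _
  have hper : Function.Periodic H 1 := fun u => by simp only [H, periodic_fourierExp (-k) u]
  have hv : Continuous v := by fun_prop
  have hV (u : ℝ) : ‖v u‖ ≤ ‖L‖ := by simpa using norm_clm_smul_single_le L (fourierExp (-k) u) j
  have hL (x y : ℝ) :
      ‖v x - v y‖ ≤ (‖L‖ * ‖(2 * Real.pi * Complex.I * (-k : ℤ) : ℂ)‖) * |x - y| := by
    simp only [v, ← sub_smul, ← map_sub, mul_assoc ‖L‖]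
    refine (norm_clm_smul_single_le L _ j).trans ?_
    gcongr
    exact norm_fourierExp_sub_le _ _ _
  have hpair : ∫ u in (0 : ℝ)..1, ⟪deriv γ u, v u⟫ = L (fcoeff (coord (deriv γ) j) k) := by
    have hinner (u : ℝ) : ⟪deriv γ u, v u⟫ = L (coord (deriv γ) j u * fourierExp (-k) u) :=
      (inner_smul_single _ _ _).trans (clm_ofReal_mul _ _ _).symm
    simp only [hinner]
    exact L.intervalIntegral_comp_comm (Continuous.intervalIntegrable (by fun_prop) _ _)
  have hEL := hcrit.integral_energyVariation hinj hT hα hfin hper hH hv hV hL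
  rw [hpair] at hEL
  rw [← Complex.ofReal_neg, clm_ofReal_mul]
  simpa only [v, ← energyVariation_smul_single hg hT.norm_eq (continuous_fourierExp (-k))] using hEL

lemma integral_testedVariation (hcrit : IsCriticalCurve α lam γ)
    (hinj : PerInjective γ) (hT : IsTangent (deriv γ) m) (hα : α ∈ Ioo (2 : ℝ) 3)
    (hfin : oharaE α γ < ⊤) {k : ℤ} (hk : k ≠ 0) (j : Fin n) :
    Integrable (testedVariation α (deriv γ) j (fourierExp (-k))) energyMeasure ∧
      ∫ x, testedVariation α (deriv γ) j (fourierExp (-k)) x ∂energyMeasure =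
        -lam * fcoeff (coord (deriv γ) j) k := by
  obtain ⟨hre, hre_eq⟩ :=
    hcrit.integral_clm_testedVariation hinj hT hα hfin Complex.reCLM hk j
  obtain ⟨him, him_eq⟩ :=
    hcrit.integral_clm_testedVariation hinj hT hα hfin Complex.imCLM hk j
  have hint : Integrable (testedVariation α (deriv γ) j (fourierExp (-k))) energyMeasure :=
    Integrable.re_im_iff.mp ⟨hre, him⟩
  rw [Complex.reCLM.integral_comp_comm hint] at hre_eq
  rw [Complex.imCLM.integral_comp_comm hint] at him_eq
  exact ⟨hint, Complex.ext hre_eq him_eq⟩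

end IsCriticalCurve

lemma mul_integral_le_norm_integral_sub {X : Type*} [MeasurableSpace X] {μ : Measure X} {M : X → ℂ}
    {s : X → ℝ} {c : ℂ} {α lam : ℝ} (hM : Integrable M μ) (hMi : ∫ x, M x ∂μ = -lam * c)
    (hs : Integrable s μ) (hs₀ : ∀ x, 0 ≤ s x) (hα : 0 ≤ α) (hlam : 0 ≤ lam) :
    α * ‖c‖ * ∫ x, s x ∂μ ≤ ‖∫ x, (M x - α * c * s x) ∂μ‖ := by
  have hS : 0 ≤ ∫ x, s x ∂μ := integral_nonneg hs₀
  have hsmul : Integrable (fun x => (α * c * s x : ℂ)) μ := hs.ofReal.const_mul _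
  have hsub : ∫ x, (M x - α * c * s x) ∂μ = -(((α * (∫ x, s x ∂μ) + lam : ℝ) : ℂ) * c) := by
    rw [integral_sub hM hsmul, integral_const_mul, integral_complex_ofReal, hMi]
    push_cast
    ring
  rw [hsub, norm_neg, norm_mul, Complex.norm_real, Real.norm_of_nonneg (by positivity)]
  linarith [mul_nonneg hlam (norm_nonneg c)]

/-- With the sign of `lam`, the zeroth order term of the equation only helps. -/
lemma mul_lintegral_le_lintegral_enorm_sub {X : Type*} [MeasurableSpace X] {μ : Measure X}
    {M : X → ℂ} {s : X → ℝ} {c : ℂ} {α lam : ℝ} (hM : Integrable M μ)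
    (hMi : ∫ x, M x ∂μ = -lam * c) (hs : Measurable s) (hs₀ : ∀ x, 0 ≤ s x) (hα : 0 < α)
    (hlam : 0 ≤ lam) :
    ENNReal.ofReal (α * ‖c‖) * ∫⁻ x, ENNReal.ofReal (s x) ∂μ ≤
      ∫⁻ x, ‖M x - α * c * s x‖ₑ ∂μ := by
  rcases eq_or_ne (∫⁻ x, ‖M x - α * c * s x‖ₑ ∂μ) ⊤ with htop | htop
  · exact htop ▸ le_top
  rcases eq_or_ne c 0 with rfl | hc
  · simp
  have hmeas : Measurable fun x => (α * c * s x : ℂ) := by fun_prop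
  have hremainder : Integrable (fun x => M x - α * c * s x) μ :=
    ⟨hM.1.sub hmeas.aestronglyMeasurable, htop.lt_top⟩
  have hne : (α * c : ℂ) ≠ 0 := by simp [hα.ne', hc]
  have hsint : Integrable s μ := by
    have hmul : Integrable (fun x => (α * c * s x : ℂ)) μ :=
      (hM.sub hremainder).congr (Eventually.of_forall fun x => sub_sub_cancel _ _)
    exact ((integrable_const_mul_iff hne.isUnit _).1 hmul).re
  rw [← ofReal_integral_eq_lintegral_ofReal hsint (Eventually.of_forall hs₀),
    ← ENNReal.ofReal_mul (by positivity)]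
  calc ENNReal.ofReal (α * ‖c‖ * ∫ x, s x ∂μ)
      ≤ ENNReal.ofReal ‖∫ x, (M x - α * c * s x) ∂μ‖ :=
        ENNReal.ofReal_le_ofReal
          (mul_integral_le_norm_integral_sub hM hMi hsint hs₀ hα.le hlam)
    _ = ‖∫ x, (M x - α * c * s x) ∂μ‖ₑ := ofReal_norm _
    _ ≤ _ := enorm_integral_le_lintegral_enorm _

/-- The total size of the `k`-th Fourier coefficients, at distance `w`, of the nonlinear terms of
the Euler–Lagrange equation. -/
def nonlinearCoeff (α : ℝ) (g : ℝ → Rn n) (j : Fin n) (k : ℤ) (w : ℝ) : ℝ :=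
  ‖fcoeff (fun u => (chordFactor g (α / 2) w u : ℂ) * coord g j u) k‖ +
    ‖fcoeff (fun u => (chordFactor g (α / 2) w u : ℂ) * coord g j (u + w)) k‖ +
      α * ‖fcoeff (fun u => (chordFactor g (α / 2 + 1) w u : ℂ) * segAvg (coord g j) u w) k‖

namespace IsTangent

variable {g : ℝ → Rn n} {m : ℝ}

lemma integral_testedVariation_fourierExp (hT : IsTangent g m) (α : ℝ) (j : Fin n) (k : ℤ) {w : ℝ}
    (hw : |w| ≤ 1 / 2) :
    ∫ u in (0 : ℝ)..1, testedVariation α g j (fourierExp (-k)) (u, w) =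
      ((|w| ^ (-α) : ℝ) : ℂ) *
        (fcoeff (fun u => (chordFactor g (α / 2) w u : ℂ) * coord g j u) k +
          fourierExp (-k) w *
            fcoeff (fun u => (chordFactor g (α / 2) w u : ℂ) * coord g j (u + w)) k -
          α * avgSymbol (-k) w *
            fcoeff (fun u => (chordFactor g (α / 2 + 1) w u : ℂ) * segAvg (coord g j) u w) k +
          α * (((1 - ‖avgSymbol k w‖ ^ 2 : ℝ) : ℂ) * fcoeff (coord g j) k)) := by
  have hg := hT.cont
  have hfactor (q : ℝ) : Continuous fun u => (chordFactor g q w u : ℂ) :=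
    Complex.continuous_ofReal.comp (hT.continuous_chordFactor q hw)
  have := hfactor (α / 2)
  have := hfactor (α / 2 + 1)
  have hper : Function.Periodic (coord g j) 1 := periodic_coord hT.per j
  rw [← integral_segAvg_mul_fourierExp_sub (by fun_prop) hper]
  simp only [fcoeff, ← intervalIntegral.integral_const_mul]
  rw [← intervalIntegral.integral_add, ← intervalIntegral.integral_sub,
    ← intervalIntegral.integral_add, ← intervalIntegral.integral_const_mul]
  · refine intervalIntegral.integral_congr fun u _ => ?_
    simp only [testedVariation, segAvg_fourierExp, fourierExp_add_right]
    ring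
  all_goals exact Continuous.intervalIntegrable (by fun_prop) _ _

lemma norm_integral_testedVariation_sub_le (hT : IsTangent g m) {α : ℝ} (hα : 0 ≤ α) (j : Fin n)
    (k : ℤ) {w : ℝ} (hw : |w| ≤ 1 / 2) :
    ‖(∫ u in (0 : ℝ)..1, testedVariation α g j (fourierExp (-k)) (u, w)) -
        α * fcoeff (coord g j) k * ((|w| ^ (-α) * (1 - ‖avgSymbol k w‖ ^ 2) : ℝ) : ℂ)‖ ≤
      |w| ^ (-α) * nonlinearCoeff α g j k w := by
  have hring (p a b c d e f : ℂ) : p * (a + b - c + d * (e * f)) - d * f * (p * e) =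
      p * (a + b - c) := by ring
  rw [hT.integral_testedVariation_fourierExp α j k hw, Complex.ofReal_mul, hring, norm_mul,
    Complex.norm_real, Real.norm_of_nonneg (by positivity)]
  refine mul_le_mul_of_nonneg_left ((norm_sub_le _ _).trans ?_) (by positivity)
  refine add_le_add ((norm_add_le _ _).trans ?_) ?_
  · rw [norm_mul, norm_fourierExp, one_mul]
  · rw [norm_mul, norm_mul, Complex.norm_real, Real.norm_of_nonneg hα]
    gcongr
    exact mul_le_of_le_one_right hα (norm_avgSymbol_le_one _ _)

end IsTangent

lemma IsCriticalCurve.ofReal_norm_fcoeff_le_lintegral {γ : ℝ → Rn n} {m α lam : ℝ}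
    (hcrit : IsCriticalCurve α lam γ) (hinj : PerInjective γ)
    (hT : IsTangent (deriv γ) m) (hα : α ∈ Ioo (2 : ℝ) 3) (hfin : oharaE α γ < ⊤) (hlam : 0 ≤ lam)
    {k : ℤ} (hk : k ≠ 0) (j : Fin n) :
    ENNReal.ofReal (α * ‖fcoeff (coord (deriv γ) j) k‖ * (9 / 250 * |(k : ℝ)| ^ (α - 1))) ≤
      ∫⁻ w in Ioo (-(1 : ℝ) / 2) (1 / 2),
        ENNReal.ofReal (|w| ^ (-α) * nonlinearCoeff α (deriv γ) j k w) := by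
  obtain ⟨hint, heq⟩ := hcrit.integral_testedVariation hinj hT hα hfin hk j
  have hα₀ : 0 < α := by linarith [hα.1]
  rw [energyMeasure, integral_prod_symm _ hint] at heq
  have hsymbol : Measurable fun w : ℝ => |w| ^ (-α) * (1 - ‖avgSymbol k w‖ ^ 2) := by fun_prop
  calc ENNReal.ofReal (α * ‖fcoeff (coord (deriv γ) j) k‖ * (9 / 250 * |(k : ℝ)| ^ (α - 1)))
      ≤ ENNReal.ofReal (α * ‖fcoeff (coord (deriv γ) j) k‖) *
          ∫⁻ w in Ioo (-(1 : ℝ) / 2) (1 / 2),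
            ENNReal.ofReal (|w| ^ (-α) * (1 - ‖avgSymbol k w‖ ^ 2)) := by
        rw [ENNReal.ofReal_mul (by positivity)]
        gcongr
        exact le_lintegral_symbol hα₀.le hk
    _ ≤ _ := mul_lintegral_le_lintegral_enorm_sub hint.integral_prod_right heq hsymbol
        (fun w => mul_nonneg (by positivity) (one_sub_sq_norm_avgSymbol_nonneg k w)) hα₀ hlam
    _ ≤ _ := by
        refine setLIntegral_mono_ae' measurableSet_Ioo (Eventually.of_forall fun w hw => ?_)
        rw [← ofReal_norm, ← intervalIntegral.integral_of_le zero_le_one]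
        exact ENNReal.ofReal_le_ofReal
          (hT.norm_integral_testedVariation_sub_le hα₀.le j k (abs_lt_of_mem_Ioo hw).le)

/-! ### Bootstrapping the decay of the Fourier coefficients -/

/-- All components of `g` have Fourier coefficients of size `O((1 + |k|) ^ (-β))`. -/
def HasFourierDecay (β : ℝ) (g : ℝ → Rn n) : Prop := ∃ C, ∀ j, FourierDecay β C (coord g j)

lemma HasFourierDecay.mono {g : ℝ → Rn n} {β β' : ℝ} (h : HasFourierDecay β g) (hβ : β' ≤ β) :
    HasFourierDecay β' g :=
  h.imp fun _ hC j => (hC j).mono_exponent hβ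

lemma contDiff_of_hasFourierDecay {g : ℝ → Rn n} (hg : Continuous g) (hp : Function.Periodic g 1)
    (h : ∀ β, HasFourierDecay β g) : ContDiff ℝ (⊤ : ℕ∞) g := by
  refine contDiff_of_coord fun j => contDiff_infty.2 fun N => ?_
  obtain ⟨C, hC⟩ := h (N + 2)
  refine contDiff_of_summable_fcoeff (continuous_coord hg j) (periodic_coord hp j) N ?_
  refine ((summable_decay one_lt_two).mul_left C).of_nonneg_of_le (fun k => by positivity)
    fun k => ?_
  calc (1 + |(k : ℝ)|) ^ N * ‖fcoeff (coord g j) k‖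
      ≤ (1 + |(k : ℝ)|) ^ N * (C * decay (N + 2) k) := by gcongr; exact hC j k
    _ = C * ((1 + |(k : ℝ)|) ^ (N : ℝ) * decay N k * decay 2 k) := by
        rw [← decay_mul_decay, Real.rpow_natCast]; ring
    _ = C * decay 2 k := by rw [one_add_rpow_mul_decay, one_mul]

lemma fourierDecay_of_rpow_mul_le {F : ℝ → ℂ} {r p c K : ℝ} (hF : ∀ u, ‖F u‖ ≤ 1) (hp : 0 ≤ p)
    (hc : 0 < c) (h : ∀ k : ℤ, k ≠ 0 → c * |(k : ℝ)| ^ p * ‖fcoeff F k‖ ≤ K * decay r k) :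
    FourierDecay (r + p) (max 1 (2 ^ p * K / c)) F := fun k => by
  rcases eq_or_ne k 0 with rfl | hk
  · rw [decay_zero_right, mul_one]
    exact (norm_fcoeff_le hF 0).trans (le_max_left _ _)
  have hk₁ : (1 : ℝ) ≤ |(k : ℝ)| := by exact_mod_cast Int.one_le_abs hk
  have htwo : (1 + |(k : ℝ)|) ^ p ≤ 2 ^ p * |(k : ℝ)| ^ p := by
    rw [← Real.mul_rpow two_pos.le (abs_nonneg _)]
    exact Real.rpow_le_rpow (by positivity) (by linarith) hp
  have hdecay := decay_nonneg p k
  calc ‖fcoeff F k‖ = (1 + |(k : ℝ)|) ^ p * ‖fcoeff F k‖ * decay p k := by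
        rw [mul_right_comm, one_add_rpow_mul_decay, one_mul]
    _ ≤ 2 ^ p * |(k : ℝ)| ^ p * ‖fcoeff F k‖ * decay p k := by gcongr
    _ = 2 ^ p / c * (c * |(k : ℝ)| ^ p * ‖fcoeff F k‖) * decay p k := by field_simp
    _ ≤ 2 ^ p / c * (K * decay r k) * decay p k :=
        mul_le_mul_of_nonneg_right (mul_le_mul_of_nonneg_left (h k hk) (by positivity)) hdecay
    _ = 2 ^ p * K / c * decay (r + p) k := by rw [← decay_mul_decay]; ring
    _ ≤ max 1 (2 ^ p * K / c) * decay (r + p) k :=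
        mul_le_mul_of_nonneg_right (le_max_right _ _) (decay_nonneg _ _)

-- The Euler–Lagrange equation gains `α - 1` orders of decay over its nonlinear part.
lemma IsCriticalCurve.hasFourierDecay_of_nonlinearCoeff_le {γ : ℝ → Rn n} {m α lam : ℝ}
    (hcrit : IsCriticalCurve α lam γ) (hinj : PerInjective γ) (hT : IsTangent (deriv γ) m)
    (hα : α ∈ Ioo (2 : ℝ) 3) (hfin : oharaE α γ < ⊤) (hlam : 0 ≤ lam) {r : ℝ} {f : ℝ → ℝ}
    (hf : IntegrableOn f (Ioo (-(1 : ℝ) / 2) (1 / 2))) (hf₀ : ∀ w, 0 ≤ f w)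
    (h : ∀ (j : Fin n) (k : ℤ) (w : ℝ), w ≠ 0 → |w| ≤ 1 / 2 →
      |w| ^ (-α) * nonlinearCoeff α (deriv γ) j k w ≤ f w * decay r k) :
    HasFourierDecay (r + (α - 1)) (deriv γ) := by
  have hα₀ : 0 < α := by linarith [hα.1]
  set K := ∫ w in Ioo (-(1 : ℝ) / 2) (1 / 2), f w
  have hK : 0 ≤ K := integral_nonneg hf₀
  refine ⟨_, fun j => fourierDecay_of_rpow_mul_le (c := α * (9 / 250)) (K := K)
    (fun u => (norm_coord_le _ j u).trans (hT.norm_eq u).le) (by linarith [hα.1])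
    (by positivity) fun k hk => ?_⟩
  have hr := decay_nonneg r k
  have hne : ∀ᵐ w ∂volume.restrict (Ioo (-(1 : ℝ) / 2) (1 / 2)), w ≠ 0 :=
    ae_restrict_of_ae (by simp [ae_iff, measure_singleton])
  rw [show ∀ x y : ℝ, α * (9 / 250) * x * y = α * y * (9 / 250 * x) by intros; ring]
  refine (ENNReal.ofReal_le_ofReal_iff (by positivity)).1 ?_
  calc _ ≤ ∫⁻ w in Ioo (-(1 : ℝ) / 2) (1 / 2),
          ENNReal.ofReal (|w| ^ (-α) * nonlinearCoeff α (deriv γ) j k w) :=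
        hcrit.ofReal_norm_fcoeff_le_lintegral hinj hT hα hfin hlam hk j
    _ ≤ ∫⁻ w in Ioo (-(1 : ℝ) / 2) (1 / 2), ENNReal.ofReal (f w * decay r k) := by
        refine lintegral_mono_ae ?_
        filter_upwards [hne, ae_restrict_mem measurableSet_Ioo] with w hw₀ hw
        exact ENNReal.ofReal_le_ofReal (h j k w hw₀ (abs_lt_of_mem_Ioo hw).le)
    _ = ENNReal.ofReal (K * decay r k) := by
        rw [← integral_mul_const, ofReal_integral_eq_lintegral_ofReal (hf.mul_const _)
          (Eventually.of_forall fun w => mul_nonneg (hf₀ w) hr)]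

namespace IsTangent

variable {g : ℝ → Rn n} {m : ℝ}

lemma abs_chordFactor_le (hT : IsTangent g m) {q : ℝ} (hq : 0 ≤ q) {w : ℝ} (hw : |w| ≤ 1 / 2)
    (u : ℝ) : |chordFactor g q w u| ≤ q * m ^ (-q - 1) * (1 - ‖segAvg g u w‖ ^ 2) := by
  have h := abs_rpow_neg_sub_le hq hT.pos (hT.le u w hw) hT.le_one
  rw [Real.one_rpow, abs_sub_comm (‖segAvg g u w‖ ^ 2),
    abs_of_nonneg (sub_nonneg.2 (hT.norm_segAvg_sq_le_one u w))] at h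
  rwa [chordFactor, sub_sub_cancel]

lemma norm_fcoeff_chordFactor_mul_le (hT : IsTangent g m) {q : ℝ} (hq : 0 ≤ q) {w : ℝ}
    (hw : |w| ≤ 1 / 2) {G : ℝ → ℂ} (hGc : Continuous G) (hG : ∀ u, ‖G u‖ ≤ 1) (k : ℤ) :
    ‖fcoeff (fun u => (chordFactor g q w u : ℂ) * G u) k‖ ≤
      q * m ^ (-q - 1) * ∫ u in (0 : ℝ)..1, (1 - ‖segAvg g u w‖ ^ 2) := by
  have := hT.cont
  have := hT.continuous_chordFactor q hw
  rw [← intervalIntegral.integral_const_mul]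
  refine (norm_fcoeff_le_integral _ k).trans (intervalIntegral.integral_mono_on zero_le_one
    (Continuous.intervalIntegrable (by fun_prop) _ _)
    (Continuous.intervalIntegrable (by fun_prop) _ _) fun u _ => ?_)
  rw [norm_mul, Complex.norm_real, Real.norm_eq_abs]
  exact (mul_le_of_le_one_right (abs_nonneg _) (hG u)).trans (hT.abs_chordFactor_le hq hw u)

lemma exists_nonlinearCoeff_le (hT : IsTangent g m) {α : ℝ} (hα : 0 ≤ α) :
    ∃ C, 0 ≤ C ∧ ∀ (j : Fin n) (k : ℤ) (w : ℝ), |w| ≤ 1 / 2 →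
      nonlinearCoeff α g j k w ≤ C * ∫ u in (0 : ℝ)..1, (1 - ‖segAvg g u w‖ ^ 2) := by
  have hm := hT.pos
  refine ⟨2 * (α / 2 * m ^ (-(α / 2) - 1)) + α * ((α / 2 + 1) * m ^ (-(α / 2 + 1) - 1)),
    by positivity, fun j k w hw => ?_⟩
  have hc := continuous_coord hT.cont j
  have hnorm (u : ℝ) : ‖coord g j u‖ ≤ 1 := (norm_coord_le g j u).trans (hT.norm_eq u).le
  have hstart := hT.norm_fcoeff_chordFactor_mul_le (q := α / 2) (by positivity) hw hc hnorm k
  have hend := hT.norm_fcoeff_chordFactor_mul_le (q := α / 2) (by positivity) hw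
    (G := fun u => coord g j (u + w)) (by fun_prop) (fun u => hnorm _) k
  have havg := hT.norm_fcoeff_chordFactor_mul_le (q := α / 2 + 1) (by positivity) hw
    (G := fun u => segAvg (coord g j) u w) (by fun_prop) (fun u => norm_segAvg_le hnorm u w) k
  rw [nonlinearCoeff]
  linarith [mul_le_mul_of_nonneg_left havg hα]

end IsTangent

-- The base case only uses that the excess is integrable against `|w| ^ (-α)`, by finite energy.
lemma IsCriticalCurve.hasFourierDecay {γ : ℝ → Rn n} {m α lam : ℝ}
    (hcrit : IsCriticalCurve α lam γ) (hinj : PerInjective γ) (hT : IsTangent (deriv γ) m)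
    (hα : α ∈ Ioo (2 : ℝ) 3) (hfin : oharaE α γ < ⊤) (hlam : 0 ≤ lam) :
    HasFourierDecay (α - 1) (deriv γ) := by
  obtain ⟨C, hC, hle⟩ := hT.exists_nonlinearCoeff_le (α := α) (by linarith [hα.1])
  have hint := (hT.integrable_excess hinj hα.1.le hfin).integral_prod_right
  simp only [← intervalIntegral.integral_of_le zero_le_one,
    intervalIntegral.integral_const_mul] at hint
  have hexcess (w : ℝ) : 0 ≤ ∫ u in (0 : ℝ)..1, (1 - ‖segAvg (deriv γ) u w‖ ^ 2) :=
    intervalIntegral.integral_nonneg zero_le_one fun u _ =>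
      sub_nonneg.2 (hT.norm_segAvg_sq_le_one u w)
  rw [← zero_add (α - 1)]
  refine hcrit.hasFourierDecay_of_nonlinearCoeff_le hinj hT hα hfin hlam (hint.const_mul C)
    (fun w => mul_nonneg hC (mul_nonneg (by positivity) (hexcess w))) fun j k w _ hw => ?_
  rw [decay, neg_zero, Real.rpow_zero, mul_one, mul_left_comm C]
  gcongr
  exact hle j k w hw

/-- The deviation of the `j`-th component of `g`, at the point `u + s * w`, from its average over
the segment from `u` to `u + w`. -/
def segDev (g : ℝ → Rn n) (j : Fin n) (w s u : ℝ) : ℂ :=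
  coord g j (u + s * w) - segAvg (coord g j) u w

section SegDev

variable {g : ℝ → Rn n}

@[fun_prop] lemma continuous_segDev {X : Type*} [TopologicalSpace X] {s u : X → ℝ}
    (hg : Continuous g) (j : Fin n) (w : ℝ) (hs : Continuous s) (hu : Continuous u) :
    Continuous fun x => segDev g j w (s x) (u x) := by
  unfold segDev
  fun_prop

lemma periodic_segDev (hg : Function.Periodic g 1) (j : Fin n) (w s : ℝ) :
    Function.Periodic (segDev g j w s) 1 := fun u => by
  have havg := periodic_segAvg (periodic_coord hg j) w u
  simp only at havg
  rw [segDev, segDev, havg, add_right_comm, periodic_coord hg j]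

lemma IsTangent.one_sub_sq_norm_segAvg_eq {m : ℝ} (hT : IsTangent g m) (u w : ℝ) :
    ((1 - ‖segAvg g u w‖ ^ 2 : ℝ) : ℂ) =
      ∫ s in (0 : ℝ)..1, ∑ j, segDev g j w s u * segDev g j w s u := by
  have hvar := segAvg_norm_sub_sq hT.cont (segAvg g u w) u w
  rw [sub_self, norm_zero, zero_pow two_ne_zero, add_zero, hT.segVar_eq] at hvar
  rw [← hvar, segAvg, ← intervalIntegral.integral_ofReal]
  refine intervalIntegral.integral_congr fun s _ => ?_
  simp only [segDev, EuclideanSpace.real_norm_sq_eq, segAvg_coord hT.cont, coord, PiLp.sub_apply]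
  push_cast
  simp only [sq]

lemma fcoeff_segDev (hg : Continuous g) (hp : Function.Periodic g 1) (j : Fin n) (w s : ℝ)
    (k : ℤ) : fcoeff (segDev g j w s) k =
      (fourierExp k (s * w) - avgSymbol k w) * fcoeff (coord g j) k := by
  have hc := continuous_coord hg j
  have hpc := periodic_coord hp j
  have hsub := fcoeff_sub (F := fun u => coord g j (u + s * w))
    (G := fun u => segAvg (coord g j) u w) (by fun_prop) (by fun_prop) k
  rwa [fcoeff_comp_add_right hpc, fcoeff_segAvg hc hpc, ← sub_mul] at hsub

end SegDev

lemma min_one_le_rpow {x θ : ℝ} (hx : 0 ≤ x) (hθ : 0 ≤ θ) (hθ₁ : θ ≤ 1) : min 1 x ≤ x ^ θ := by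
  rcases le_total x 1 with h | h
  · exact (min_le_right _ _).trans (Real.self_le_rpow_of_le_one hx h hθ₁)
  · exact (min_le_left _ _).trans (Real.one_le_rpow h hθ)

lemma norm_fourierExp_mul_sub_avgSymbol_le (l : ℤ) {w s : ℝ} (hs : s ∈ Icc (0 : ℝ) 1) :
    ‖fourierExp l (s * w) - avgSymbol l w‖ ≤ 2 * Real.pi * min 1 (|(l : ℝ)| * |w|) := by
  have hpi := Real.pi_gt_three
  have hdiff : fourierExp l (s * w) - avgSymbol l w =
      ∫ t in (0 : ℝ)..1, (fourierExp l (s * w) - fourierExp l (t * w)) := by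
    rw [intervalIntegral.integral_sub (by simp)
      (Continuous.intervalIntegrable (by fun_prop) _ _)]
    simp [avgSymbol, segAvg]
  rw [mul_min_of_nonneg _ _ (by positivity), mul_one]
  refine le_min ?_ ?_
  · refine (norm_sub_le _ _).trans ?_
    rw [norm_fourierExp]
    linarith [norm_avgSymbol_le_one l w]
  · have hbound (t : ℝ) (ht : t ∈ uIoc (0 : ℝ) 1) :
        ‖fourierExp l (s * w) - fourierExp l (t * w)‖ ≤ 2 * Real.pi * (|(l : ℝ)| * |w|) := by
      rw [uIoc_of_le zero_le_one] at ht
      have hst : |s - t| ≤ 1 := abs_le.2 ⟨by linarith [hs.1, ht.2], by linarith [hs.2, ht.1]⟩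
      calc _ ≤ ‖(2 * Real.pi * Complex.I * l : ℂ)‖ * |s * w - t * w| :=
            norm_fourierExp_sub_le l _ _
        _ = 2 * Real.pi * (|(l : ℝ)| * (|s - t| * |w|)) := by
            rw [← sub_mul, abs_mul]
            simp [abs_of_pos Real.pi_pos]
            ring
        _ ≤ 2 * Real.pi * (|(l : ℝ)| * |w|) := by
            gcongr
            exact mul_le_of_le_one_left (abs_nonneg w) hst
    rw [hdiff]
    simpa using intervalIntegral.norm_integral_le_of_norm_le_const hbound

namespace FourierDecay

lemma segDev {g : ℝ → Rn n} {β C θ w s : ℝ} {j : Fin n} (h : FourierDecay β C (coord g j))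
    (hg : Continuous g) (hp : Function.Periodic g 1) (hs : s ∈ Icc (0 : ℝ) 1) (hθ : 0 ≤ θ)
    (hθ₁ : θ ≤ 1) : FourierDecay (β - θ) (2 * Real.pi * |w| ^ θ * C) (segDev g j w s) :=
  fun k => by
  have := h.nonneg
  have hsymbol : ‖fourierExp k (s * w) - avgSymbol k w‖ ≤ 2 * Real.pi * (|w| ^ θ * decay (-θ) k) :=
    calc _ ≤ 2 * Real.pi * min 1 (|(k : ℝ)| * |w|) := norm_fourierExp_mul_sub_avgSymbol_le k hs
      _ ≤ 2 * Real.pi * (|(k : ℝ)| * |w|) ^ θ := by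
          gcongr
          exact min_one_le_rpow (by positivity) hθ hθ₁
      _ ≤ 2 * Real.pi * (|w| ^ θ * decay (-θ) k) := by
          rw [Real.mul_rpow (abs_nonneg _) (abs_nonneg _), mul_comm (|(k : ℝ)| ^ θ), decay, neg_neg]
          gcongr
          linarith
  calc ‖fcoeff (_root_.segDev g j w s) k‖
      ≤ 2 * Real.pi * (|w| ^ θ * decay (-θ) k) * (C * decay β k) := by
        rw [fcoeff_segDev hg hp, norm_mul]
        gcongr
        · exact mul_nonneg (by positivity) (mul_nonneg (by positivity) (decay_nonneg _ _))
        · exact h k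
    _ = 2 * Real.pi * |w| ^ θ * C * (decay β k * decay (-θ) k) := by ring
    _ = _ := by rw [decay_mul_decay, ← sub_eq_add_neg]

lemma intervalIntegral {G : ℝ → ℝ → ℂ} {r B : ℝ} (hG : Continuous (Function.uncurry G))
    (h : ∀ s ∈ Icc (0 : ℝ) 1, FourierDecay r B (G s)) :
    FourierDecay r B fun u => ∫ s in (0 : ℝ)..1, G s u := fun k => by
  rw [fcoeff_intervalIntegral hG]
  simpa using intervalIntegral.norm_integral_le_of_norm_le_const (a := (0 : ℝ)) (b := 1)
    fun s hs => h s (Ioc_subset_Icc_self (uIoc_of_le (zero_le_one' ℝ) ▸ hs)) k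

end FourierDecay

namespace IsTangent

variable {g : ℝ → Rn n} {m β : ℝ}

lemma fourierDecay_excess (hT : IsTangent g m) {r B w : ℝ}
    (h : ∀ j, ∀ s ∈ Icc (0 : ℝ) 1,
      FourierDecay r B fun u => segDev g j w s u * segDev g j w s u) :
    FourierDecay r (n * B) fun u => ((1 - ‖segAvg g u w‖ ^ 2 : ℝ) : ℂ) := by
  have hg := hT.cont
  simp only [hT.one_sub_sq_norm_segAvg_eq]
  refine FourierDecay.intervalIntegral (G := fun s u => ∑ j, segDev g j w s u * segDev g j w s u)
    (by simp only [Function.uncurry_def]; fun_prop) fun s hs => ?_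
  simpa using FourierDecay.sum (S := Finset.univ) (C := fun _ => B)
    (fun j _ => Continuous.mul (by fun_prop) (by fun_prop)) fun j _ => h j s hs

lemma exists_fourierDecay_excess (hT : IsTangent g m) (hg : HasFourierDecay β g) (hβ : 1 < β) :
    ∃ D, ∀ w, FourierDecay β D fun u => ((1 - ‖segAvg g u w‖ ^ 2 : ℝ) : ℂ) := by
  obtain ⟨C, hC⟩ := hg
  have hc := hT.cont
  refine ⟨n * (convConst β * (2 * Real.pi * C) * (2 * Real.pi * C)),
    fun w => hT.fourierDecay_excess fun j s hs => ?_⟩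
  have hdev : FourierDecay β (2 * Real.pi * C) (segDev g j w s) := by
    simpa using (hC j).segDev (θ := 0) hT.cont hT.per hs le_rfl zero_le_one
  exact hdev.mul hdev hβ (by linarith) le_rfl (by fun_prop) (by fun_prop)
    (periodic_segDev hT.per j w s)

-- The excess is quadratic in `segDev`; its first factor gives up one order of decay for the factor
-- `|w|`, its second factor `a` orders for `|w| ^ a`.
lemma exists_fourierDecay_excess_rpow (hT : IsTangent g m) (hg : HasFourierDecay β g) {a ρ : ℝ}
    (hβ : 1 < β) (ha : 0 ≤ a) (ha₁ : a ≤ 1) (hρ : 0 ≤ ρ) (hρβ : ρ ≤ β - 1)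
    (hsum : 1 < 2 * β - 1 - a - ρ) :
    ∃ D, ∀ w, FourierDecay ρ (D * |w| ^ (1 + a)) fun u => ((1 - ‖segAvg g u w‖ ^ 2 : ℝ) : ℂ) := by
  obtain ⟨C, hC⟩ := hg
  have hc := hT.cont
  refine ⟨n * (2 ^ ρ * (2 * ∑' k, decay (β - 1 + (β - a) - ρ) k) * (2 * Real.pi * C) ^ 2),
    fun w => ?_⟩
  have hprod (j : Fin n) (s : ℝ) (hs : s ∈ Icc (0 : ℝ) 1) :=
    ((hC j).segDev (w := w) hT.cont hT.per hs zero_le_one le_rfl).mul_of_summable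
      ((hC j).segDev (w := w) hT.cont hT.per hs ha ha₁)
      (((hC j).segDev hT.cont hT.per hs le_rfl zero_le_one).summable (by linarith))
      hρ hρβ (by linarith) (by linarith) (by fun_prop) (by fun_prop)
      (periodic_segDev hT.per j w s)
  refine (hT.fourierDecay_excess hprod).mono_const (le_of_eq ?_)
  rw [Real.rpow_add_of_nonneg (abs_nonneg w) zero_le_one ha]
  ring

lemma exists_fourierDecay_chordFactor_mul (hT : IsTangent g m) (hg : HasFourierDecay β g)
    (q C : ℝ) {a ρ : ℝ} (hβ : 1 < β) (ha : 0 ≤ a) (ha₁ : a ≤ 1) (hρ : 0 ≤ ρ) (hρβ : ρ ≤ β - 1)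
    (hsum : 1 < 2 * β - 1 - a - ρ) :
    ∃ K, ∀ (w : ℝ) (G : ℝ → ℂ), |w| ≤ 1 / 2 → Continuous G → Function.Periodic G 1 →
      FourierDecay β C G →
        FourierDecay ρ (K * |w| ^ (1 + a)) fun u => (chordFactor g q w u : ℂ) * G u := by
  obtain ⟨D₀, hD₀⟩ := hT.exists_fourierDecay_excess hg hβ
  obtain ⟨D, hD⟩ := hT.exists_fourierDecay_excess_rpow hg hβ ha ha₁ hρ hρβ hsum
  obtain ⟨s, hs, hsβ⟩ := exists_between (max_lt hβ (by linarith) : max 1 ρ < β)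
  obtain ⟨K, -, hK⟩ := exists_fourierDecay_one_sub_rpow_sub_one_mul q
    ((le_max_left _ _).trans_lt hs) hsβ hρ ((le_max_right _ _).trans hs.le) (ρ := 1 - m)
    (sub_nonneg.2 hT.le_one) (sub_lt_self _ hT.pos) (C₀ := max D₀ C)
    ((hD₀ 0).nonneg.trans (le_max_left _ _))
  have hc := hT.cont
  refine ⟨K * D, fun w G hw hGc hGp hG => ?_⟩
  rw [mul_assoc]
  refine hK (fun u => 1 - ‖segAvg g u w‖ ^ 2) G _ (by fun_prop) (fun u => ?_) hGc hGp
    (fun u => ?_) ((hD₀ w).mono_const (le_max_left _ _)) (hG.mono_const (le_max_right _ _)) (hD w)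
  · have := periodic_segAvg hT.per w u
    simp_all only
  · rw [abs_of_nonneg (sub_nonneg.2 (hT.norm_segAvg_sq_le_one u w))]
    linarith [hT.le u w hw]

lemma exists_nonlinearCoeff_le_rpow (hT : IsTangent g m) (hg : HasFourierDecay β g) {α a ρ : ℝ}
    (hα : 0 ≤ α) (hβ : 1 < β) (ha : 0 ≤ a) (ha₁ : a ≤ 1) (hρ : 0 ≤ ρ) (hρβ : ρ ≤ β - 1)
    (hsum : 1 < 2 * β - 1 - a - ρ) :
    ∃ C, 0 ≤ C ∧ ∀ (j : Fin n) (k : ℤ) (w : ℝ), |w| ≤ 1 / 2 →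
      nonlinearCoeff α g j k w ≤ C * |w| ^ (1 + a) * decay ρ k := by
  obtain ⟨C, hC⟩ := id hg
  obtain ⟨K₁, hK₁⟩ :=
    hT.exists_fourierDecay_chordFactor_mul hg (α / 2) C hβ ha ha₁ hρ hρβ hsum
  obtain ⟨K₂, hK₂⟩ :=
    hT.exists_fourierDecay_chordFactor_mul hg (α / 2 + 1) C hβ ha ha₁ hρ hρβ hsum
  refine ⟨max 0 (2 * K₁ + α * K₂), le_max_left _ _, fun j k w hw => ?_⟩
  have hc := continuous_coord hT.cont j
  have hp := periodic_coord hT.per j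
  have hstart := hK₁ w (coord g j) hw hc hp (hC j) k
  have hend := hK₁ w (fun u => coord g j (u + w)) hw (by fun_prop)
    (fun u => by simp only [add_right_comm u 1 w, hp (u + w)])
    (fun l => by rw [fcoeff_comp_add_right hp, norm_mul, norm_fourierExp, one_mul]; exact hC j l) k
  have havg := hK₂ w (fun u => segAvg (coord g j) u w) hw (by fun_prop) (periodic_segAvg hp w)
    (fun l => by
      rw [fcoeff_segAvg hc hp, norm_mul]
      exact (mul_le_of_le_one_left (norm_nonneg _) (norm_avgSymbol_le_one l w)).trans (hC j l)) k
  calc nonlinearCoeff α g j k w ≤ (2 * K₁ + α * K₂) * |w| ^ (1 + a) * decay ρ k := by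
        rw [nonlinearCoeff]
        linarith [mul_le_mul_of_nonneg_left havg hα]
    _ ≤ max 0 (2 * K₁ + α * K₂) * |w| ^ (1 + a) * decay ρ k := by
        have := decay_nonneg ρ k
        gcongr
        exact le_max_right _ _

end IsTangent

namespace IsCriticalCurve

variable {γ : ℝ → Rn n} {m α lam : ℝ}

-- The excess may be estimated by `|w| ^ (α - 1 + δ)`, just enough to integrate `|w| ^ (-α)`, while
-- keeping decay of order `β - (α - 1) + δ`, to which the equation adds `α - 1`.
lemma hasFourierDecay_add (hcrit : IsCriticalCurve α lam γ) (hinj : PerInjective γ)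
    (hT : IsTangent (deriv γ) m) (hα : α ∈ Ioo (2 : ℝ) 3) (hfin : oharaE α γ < ⊤)
    (hlam : 0 ≤ lam) {β δ : ℝ} (hβ : α - 1 ≤ β) (hδ : 0 < δ) (hδ₂ : 2 * δ < α - 2)
    (hδ₃ : δ ≤ 3 - α) (hd : HasFourierDecay β (deriv γ)) : HasFourierDecay (β + δ) (deriv γ) := by
  have := hα.1
  obtain ⟨C, hC, hle⟩ := hT.exists_nonlinearCoeff_le_rpow hd (α := α) (a := α - 2 + δ)
    (ρ := β + δ - (α - 1)) (by linarith) (by linarith) (by linarith) (by linarith) (by linarith)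
    (by linarith) (by linarith)
  rw [← sub_add_cancel (β + δ) (α - 1)]
  refine hcrit.hasFourierDecay_of_nonlinearCoeff_le hinj hT hα hfin hlam
    (f := fun w => C * |w| ^ (δ - 1)) ((integrableOn_abs_rpow (by linarith)).const_mul C)
    (fun w => by positivity) fun j k w hw₀ hw => ?_
  calc |w| ^ (-α) * nonlinearCoeff α (deriv γ) j k w
      ≤ |w| ^ (-α) * (C * |w| ^ (1 + (α - 2 + δ)) * decay (β + δ - (α - 1)) k) := by
        gcongr
        exact hle j k w hw
    _ = C * (|w| ^ (-α) * |w| ^ (1 + (α - 2 + δ))) * decay (β + δ - (α - 1)) k := by ring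
    _ = C * |w| ^ (δ - 1) * decay (β + δ - (α - 1)) k := by
        rw [← Real.rpow_add (abs_pos.2 hw₀)]
        congr 3
        ring

lemma hasFourierDecay_all (hcrit : IsCriticalCurve α lam γ) (hinj : PerInjective γ)
    (hT : IsTangent (deriv γ) m) (hα : α ∈ Ioo (2 : ℝ) 3) (hfin : oharaE α γ < ⊤)
    (hlam : 0 ≤ lam) (β : ℝ) : HasFourierDecay β (deriv γ) := by
  set δ := min ((α - 2) / 4) (3 - α)
  have hδ : 0 < δ := lt_min (by linarith [hα.1]) (by linarith [hα.2])
  have hδ₂ : 2 * δ < α - 2 := by linarith [min_le_left ((α - 2) / 4) (3 - α), hα.1]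
  have hstep (N : ℕ) : HasFourierDecay (α - 1 + N * δ) (deriv γ) := by
    induction N with
    | zero => simpa using hcrit.hasFourierDecay hinj hT hα hfin hlam
    | succ N ih =>
      have := hcrit.hasFourierDecay_add hinj hT hα hfin hlam
        (le_add_of_nonneg_right (by positivity)) hδ hδ₂ (min_le_right _ _) ih
      rwa [add_assoc, ← add_one_mul, ← Nat.cast_succ] at this
  obtain ⟨N, hN⟩ := exists_nat_gt ((β - (α - 1)) / δ)
  rw [div_lt_iff₀ hδ] at hN
  exact (hstep N).mono (by linarith)

end IsCriticalCurve

/-- For `α ∈ (2,3)` and `λ > 0`, every injective Lipschitz curve parametrized by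
arc-length with finite energy `E^α` which is a stationary point of `E^α + λL` is smooth. -/
theorem statement2 {n : ℕ} (hn : 2 ≤ n) {α lam : ℝ} (hα : α ∈ Ioo (2:ℝ) 3) (hlam : 0 < lam)
    {γ : ℝ → Rn n} (hper : Function.Periodic γ 1) (hlip : ∃ K : NNReal, LipschitzWith K γ)
    (hinj : PerInjective γ) (harc : ArcLengthParam γ) (hfin : oharaE α γ < ⊤)
    (hstat : ∀ h : ℝ → Rn n, MemH1 ((α - 1) / 2) h →
      ∃ d : ℝ, HasDirDeriv (oharaER α) γ h d ∧
        d + lam * ∫ u in Ioc (0:ℝ) 1, ⟪deriv γ u, deriv h u⟫ = 0) :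
    ContDiff ℝ (⊤ : ℕ∞) γ := by
  have hcrit : IsCriticalCurve α lam γ := hstat
  have hC1 := harc.contDiff_one hper hinj hα.1 hfin
  obtain ⟨m, hT⟩ := harc.exists_isTangent hper hinj hC1
  have hderiv := contDiff_of_hasFourierDecay hT.cont hT.per
    (hcrit.hasFourierDecay_all hinj hT hα hfin hlam.le)
  exact contDiff_infty_iff_deriv.2 ⟨hC1.differentiable one_ne_zero, hderiv⟩

end
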